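/- arXiv:1804.02227 — 5 statements merged into one kernel-verified Lean document; each statement's English description precedes it below -/
import Mathlib

section
/- Let p > 0 and α be such that max(−1, p−2) < α < 2p−2, and let μ be a finite positive Borel measure on [0,1) which is a Carleson measure. Then for every f in the Dirichlet-type space 𝒟^p_α one has ∫_{[0,1)} |f(t)| dμ(t) < ∞; consequently, for every z in the unit disc 𝔻 the integral I_μ f(z) = ∫_{[0,1)} f(t)/(1 − t z) dμ(t) converges absolutely and uniformly on compact subsets of 𝔻, and I_μ f is analytic in 𝔻. -/
open MeasureTheory Set Metric Filter Asymptotics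
open scoped ENNReal Topology

/-- Normalized area measure on `ℂ`: Lebesgue area divided by `π`,
so that the unit disc has total mass `1`. -/
noncomputable def dA : Measure ℂ := (ENNReal.ofReal Real.pi)⁻¹ • volume

/-- The (weighted) Bergman norm `‖f‖_{A^p_α} = ((α+1) ∫_𝔻 (1-|z|²)^α |f(z)|^p dA)^{1/p}`,
as an extended real number. -/
noncomputable def bergmanNorm (p α : ℝ) (f : ℂ → ℂ) : ℝ≥0∞ :=
  (ENNReal.ofReal (α + 1) *
    ∫⁻ z in ball (0 : ℂ) 1, ENNReal.ofReal ((1 - ‖z‖ ^ 2) ^ α * ‖f z‖ ^ p) ∂dA) ^ (1 / p)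

/-- The Dirichlet-type norm `‖f‖_{𝒟^p_α} = |f(0)| + ‖f′‖_{A^p_α}`. -/
noncomputable def dirichletNorm (p α : ℝ) (f : ℂ → ℂ) : ℝ≥0∞ :=
  ENNReal.ofReal ‖f 0‖ + bergmanNorm p α (deriv f)

/-- The Hardy `H^1` norm `sup_{0 ≤ r < 1} (2π)⁻¹ ∫_0^{2π} |f(re^{iθ})| dθ`. -/
noncomputable def hardyNorm (f : ℂ → ℂ) : ℝ≥0∞ :=
  ⨆ r ∈ Ico (0 : ℝ) 1,
    (ENNReal.ofReal (2 * Real.pi))⁻¹ *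
      ∫⁻ θ in Ioc (0 : ℝ) (2 * Real.pi),
        ENNReal.ofReal ‖f ((r : ℂ) * Complex.exp ((θ : ℂ) * Complex.I))‖

/-- The operator `I_μ f(z) = ∫_{[0,1)} f(t)/(1-tz) dμ(t)`. -/
noncomputable def Imu (μ : Measure ℝ) (f : ℂ → ℂ) (z : ℂ) : ℂ :=
  ∫ t : ℝ, f (t : ℂ) / (1 - (t : ℂ) * z) ∂μ

/-- The moment of order `n` of `μ`. -/
noncomputable def moment (μ : Measure ℝ) (n : ℕ) : ℝ := ∫ t : ℝ, t ^ n ∂μ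

/-- `M_∞(r, f) = sup_{|z| = r} |f(z)|`. -/
noncomputable def Minf (f : ℂ → ℂ) (r : ℝ) : ℝ := ⨆ z ∈ sphere (0 : ℂ) r, ‖f z‖

lemma aux_local (p : ℝ) (hp : 0 < p) : ∃ c > 0, ∀ (g : ℂ → ℂ) (a : ℂ) (r : ℝ), 0 < r →
    DifferentiableOn ℂ g (closedBall a r) →
    ENNReal.ofReal (c * (r ^ 2 * ‖g a‖ ^ p)) ≤
      ∫⁻ w in ball a r, ENNReal.ofReal (‖g w‖ ^ p) := by
  set q : ℝ := 2 / p with hq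
  have hq0 : 0 < q := by positivity
  set K : ℝ := 2 ^ q with hK
  have hK1 : 1 ≤ K := Real.one_le_rpow (by norm_num) hq0.le
  refine ⟨Real.pi / (64 * K ^ 2 * 2 ^ p), by positivity, ?_⟩
  intro g a r hr hg
  by_cases hga : g a = 0
  · simp [hga, Real.zero_rpow hp.ne']
  have hcont : ContinuousOn (fun z => (r - ‖z - a‖) ^ q * ‖g z‖) (closedBall a r) := by
    refine ContinuousOn.mul ?_ hg.continuousOn.norm
    refine Continuous.continuousOn ?_
    exact (by fun_prop : Continuous fun z : ℂ => r - ‖z - a‖).rpow_const (fun x => Or.inr hq0.le)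
  obtain ⟨z, hz, hmax⟩ := (isCompact_closedBall a r).exists_isMaxOn
    ⟨a, mem_closedBall_self hr.le⟩ hcont
  have hmax' : ∀ w ∈ closedBall a r, (r - ‖w - a‖) ^ q * ‖g w‖ ≤ (r - ‖z - a‖) ^ q * ‖g z‖ :=
    fun w hw => hmax hw
  have hza : ‖z - a‖ ≤ r := by simpa [dist_eq_norm] using hz
  have h0 := hmax' a (mem_closedBall_self hr.le)
  simp only [sub_self, norm_zero, sub_zero] at h0
  have hpos : 0 < r ^ q * ‖g a‖ := mul_pos (Real.rpow_pos_of_pos hr _) (norm_pos_iff.2 hga)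
  have hlt : 0 < r - ‖z - a‖ := by
    rcases (sub_nonneg.2 hza).eq_or_lt with h | h
    · rw [← h, Real.zero_rpow hq0.ne'] at h0; linarith
    · exact h
  obtain ⟨δ, hδ⟩ : ∃ δ, δ = (r - ‖z - a‖) / 2 := ⟨_, rfl⟩
  have hδ2 : r - ‖z - a‖ = 2 * δ := by rw [hδ]; ring
  have hδ0 : 0 < δ := by linarith
  rw [hδ2] at h0
  have hgz : 0 < ‖g z‖ := by
    by_contra h
    have : ‖g z‖ = 0 := le_antisymm (not_lt.1 h) (norm_nonneg _)
    rw [this] at h0; linarith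
  have hsub : ∀ w ∈ ball z δ, ‖w - a‖ ≤ r - δ := by
    intro w hw
    rw [mem_ball, dist_eq_norm] at hw
    have : ‖w - a‖ ≤ ‖w - z‖ + ‖z - a‖ := by
      simpa using norm_add_le (w - z) (z - a)
    linarith
  have hbd : ∀ w ∈ ball z δ, ‖g w‖ ≤ K * ‖g z‖ := by
    intro w hw
    have h1 := hsub w hw
    have h2 := hmax' w (by rw [mem_closedBall, dist_eq_norm]; linarith)
    rw [hδ2, Real.mul_rpow (by norm_num) hδ0.le] at h2
    have h3 : δ ^ q ≤ (r - ‖w - a‖) ^ q := Real.rpow_le_rpow hδ0.le (by linarith) hq0.le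
    have h4 : δ ^ q * ‖g w‖ ≤ δ ^ q * (K * ‖g z‖) := by
      calc δ ^ q * ‖g w‖ ≤ (r - ‖w - a‖) ^ q * ‖g w‖ := by gcongr
        _ ≤ _ := h2
        _ = _ := by rw [hK]; ring
    exact le_of_mul_le_mul_left h4 (Real.rpow_pos_of_pos hδ0 _)
  have hlow : ∀ w ∈ ball z (δ / (4 * K)), ‖g z‖ / 2 ≤ ‖g w‖ := by
    intro w hw
    have hw' : dist w z < δ / (4 * K) := hw
    have hle : δ / (4 * K) ≤ δ := div_le_self hδ0.le (by linarith)
    have := Complex.dist_le_div_mul_dist_of_mapsTo_ball (f := g) (c := z) (R₁ := δ)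
      (R₂ := 2 * K * ‖g z‖) (z := w)
      (hg.mono fun w hw => by
        have := hsub w hw
        rw [mem_closedBall, dist_eq_norm]; linarith)
      (fun w hw => by
        rw [mem_closedBall, dist_eq_norm]
        have h1 := norm_sub_le (g w) (g z)
        have h2 := hbd w hw
        nlinarith)
      (lt_of_lt_of_le hw' hle)
    have h2 : 2 * K * ‖g z‖ / δ * dist w z ≤ 2 * K * ‖g z‖ / δ * (δ / (4 * K)) := by gcongr
    have h3 : 2 * K * ‖g z‖ / δ * (δ / (4 * K)) = ‖g z‖ / 2 := by field_simp; norm_num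
    have h4 : ‖g z‖ - ‖g w‖ ≤ dist (g w) (g z) := by
      rw [dist_comm, dist_eq_norm]; exact norm_sub_norm_le _ _
    linarith
  have hkey : r ^ 2 * ‖g a‖ ^ p ≤ 4 * δ ^ 2 * ‖g z‖ ^ p := by
    have h1 := Real.rpow_le_rpow hpos.le h0 hp.le
    have e : ∀ x : ℝ, 0 < x → (x ^ q) ^ p = x ^ 2 := by
      intro x hx
      rw [← Real.rpow_mul hx.le, hq, div_mul_cancel₀ _ hp.ne', Real.rpow_two]
    rw [Real.mul_rpow (by positivity) (by positivity), Real.mul_rpow (by positivity) (by positivity),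
      e r hr, e _ (by positivity)] at h1
    linarith
  calc ENNReal.ofReal (Real.pi / (64 * K ^ 2 * 2 ^ p) * (r ^ 2 * ‖g a‖ ^ p))
      ≤ ENNReal.ofReal ((‖g z‖ / 2) ^ p * ((δ / (4 * K)) ^ 2 * Real.pi)) := by
        apply ENNReal.ofReal_le_ofReal
        calc _ ≤ Real.pi / (64 * K ^ 2 * 2 ^ p) * (4 * δ ^ 2 * ‖g z‖ ^ p) := by gcongr
          _ = _ := by
            rw [Real.div_rpow (by positivity) (by norm_num)]
            field_simp
            try norm_num
    _ = ∫⁻ w in ball z (δ / (4 * K)), ENNReal.ofReal ((‖g z‖ / 2) ^ p) := by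
        rw [setLIntegral_const, Complex.volume_ball, ENNReal.ofReal_mul (by positivity),
          ENNReal.ofReal_mul (by positivity), ENNReal.ofReal_pow (by positivity)]
        congr 2
        rw [← NNReal.coe_real_pi, ENNReal.ofReal_coe_nnreal]
    _ ≤ ∫⁻ w in ball z (δ / (4 * K)), ENNReal.ofReal (‖g w‖ ^ p) := by
        apply setLIntegral_mono' measurableSet_ball
        intro w hw
        apply ENNReal.ofReal_le_ofReal
        exact Real.rpow_le_rpow (by positivity) (hlow w hw) hp.le
    _ ≤ _ := by
        apply lintegral_mono_set
        intro w hw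
        have hle : δ / (4 * K) ≤ δ := div_le_self hδ0.le (by linarith)
        have := hsub w (ball_subset_ball hle hw)
        rw [mem_ball, dist_eq_norm]; linarith

lemma aux_deriv (p α : ℝ) (hp : 0 < p) (hα : -1 < α) (f : ℂ → ℂ)
    (hf : DifferentiableOn ℂ f (ball (0 : ℂ) 1)) (hn : dirichletNorm p α f < ⊤) :
    ∃ D : ℝ, 0 ≤ D ∧ ∀ t ∈ Ico (0 : ℝ) 1, ‖deriv f (t : ℂ)‖ ≤ D * (1 - t) ^ (-((α + 2) / p)) := by
  obtain ⟨c, hc, hloc⟩ := aux_local p hp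
  have hJ : ∫⁻ z in ball (0 : ℂ) 1, ENNReal.ofReal ((1 - ‖z‖ ^ 2) ^ α * ‖deriv f z‖ ^ p) < ⊤ := by
    have h1 : bergmanNorm p α (deriv f) < ⊤ := lt_of_le_of_lt le_add_self hn
    unfold bergmanNorm at h1
    have h2 := (ENNReal.rpow_lt_top_iff_of_pos (by positivity)).1 h1
    have h3 := ENNReal.lt_top_of_mul_ne_top_right h2.ne
      (by
        rw [Ne, ENNReal.ofReal_eq_zero]
        linarith)
    unfold dA at h3
    rw [Measure.restrict_smul, lintegral_smul_measure] at h3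
    exact ENNReal.lt_top_of_mul_ne_top_right h3.ne (by simp)
  set J := ∫⁻ z in ball (0 : ℂ) 1, ENNReal.ofReal ((1 - ‖z‖ ^ 2) ^ α * ‖deriv f z‖ ^ p) with hJdef
  set m : ℝ := min ((1 / 2) ^ α) (3 ^ α) with hm
  have hm0 : 0 < m := lt_min (by positivity) (by positivity)
  have hdf : DifferentiableOn ℂ (deriv f) (ball (0 : ℂ) 1) := hf.deriv isOpen_ball
  have key : ∀ t ∈ Ico (0 : ℝ) 1,
      ‖deriv f (t : ℂ)‖ ^ p ≤ 4 * J.toReal / (c * m) * (1 - t) ^ (-(α + 2)) := by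
    intro t ht
    have ht1 : 0 < 1 - t := by linarith [ht.2]
    have hnt : ‖(t : ℂ)‖ = t := by simp [abs_of_nonneg ht.1]
    set r := (1 - t) / 2 with hr
    have hr0 : 0 < r := by positivity
    have hin : ∀ w ∈ closedBall (t : ℂ) r, ‖w‖ ≤ 1 - r ∧ 1 - 3 * r ≤ ‖w‖ := by
      intro w hw
      rw [mem_closedBall, dist_eq_norm] at hw
      have h1 := norm_sub_norm_le w (t : ℂ)
      have h2 := norm_sub_norm_le (t : ℂ) w
      rw [norm_sub_rev] at h2
      rw [hnt] at h1 h2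
      constructor <;> linarith
    have hsubset : closedBall (t : ℂ) r ⊆ ball 0 1 := by
      intro w hw
      have := (hin w hw).1
      rw [mem_ball_zero_iff]; linarith
    have h1 := hloc (deriv f) t r hr0 (hdf.mono hsubset)
    have h2 : ENNReal.ofReal (m * (1 - t) ^ α) *
        ∫⁻ w in ball (t : ℂ) r, ENNReal.ofReal (‖deriv f w‖ ^ p) ≤ J := by
      rw [← lintegral_const_mul' _ _ ENNReal.ofReal_ne_top]
      refine le_trans ?_ (lintegral_mono_set (ball_subset_closedBall.trans hsubset))
      apply setLIntegral_mono' measurableSet_ball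
      intro w hw
      rw [← ENNReal.ofReal_mul (by positivity)]
      apply ENNReal.ofReal_le_ofReal
      gcongr
      obtain ⟨h3, h4⟩ := hin w (ball_subset_closedBall hw)
      have h5 : 1 / 2 * (1 - t) ≤ 1 - ‖w‖ ^ 2 := by nlinarith [norm_nonneg w]
      have h6 : 1 - ‖w‖ ^ 2 ≤ 3 * (1 - t) := by nlinarith [norm_nonneg w]
      rcases le_total 0 α with h | h
      · calc m * (1 - t) ^ α ≤ (1 / 2) ^ α * (1 - t) ^ α := by gcongr; exact min_le_left _ _
          _ = (1 / 2 * (1 - t)) ^ α := (Real.mul_rpow (by norm_num) ht1.le).symm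
          _ ≤ _ := Real.rpow_le_rpow (by positivity) h5 h
      · calc m * (1 - t) ^ α ≤ 3 ^ α * (1 - t) ^ α := by gcongr; exact min_le_right _ _
          _ = (3 * (1 - t)) ^ α := (Real.mul_rpow (by norm_num) ht1.le).symm
          _ ≤ _ := Real.rpow_le_rpow_of_nonpos (by linarith) h6 h
    have h3 : ENNReal.ofReal (m * (1 - t) ^ α * (c * (r ^ 2 * ‖deriv f (t : ℂ)‖ ^ p))) ≤ J := by
      rw [ENNReal.ofReal_mul (by positivity)]
      exact le_trans (by gcongr) h2
    have h4 := (ENNReal.ofReal_le_iff_le_toReal hJ.ne).1 h3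
    have e : (1 - t) ^ (-(α + 2)) = ((1 - t) ^ α * (1 - t) ^ 2)⁻¹ := by
      rw [Real.rpow_neg ht1.le, Real.rpow_add ht1, Real.rpow_two]
    rw [e, ← div_eq_mul_inv, div_div, le_div_iff₀ (by positivity)]
    rw [hr] at h4
    nlinarith [h4]
  refine ⟨(4 * J.toReal / (c * m)) ^ (1 / p), by positivity, ?_⟩
  intro t ht
  have ht1 : 0 < 1 - t := by linarith [ht.2]
  have h1 := Real.rpow_le_rpow (by positivity) (key t ht) (by positivity : 0 ≤ 1 / p)
  rw [← Real.rpow_mul (norm_nonneg _), mul_one_div_cancel hp.ne', Real.rpow_one,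
    Real.mul_rpow (by positivity) (by positivity), ← Real.rpow_mul ht1.le] at h1
  convert h1 using 3
  ring

lemma aux_growth (β D : ℝ) (hβ : 1 < β) (f : ℂ → ℂ)
    (hf : DifferentiableOn ℂ f (ball (0 : ℂ) 1))
    (hD : ∀ t ∈ Ico (0 : ℝ) 1, ‖deriv f (t : ℂ)‖ ≤ D * (1 - t) ^ (-β)) :
    ∀ t ∈ Ico (0 : ℝ) 1, ‖f t‖ ≤ ‖f 0‖ + D / (β - 1) * (1 - t) ^ (-(β - 1)) := by
  intro b hb
  have hD0 : 0 ≤ D := by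
    have := hD 0 (by simp)
    simp at this
    exact (norm_nonneg _).trans this
  have hder : ∀ x ∈ Icc (0 : ℝ) b, HasDerivAt (fun t : ℝ => f t) (deriv f x) x := by
    intro x hx
    have : (x : ℂ) ∈ ball (0 : ℂ) 1 := by
      simp [abs_of_nonneg hx.1]; linarith [hx.2, hb.2]
    exact (hf.differentiableAt (isOpen_ball.mem_nhds this)).hasDerivAt.comp_ofReal
  have hB : ∀ x ∈ Icc (0 : ℝ) b,
      HasDerivAt (fun t : ℝ => ‖f 0‖ + D / (β - 1) * (1 - t) ^ (-(β - 1)))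
        (D * (1 - x) ^ (-β)) x := by
    intro x hx
    have hx1 : 0 < 1 - x := by linarith [hx.2, hb.2]
    have h1 : HasDerivAt (fun t : ℝ => 1 - t) (-1) x := by
      simpa using (hasDerivAt_id x).const_sub 1
    have h2 := ((h1.rpow_const (p := -(β - 1)) (Or.inl hx1.ne')).const_mul (D / (β - 1))).const_add
      ‖f 0‖
    refine h2.congr_deriv ?_
    have : β - 1 ≠ 0 := by linarith
    rw [show -(β - 1) - 1 = -β by ring]
    field_simp
  refine image_norm_le_of_norm_deriv_right_le_deriv_boundary' (a := 0) (b := b)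
    (f := fun t : ℝ => f t) (f' := fun x : ℝ => deriv f x)
    (fun x hx => (hder x hx).continuousAt.continuousWithinAt)
    (fun x hx => (hder x (Ico_subset_Icc_self hx)).hasDerivWithinAt)
    (B' := fun x => D * (1 - x) ^ (-β)) ?_
    (fun x hx => (hB x hx).continuousAt.continuousWithinAt)
    (fun x hx => (hB x (Ico_subset_Icc_self hx)).hasDerivWithinAt)
    (fun x hx => hD x ⟨hx.1, hx.2.trans hb.2⟩) ⟨hb.1, le_rfl⟩
  have : 0 ≤ D / (β - 1) := div_nonneg hD0 (by linarith)
  simpa using this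

lemma aux_carleson (γ : ℝ) (h0 : 0 < γ) (h1 : γ < 1) (μ : Measure ℝ) [IsFiniteMeasure μ]
    (hsupp : μ (Ico (0 : ℝ) 1)ᶜ = 0)
    (hμ : ∃ C > 0, ∀ t ∈ Ico (0 : ℝ) 1, (μ (Ico t 1)).toReal ≤ C * (1 - t)) :
    ∫⁻ t, ENNReal.ofReal ((1 - t) ^ (-γ)) ∂μ < ⊤ := by
  obtain ⟨C, hC, hμ⟩ := hμ
  have hae : ∀ᵐ t ∂μ, t ∈ Ico (0 : ℝ) 1 := hsupp
  set x : ℝ := (2 : ℝ) ^ γ with hx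
  have hx0 : 0 < x := by positivity
  have hx2 : x < 2 := by
    calc x < (2 : ℝ) ^ (1 : ℝ) := Real.rpow_lt_rpow_of_exponent_lt (by norm_num) h1
      _ = 2 := by simp
  have hle : ∫⁻ t, ENNReal.ofReal ((1 - t) ^ (-γ)) ∂μ ≤
      ∫⁻ t, ∑' n : ℕ, (Ico (1 - (1 / 2 : ℝ) ^ n) 1).indicator
        (fun _ => ENNReal.ofReal (x ^ (n + 1))) t ∂μ := by
    apply lintegral_mono_ae
    filter_upwards [hae] with t ht
    obtain ⟨n, hn1, hn2⟩ := exists_nat_pow_near_of_lt_one (x := 1 - t) (y := (1 / 2 : ℝ))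
      (by linarith [ht.2]) (by linarith [ht.1]) (by norm_num) (by norm_num)
    refine le_trans ?_ (ENNReal.le_tsum n)
    rw [indicator_of_mem (by constructor <;> linarith [ht.2])]
    apply ENNReal.ofReal_le_ofReal
    calc (1 - t) ^ (-γ) ≤ ((1 / 2 : ℝ) ^ (n + 1)) ^ (-γ) :=
          Real.rpow_le_rpow_of_nonpos (by positivity) hn1.le (by linarith)
      _ = x ^ (n + 1) := by
          rw [Real.rpow_neg (by positivity), ← Real.inv_rpow (by positivity), one_div, inv_pow,
            inv_inv, hx, ← Real.rpow_natCast, ← Real.rpow_natCast, ← Real.rpow_mul (by norm_num),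
            ← Real.rpow_mul (by norm_num), mul_comm]
  refine lt_of_le_of_lt hle ?_
  rw [lintegral_tsum (fun n => (measurable_const.indicator measurableSet_Ico).aemeasurable)]
  have hterm : ∀ n : ℕ, ∫⁻ t, (Ico (1 - (1 / 2 : ℝ) ^ n) 1).indicator
        (fun _ => ENNReal.ofReal (x ^ (n + 1))) t ∂μ ≤ ENNReal.ofReal (C * x * (x / 2) ^ n) := by
    intro n
    rw [lintegral_indicator measurableSet_Ico, setLIntegral_const]
    have h2 : (1 / 2 : ℝ) ^ n ≤ 1 := pow_le_one₀ (by norm_num) (by norm_num)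
    have h3 : (0 : ℝ) < (1 / 2 : ℝ) ^ n := by positivity
    have h4 := hμ (1 - (1 / 2 : ℝ) ^ n) ⟨by linarith, by linarith⟩
    rw [← ENNReal.ofReal_toReal (measure_ne_top μ _), ← ENNReal.ofReal_mul (by positivity)]
    apply ENNReal.ofReal_le_ofReal
    calc _ ≤ x ^ (n + 1) * (C * (1 - (1 - (1 / 2 : ℝ) ^ n))) := by gcongr
      _ = _ := by rw [pow_succ, div_pow, div_pow]; ring
  refine lt_of_le_of_lt (ENNReal.tsum_le_tsum hterm) ?_
  have hs : Summable fun n : ℕ => C * x * (x / 2) ^ n :=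
    (summable_geometric_of_lt_one (by positivity) (by linarith)).mul_left _
  rw [← ENNReal.ofReal_tsum_of_nonneg (fun n => by positivity) hs]
  exact ENNReal.ofReal_lt_top

/-- If `max(-1, p-2) < α < 2p-2` and `μ` is a Carleson measure on `[0,1)`,
then for every `f ∈ 𝒟^p_α` we have `∫_{[0,1)} |f(t)| dμ(t) < ∞`; consequently the integral
`I_μ f(z)` converges absolutely for every `z ∈ 𝔻`, uniformly on compact subsets of `𝔻`,
and `I_μ f` is analytic in `𝔻`. -/
theorem Imu_wellDefined_on_Dpa (p α : ℝ) (hp : 0 < p)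
    (hα1 : max (-1) (p - 2) < α) (hα2 : α < 2 * p - 2)
    (μ : Measure ℝ) [IsFiniteMeasure μ] (hsupp : μ (Ico (0 : ℝ) 1)ᶜ = 0)
    (hμ : ∃ C > 0, ∀ t ∈ Ico (0 : ℝ) 1, (μ (Ico t 1)).toReal ≤ C * (1 - t)) :
    ∀ f : ℂ → ℂ, DifferentiableOn ℂ f (ball (0 : ℂ) 1) → dirichletNorm p α f < ⊤ →
      (∫⁻ t : ℝ, ENNReal.ofReal ‖f (t : ℂ)‖ ∂μ) < ⊤ ∧
      (∀ z ∈ ball (0 : ℂ) 1, Integrable (fun t : ℝ => f (t : ℂ) / (1 - (t : ℂ) * z)) μ) ∧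
      (∀ K ⊆ ball (0 : ℂ) 1, IsCompact K →
        TendstoUniformlyOn
          (fun (s : ℝ) (z : ℂ) => ∫ t in Iio s, f (t : ℂ) / (1 - (t : ℂ) * z) ∂μ)
          (Imu μ f) (𝓝[<] (1 : ℝ)) K) ∧
      DifferentiableOn ℂ (Imu μ f) (ball (0 : ℂ) 1) := by
  intro f hf hn
  have hα : -1 < α := lt_of_le_of_lt (le_max_left _ _) hα1
  have hα' : p - 2 < α := lt_of_le_of_lt (le_max_right _ _) hα1
  obtain ⟨D, hD0, hD⟩ := aux_deriv p α hp hα f hf hn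
  have hβ1 : 1 < (α + 2) / p := by rw [lt_div_iff₀ hp]; linarith
  have hβ2 : (α + 2) / p < 2 := by rw [div_lt_iff₀ hp]; linarith
  have hgr := aux_growth _ D hβ1 f hf hD
  set γ := (α + 2) / p - 1 with hγ
  have hcar := aux_carleson γ (by linarith) (by linarith) μ hsupp hμ
  have hae : ∀ᵐ t ∂μ, t ∈ Ico (0 : ℝ) 1 := hsupp
  have hfin : (∫⁻ t : ℝ, ENNReal.ofReal ‖f (t : ℂ)‖ ∂μ) < ⊤ := by
    calc (∫⁻ t : ℝ, ENNReal.ofReal ‖f (t : ℂ)‖ ∂μ)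
        ≤ ∫⁻ t : ℝ, (ENNReal.ofReal ‖f 0‖ +
            ENNReal.ofReal (D / γ) * ENNReal.ofReal ((1 - t) ^ (-γ))) ∂μ := by
          apply lintegral_mono_ae
          filter_upwards [hae] with t ht
          have hDγ : 0 ≤ D / γ := div_nonneg hD0 (by linarith)
          have h1t : 0 ≤ 1 - t := by linarith [ht.2]
          rw [← ENNReal.ofReal_mul hDγ, ← ENNReal.ofReal_add (norm_nonneg _)
            (mul_nonneg hDγ (Real.rpow_nonneg h1t _))]
          exact ENNReal.ofReal_le_ofReal (hgr t ht)
      _ < ⊤ := by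
          rw [lintegral_add_left measurable_const, lintegral_const_mul' _ _ ENNReal.ofReal_ne_top,
            lintegral_const]
          exact ENNReal.add_lt_top.2 ⟨ENNReal.mul_lt_top ENNReal.ofReal_lt_top (measure_lt_top _ _),
            ENNReal.mul_lt_top ENNReal.ofReal_lt_top hcar⟩
  have hrestr : μ.restrict (Ico (0 : ℝ) 1) = μ := Measure.restrict_eq_self_of_ae_mem hae
  have hfm : AEStronglyMeasurable (fun t : ℝ => f (t : ℂ)) μ := by
    rw [← hrestr]
    refine ContinuousOn.aestronglyMeasurable ?_ measurableSet_Ico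
    refine hf.continuousOn.comp Complex.continuous_ofReal.continuousOn ?_
    intro t ht
    simpa [abs_of_nonneg ht.1] using ht.2
  have hfi : Integrable (fun t : ℝ => f (t : ℂ)) μ := by
    refine ⟨hfm, ?_⟩
    rw [hasFiniteIntegral_iff_norm]
    exact hfin
  have hkm : ∀ z : ℂ, AEStronglyMeasurable (fun t : ℝ => f (t : ℂ) / (1 - (t : ℂ) * z)) μ := by
    intro z
    have : Measurable fun t : ℝ => (1 - (t : ℂ) * z)⁻¹ := by fun_prop
    simp only [div_eq_mul_inv]
    exact hfm.mul this.aestronglyMeasurable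
  have hden : ∀ t ∈ Ico (0 : ℝ) 1, ∀ (R : ℝ) (z : ℂ), ‖z‖ ≤ R → 1 - R ≤ ‖1 - (t : ℂ) * z‖ := by
    intro t ht R z hz
    have h1 := norm_sub_norm_le (1 : ℂ) ((t : ℂ) * z)
    have h2 : ‖(t : ℂ) * z‖ ≤ R := by
      rw [norm_mul, Complex.norm_real, Real.norm_of_nonneg ht.1]
      nlinarith [norm_nonneg z, ht.1, ht.2]
    rw [norm_one] at h1
    linarith
  have hkb : ∀ R < 1, ∀ᵐ t : ℝ ∂μ, ∀ z : ℂ, ‖z‖ ≤ R →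
      ‖f (t : ℂ) / (1 - (t : ℂ) * z)‖ ≤ (1 - R)⁻¹ * ‖f (t : ℂ)‖ := by
    intro R hR
    filter_upwards [hae] with t ht z hz
    have h1 := hden t ht R z hz
    rw [norm_div, div_eq_inv_mul]
    have : 0 < 1 - R := by linarith
    gcongr
  have hki : ∀ z ∈ ball (0 : ℂ) 1,
      Integrable (fun t : ℝ => f (t : ℂ) / (1 - (t : ℂ) * z)) μ := by
    intro z hz
    rw [mem_ball_zero_iff] at hz
    refine (hfi.norm.const_mul (1 - ‖z‖)⁻¹).mono' (hkm z) ?_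
    filter_upwards [hkb _ hz] with t ht using ht z le_rfl
  refine ⟨hfin, hki, ?_, ?_⟩
  · intro K hK hKc
    obtain ⟨R, hR1, hR⟩ : ∃ R < 1, ∀ z ∈ K, ‖z‖ ≤ R := by
      rcases K.eq_empty_or_nonempty with h | h
      · exact ⟨0, by norm_num, by simp [h]⟩
      · obtain ⟨z, hz, hm⟩ := hKc.exists_isMaxOn h continuous_norm.continuousOn
        exact ⟨‖z‖, by simpa using hK hz, fun w hw => hm hw⟩
    have hR' : 0 < 1 - R := by linarith
    have htail : Tendsto (fun s : ℝ => ∫ t in Ici s, ‖f (t : ℂ)‖ ∂μ) (𝓝[<] (1 : ℝ)) (𝓝 0) := by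
      have hlim : Tendsto (fun s : ℝ => ∫ t, (Ici s).indicator (fun t : ℝ => ‖f (t : ℂ)‖) t ∂μ)
          (𝓝[<] (1 : ℝ)) (𝓝 (∫ _, (0 : ℝ) ∂μ)) := by
        refine tendsto_integral_filter_of_dominated_convergence (fun t : ℝ => ‖f (t : ℂ)‖) ?_ ?_
          hfi.norm ?_
        · exact Eventually.of_forall fun s => hfm.norm.indicator measurableSet_Ici
        · refine Eventually.of_forall fun s => Eventually.of_forall fun t => ?_
          exact (norm_indicator_le_norm_self _ _).trans (by simp)
        · filter_upwards [hae] with t ht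
          refine tendsto_const_nhds.congr' ?_
          filter_upwards [mem_nhdsWithin_of_mem_nhds (Ioi_mem_nhds ht.2)] with s hs
          rw [indicator_of_notMem]
          simpa using hs
      simp only [integral_zero] at hlim
      refine hlim.congr fun s => ?_
      rw [integral_indicator measurableSet_Ici]
    rw [Metric.tendstoUniformlyOn_iff]
    intro ε hε
    have h2 : Tendsto (fun s : ℝ => (1 - R)⁻¹ * ∫ t in Ici s, ‖f (t : ℂ)‖ ∂μ)
        (𝓝[<] (1 : ℝ)) (𝓝 0) := by simpa using htail.const_mul (1 - R)⁻¹
    filter_upwards [h2.eventually (gt_mem_nhds hε)] with s hs z hz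
    refine lt_of_le_of_lt ?_ hs
    have hsplit := integral_add_compl (measurableSet_Iio (a := s)) (hki z (hK hz))
    rw [compl_Iio] at hsplit
    rw [dist_eq_norm, Imu, ← hsplit, add_sub_cancel_left, ← integral_const_mul]
    refine norm_integral_le_of_norm_le (hfi.norm.const_mul _).integrableOn ?_
    filter_upwards [ae_restrict_of_ae (hkb R hR1)] with t ht using ht z (hR z hz)
  · intro z hz
    rw [mem_ball_zero_iff] at hz
    obtain ⟨R, hzR, hR1⟩ := exists_between hz
    have hR' : 0 < 1 - R := by linarith
    have hs : ball (0 : ℂ) R ∈ 𝓝 z := isOpen_ball.mem_nhds (by simpa using hzR)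
    have := hasDerivAt_integral_of_dominated_loc_of_deriv_le (μ := μ) (x₀ := z) (s := ball (0 : ℂ) R)
      (F := fun z (t : ℝ) => f (t : ℂ) / (1 - (t : ℂ) * z))
      (F' := fun z (t : ℝ) => f (t : ℂ) * ((t : ℂ) / (1 - (t : ℂ) * z) ^ 2))
      (bound := fun t : ℝ => ‖f (t : ℂ)‖ * (1 / (1 - R) ^ 2))
      hs (Eventually.of_forall hkm) (hki z (by simpa using hz))
      (hfm.mul (by
        have : Measurable fun t : ℝ => (t : ℂ) / (1 - (t : ℂ) * z) ^ 2 := by fun_prop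
        exact this.aestronglyMeasurable))
      (by
        filter_upwards [hae] with t ht w hw
        have h1 := hden t ht R w (by simpa using (mem_ball_zero_iff.1 hw).le)
        rw [norm_mul, norm_div, norm_pow, Complex.norm_real, Real.norm_of_nonneg ht.1]
        have := ht.2.le
        gcongr)
      (hfi.norm.mul_const _)
      (by
        filter_upwards [hae] with t ht w hw
        have h1 := hden t ht R w (by simpa using (mem_ball_zero_iff.1 hw).le)
        have hne : 1 - (t : ℂ) * w ≠ 0 := norm_pos_iff.1 (by linarith)
        have hd : HasDerivAt (fun w : ℂ => 1 - (t : ℂ) * w) (-(t : ℂ)) w := by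
          simpa using ((hasDerivAt_id w).const_mul (t : ℂ)).const_sub 1
        have h2 := (hd.inv hne).const_mul (f (t : ℂ))
        simpa [div_eq_mul_inv] using h2)
    exact this.2.differentiableAt.differentiableWithinAt
end

section
/- Let p > 1 and −1 < α < p−2, and let μ be a finite positive Borel measure on [0,1). Then the following are equivalent: (a) μ is a Carleson measure; (b) there exists a constant C > 0 such that for every f in the weighted Bergman space A^p_α, the integral I_μ f(z) = ∫_{[0,1)} f(t)/(1 − t z) dμ(t) converges absolutely for every z in the unit disc 𝔻, the resulting function I_μ f is analytic in 𝔻, belongs to A^p_α, and ‖I_μ f‖_{A^p_α} ≤ C ‖f‖_{A^p_α}. -/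
open MeasureTheory Set Metric Filter Asymptotics
open scoped ENNReal

lemma aux_jensen {X : Type*} [MeasurableSpace X] (ν : Measure X) {p : ℝ} (hp : 1 < p)
    {g : X → ℝ≥0∞} (hg : AEMeasurable g ν) :
    (∫⁻ x, g x ∂ν) ^ p ≤ (ν univ) ^ (p - 1) * ∫⁻ x, g x ^ p ∂ν := by
  have hpq := Real.HolderConjugate.conjExponent hp
  have h := ENNReal.lintegral_mul_le_Lp_mul_Lq ν hpq hg (aemeasurable_const (b := (1 : ℝ≥0∞)))
  simp only [Pi.mul_apply, mul_one, ENNReal.one_rpow, lintegral_const, one_mul] at h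
  have hp0 : 0 < p := by linarith
  calc (∫⁻ x, g x ∂ν) ^ p ≤ ((∫⁻ x, g x ^ p ∂ν) ^ (1 / p) * ν univ ^ (1 / p.conjExponent)) ^ p :=
        ENNReal.rpow_le_rpow h hp0.le
    _ = _ := by
        rw [ENNReal.mul_rpow_of_nonneg _ _ hp0.le, ← ENNReal.rpow_mul, ← ENNReal.rpow_mul,
          one_div_mul_cancel hp0.ne', ENNReal.rpow_one, mul_comm]
        congr 2
        unfold Real.conjExponent
        field_simp

lemma aux_jensen_tsum {p : ℝ} (hp : 1 < p) (b T : ℕ → ℝ≥0∞) :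
    (∑' k, T k * b k) ^ p ≤ (∑' k, T k) ^ (p - 1) * ∑' k, T k * b k ^ p := by
  have h := aux_jensen (Measure.count.withDensity T) hp (g := b) (measurable_of_countable b).aemeasurable
  rw [lintegral_withDensity_eq_lintegral_mul _ (measurable_of_countable T) (measurable_of_countable b),
    lintegral_withDensity_eq_lintegral_mul _ (measurable_of_countable T)
      (measurable_of_countable (fun x => b x ^ p)), withDensity_apply _ MeasurableSet.univ] at h
  simpa [lintegral_count] using h

lemma aux_polarBall (c : ℂ) (ρ : ℝ) {g : ℂ → ℝ≥0∞} (hg : Measurable g) :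
    ∫⁻ z in ball c ρ, g z = ∫⁻ r in Ioo 0 ρ, ENNReal.ofReal r *
      ∫⁻ θ in Ioo (-Real.pi) Real.pi, g (circleMap c r θ) := by
  have hcm : Measurable (fun q : ℝ × ℝ => circleMap c q.1 q.2) := by
    unfold circleMap; fun_prop
  rw [← lintegral_indicator measurableSet_ball,
    ← lintegral_add_left_eq_self _ c, ← Complex.lintegral_comp_polarCoord_symm]
  have e : ∀ q ∈ polarCoord.target, ENNReal.ofReal q.1 •
      (ball c ρ).indicator g (c + Complex.polarCoord.symm q) =
      (Iio ρ).indicator ENNReal.ofReal q.1 * g (circleMap c q.1 q.2) := by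
    rintro ⟨r, θ⟩ hq
    have hr : 0 < r := by simpa [polarCoord] using hq.1
    have h1 : c + Complex.polarCoord.symm (r, θ) = circleMap c r θ := by
      rw [Complex.polarCoord_symm_apply, circleMap, Complex.exp_mul_I]; simp
    rw [h1]
    have h2 : circleMap c r θ ∈ ball c ρ ↔ r ∈ Iio ρ := by
      simp [circleMap, dist_eq_norm, abs_of_pos hr]
    by_cases h : r ∈ Iio ρ
    · rw [indicator_of_mem (h2.2 h)]; simp [indicator_of_mem h]
    · rw [indicator_of_notMem (mt h2.1 h)]; simp [indicator_of_notMem h]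
  rw [setLIntegral_congr_fun polarCoord.open_target.measurableSet e, polarCoord_target,
    Measure.volume_eq_prod, setLIntegral_prod]
  · rw [show Ioo 0 ρ = Iio ρ ∩ Ioi 0 by rw [inter_comm, Ioi_inter_Iio],
      ← Measure.restrict_restrict measurableSet_Iio, ← lintegral_indicator measurableSet_Iio]
    refine lintegral_congr fun r => ?_
    have hm : Measurable (fun θ => g (circleMap c r θ)) := hg.comp (by unfold circleMap; fun_prop)
    simp only []
    rw [lintegral_const_mul _ hm]
    by_cases h : r ∈ Iio ρ
    · simp only [indicator_of_mem h]
    · simp only [indicator_of_notMem h, zero_mul]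
  · refine Measurable.aemeasurable (Measurable.mul ?_ (hg.comp hcm))
    exact (ENNReal.measurable_ofReal.indicator measurableSet_Iio).comp measurable_fst

lemma aux_circle {f : ℂ → ℂ} {c : ℂ} {ρ r : ℝ} (hf : DifferentiableOn ℂ f (ball c ρ))
    (hr0 : 0 < r) (hr : r < ρ) :
    ∫⁻ _ in Ioo (-Real.pi) Real.pi, ‖f c‖ₑ ≤
      ∫⁻ θ in Ioo (-Real.pi) Real.pi, ‖f (circleMap c r θ)‖ₑ := by
  have h1 : DiffContOnCl ℂ f (ball c |r|) := by
    rw [abs_of_pos hr0]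
    apply DifferentiableOn.diffContOnCl
    exact hf.mono ((closure_ball_subset_closedBall).trans (closedBall_subset_ball hr))
  have h2 := h1.circleAverage
  rw [Real.circleAverage_eq_integral_add (-Real.pi)] at h2
  rw [intervalIntegral.integral_comp_add_right (fun θ => f (circleMap c r θ)) (-Real.pi),
    intervalIntegral.integral_of_le (by linarith [Real.pi_pos]), zero_add,
    show 2 * Real.pi + -Real.pi = Real.pi by ring, integral_Ioc_eq_integral_Ioo] at h2
  have hv : volume (Ioo (-Real.pi) Real.pi) = ENNReal.ofReal (2 * Real.pi) := by
    rw [Real.volume_Ioo]; ring_nf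
  have hpos : 0 < 2 * Real.pi := by positivity
  rw [setLIntegral_const, hv]
  calc ‖f c‖ₑ * ENNReal.ofReal (2 * Real.pi)
      = ‖∫ θ in Ioo (-Real.pi) Real.pi, f (circleMap c r θ)‖ₑ := by
        rw [← h2, enorm_smul, mul_right_comm, ← Real.enorm_eq_ofReal hpos.le,
          ← enorm_mul, inv_mul_cancel₀ hpos.ne']; simp
    _ ≤ _ := enorm_integral_le_lintegral_enorm _

lemma aux_mv {f : ℂ → ℂ} {c : ℂ} {ρ : ℝ} (hf : DifferentiableOn ℂ f (ball c ρ)) :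
    ‖f c‖ₑ * volume (ball c ρ) ≤ ∫⁻ z in ball c ρ, ‖f z‖ₑ := by
  have hm : Measurable ((ball c ρ).indicator f) := by
    classical
    have := hf.continuousOn.measurable_piecewise (g := fun _ => 0) (continuousOn_const) measurableSet_ball
    rw [← Set.piecewise_eq_indicator]; exact this
  have e : ∫⁻ z in ball c ρ, ‖f z‖ₑ = ∫⁻ z in ball c ρ, ‖(ball c ρ).indicator f z‖ₑ :=
    setLIntegral_congr_fun measurableSet_ball fun z hz => by simp [indicator_of_mem hz]
  rw [e, aux_polarBall c ρ hm.enorm, ← setLIntegral_const, aux_polarBall c ρ measurable_const]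
  refine setLIntegral_mono' measurableSet_Ioo fun r hr => ?_
  refine mul_le_mul_right ?_ _
  refine (aux_circle hf hr.1 hr.2).trans (le_of_eq ?_)
  refine lintegral_congr fun θ => ?_
  rw [indicator_of_mem]
  simp [circleMap, dist_eq_norm, abs_of_pos hr.1, hr.2]

lemma aux_mvp {f : ℂ → ℂ} {c : ℂ} {ρ p : ℝ} (hp : 1 < p) (hρ : 0 < ρ)
    (hf : DifferentiableOn ℂ f (ball c ρ)) :
    ‖f c‖ₑ ^ p * volume (ball c ρ) ≤ ∫⁻ z in ball c ρ, ‖f z‖ₑ ^ p := by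
  have h := aux_mv hf
  have hj := aux_jensen (volume.restrict (ball c ρ)) hp (g := fun z => ‖f z‖ₑ)
    (hf.continuousOn.aestronglyMeasurable measurableSet_ball).enorm
  rw [Measure.restrict_apply_univ] at hj
  have hV0 : volume (ball c ρ) ≠ 0 := (measure_ball_pos _ _ hρ).ne'
  have hVt : volume (ball c ρ) ≠ ⊤ := measure_ball_lt_top.ne
  have h2 : ‖f c‖ₑ ^ p * volume (ball c ρ) ^ p ≤
      volume (ball c ρ) ^ (p - 1) * ∫⁻ z in ball c ρ, ‖f z‖ₑ ^ p := by
    rw [← ENNReal.mul_rpow_of_nonneg _ _ (by linarith)]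
    exact (ENNReal.rpow_le_rpow h (by linarith)).trans hj
  have e : volume (ball c ρ) ^ p = volume (ball c ρ) ^ (p - 1) * volume (ball c ρ) := by
    conv_rhs => rw [← ENNReal.rpow_one (volume (ball c ρ)), ← ENNReal.rpow_mul, one_mul]
    rw [← ENNReal.rpow_add _ _ hV0 hVt]; simp
  rw [e, mul_left_comm] at h2
  exact (ENNReal.mul_le_mul_iff_right (ENNReal.rpow_pos (pos_iff_ne_zero.2 hV0) hVt).ne' (ENNReal.rpow_ne_top_of_nonneg (by linarith) hVt)).1 h2

/-- The weight `(1-|z|^2)^α` as an extended nonnegative real. -/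
noncomputable def bWt (α : ℝ) (z : ℂ) : ℝ≥0∞ := ENNReal.ofReal ((1 - ‖z‖ ^ 2) ^ α)

lemma bWt_meas (α : ℝ) : Measurable (bWt α) := by
  unfold bWt; fun_prop

lemma aux_rpow_int {α δ : ℝ} (hα : -1 < α) (hδ : 0 < δ) :
    ∫⁻ u in Ioo 0 δ, ENNReal.ofReal (u ^ α) = ENNReal.ofReal (δ ^ (α + 1) / (α + 1)) := by
  have hi : IntegrableOn (fun u : ℝ => u ^ α) (Ioo 0 δ) := by
    have := intervalIntegral.intervalIntegrable_rpow' (a := 0) (b := δ) hα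
    rw [intervalIntegrable_iff_integrableOn_Ioo_of_le hδ.le] at this
    exact this
  rw [← ofReal_integral_eq_lintegral_ofReal hi]
  · congr 1
    rw [← integral_Ioc_eq_integral_Ioo, ← intervalIntegral.integral_of_le hδ.le,
      integral_rpow (Or.inl hα), Real.zero_rpow (by linarith)]
    simp
  · exact (ae_restrict_iff' measurableSet_Ioo).2 (ae_of_all _ fun u hu => Real.rpow_nonneg hu.1.le _)

lemma aux_wt_le {α r : ℝ} (h0 : 0 < r) (h1 : r < 1) :
    (1 - r ^ 2) ^ α ≤ 2 ^ |α| * (1 - r) ^ α := by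
  rw [show 1 - r ^ 2 = (1 + r) * (1 - r) by ring, Real.mul_rpow (by linarith) (by linarith)]
  refine mul_le_mul_of_nonneg_right ?_ (Real.rpow_nonneg (by linarith) _)
  calc (1 + r) ^ α ≤ (1 + r) ^ |α| :=
        Real.rpow_le_rpow_of_exponent_le (by linarith) (le_abs_self _)
    _ ≤ 2 ^ |α| := Real.rpow_le_rpow (by linarith) (by linarith) (abs_nonneg _)

lemma aux_geom {r θ δ : ℝ} (h0 : 0 < r) (h1 : r < 1) (hθ : θ ∈ Ioo (-Real.pi) Real.pi)
    (h : ‖circleMap 0 r θ - 1‖ < δ) : 1 - δ < r ∧ |θ| ≤ Real.pi * δ := by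
  have hn : ‖circleMap 0 r θ‖ = r := by simp [abs_of_pos h0]
  have hr : 1 - r ≤ ‖circleMap 0 r θ - 1‖ := by
    have := norm_sub_norm_le (1 : ℂ) (circleMap 0 r θ)
    rw [hn, norm_one, norm_sub_rev] at this; exact this
  refine ⟨by linarith, ?_⟩
  have hsq : ‖circleMap 0 r θ - 1‖ ^ 2 = (1 - r) ^ 2 + r * (4 * Real.sin (θ / 2) ^ 2) := by
    rw [← Complex.normSq_eq_norm_sq, Complex.normSq_apply, circleMap]
    have hc : Real.cos θ = 1 - 2 * Real.sin (θ / 2) ^ 2 := by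
      rw [← Real.cos_sq_add_sin_sq (θ / 2)]
      conv_lhs => rw [show θ = 2 * (θ / 2) by ring, Real.cos_two_mul]
      nlinarith [Real.cos_sq_add_sin_sq (θ / 2)]
    have hcs := Real.cos_sq_add_sin_sq θ
    simp [Complex.exp_ofReal_mul_I_re, Complex.exp_ofReal_mul_I_im]
    nlinarith
  have hsin : Real.sin (θ / 2) ^ 2 ≤ ‖circleMap 0 r θ - 1‖ ^ 2 := by
    rw [hsq]
    have := Real.sin_sq_le_one (θ / 2)
    have := sq_nonneg (Real.sin (θ / 2))
    set S := Real.sin (θ / 2) ^ 2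
    nlinarith [mul_nonneg (sub_nonneg.2 ‹S ≤ 1›) (sq_nonneg (1 - r)), mul_nonneg ‹0 ≤ S› h0.le,
      mul_nonneg ‹0 ≤ S› (sq_nonneg r)]
  have h2 : |Real.sin (θ / 2)| ≤ ‖circleMap 0 r θ - 1‖ := by
    exact abs_le_of_sq_le_sq hsin (norm_nonneg _)
  have h3 : |θ| / Real.pi ≤ |Real.sin (θ / 2)| := by
    have := Real.mul_abs_le_abs_sin (x := θ / 2) (by
      rw [abs_div, abs_two]; have := abs_lt.2 hθ; linarith)
    rw [abs_div, abs_two] at this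
    calc |θ| / Real.pi = 2 / Real.pi * (|θ| / 2) := by ring
      _ ≤ _ := this
  rw [div_le_iff₀ Real.pi_pos] at h3
  nlinarith [Real.pi_pos]

lemma aux_area {α : ℝ} (hα : -1 < α) {δ : ℝ} (hδ : 0 < δ) :
    ∫⁻ z in ball 0 1 ∩ ball 1 δ, bWt α z ≤
      ENNReal.ofReal (2 ^ |α| * (2 * Real.pi) / (α + 1) * δ ^ (α + 2)) := by
  rw [inter_comm, ← Measure.restrict_restrict measurableSet_ball,
    ← lintegral_indicator measurableSet_ball,
    aux_polarBall 0 1 ((bWt_meas α).indicator measurableSet_ball)]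
  have key : ∀ r ∈ Ioo (0 : ℝ) 1, ENNReal.ofReal r *
      ∫⁻ θ in Ioo (-Real.pi) Real.pi, (ball 1 δ).indicator (bWt α) (circleMap 0 r θ) ≤
      ENNReal.ofReal (2 ^ |α| * (2 * Real.pi * δ)) *
        (Ioo 0 δ).indicator (fun u => ENNReal.ofReal (u ^ α)) (1 - r) := by
    intro r hr
    have h1 : ∀ θ ∈ Ioo (-Real.pi) Real.pi, (ball 1 δ).indicator (bWt α) (circleMap 0 r θ) ≤
        (Icc (-(Real.pi * δ)) (Real.pi * δ)).indicator (fun _ => ENNReal.ofReal (2 ^ |α|) *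
        (Ioo 0 δ).indicator (fun u => ENNReal.ofReal (u ^ α)) (1 - r)) θ := by
      intro θ hθ
      by_cases hz : circleMap 0 r θ ∈ ball 1 δ
      · rw [indicator_of_mem hz]
        obtain ⟨h2, h3⟩ := aux_geom hr.1 hr.2 hθ (by simpa [dist_eq_norm] using hz)
        rw [indicator_of_mem (show θ ∈ Icc (-(Real.pi * δ)) (Real.pi * δ) from abs_le.1 h3), indicator_of_mem (by constructor <;> linarith [hr.2]),
          ← ENNReal.ofReal_mul (by positivity), bWt]
        apply ENNReal.ofReal_le_ofReal
        have hn : ‖circleMap 0 r θ‖ = r := by simp [abs_of_pos hr.1]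
        rw [hn]
        exact aux_wt_le hr.1 hr.2
      · rw [indicator_of_notMem hz]; exact zero_le
    calc _ ≤ 1 * ∫⁻ θ in Ioo (-Real.pi) Real.pi,
          (Icc (-(Real.pi * δ)) (Real.pi * δ)).indicator (fun _ => ENNReal.ofReal (2 ^ |α|) *
        (Ioo 0 δ).indicator (fun u => ENNReal.ofReal (u ^ α)) (1 - r)) θ := by
            refine mul_le_mul' (by simpa using hr.2.le) (setLIntegral_mono' measurableSet_Ioo h1)
      _ ≤ ∫⁻ θ, (Icc (-(Real.pi * δ)) (Real.pi * δ)).indicator (fun _ => ENNReal.ofReal (2 ^ |α|) *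
        (Ioo 0 δ).indicator (fun u => ENNReal.ofReal (u ^ α)) (1 - r)) θ := by
          rw [one_mul]; exact setLIntegral_le_lintegral _ _
      _ = _ := by
          rw [lintegral_indicator measurableSet_Icc, setLIntegral_const, Real.volume_Icc,
            ENNReal.ofReal_mul (by positivity : (0:ℝ) ≤ 2 ^ |α|), mul_right_comm]
          ring_nf
  refine (setLIntegral_mono' measurableSet_Ioo key).trans ?_
  refine (setLIntegral_le_lintegral _ _).trans ?_
  rw [lintegral_const_mul' _ _ ENNReal.ofReal_ne_top,
    lintegral_sub_left_eq_self (fun u => (Ioo 0 δ).indicator (fun u => ENNReal.ofReal (u ^ α)) u) 1,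
    lintegral_indicator measurableSet_Ioo, aux_rpow_int hα hδ, ← ENNReal.ofReal_mul (by positivity)]
  apply le_of_eq
  congr 1
  rw [show α + 2 = (α + 1) + 1 by ring, Real.rpow_add hδ (α + 1) 1, Real.rpow_one]
  ring

/-- The dyadic kernel. -/
noncomputable def bKer (j k : ℕ) : ℝ≥0∞ := min 1 ((2 : ℝ≥0∞) ^ ((j : ℝ) - k))

lemma aux_two_add (x y : ℝ) : (2 : ℝ≥0∞) ^ (x + y) = 2 ^ x * 2 ^ y :=
  ENNReal.rpow_add _ _ (by norm_num) (by norm_num)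

lemma aux_two_mono {x y : ℝ} (h : x ≤ y) : (2 : ℝ≥0∞) ^ x ≤ 2 ^ y :=
  ENNReal.rpow_le_rpow_of_exponent_le (by norm_num) h

lemma aux_T_sum {ε : ℝ} (hε : 0 < ε) :
    ∑' m : ℤ, (2 : ℝ≥0∞) ^ (-ε * |(m : ℝ)|) ≠ ⊤ := by
  have h : ∀ m : ℤ, (2 : ℝ≥0∞) ^ (-ε * |(m : ℝ)|) = ENNReal.ofReal ((2 : ℝ) ^ (-ε * |(m : ℝ)|)) := by
    intro m
    rw [← ENNReal.ofReal_rpow_of_pos (by norm_num)]; norm_num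
  simp_rw [h]
  have hs : Summable (fun n : ℕ => (2 : ℝ) ^ (-ε * (n : ℝ))) := by
    simp_rw [Real.rpow_mul (by norm_num : (0:ℝ) ≤ 2), Real.rpow_natCast]
    exact summable_geometric_of_lt_one (by positivity)
      (Real.rpow_lt_one_of_one_lt_of_neg (by norm_num) (by linarith))
  apply Summable.tsum_ofReal_ne_top
  apply Summable.of_nat_of_neg <;> simpa using hs

lemma aux_schur {p ρ : ℝ} (hp : 1 < p) (hρ : 0 < ρ) (hρp : ρ < p) :
    ∃ C : ℝ≥0∞, C ≠ ⊤ ∧ ∀ c : ℕ → ℝ≥0∞,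
      ∑' j : ℕ, 2 ^ (-ρ * j) * (∑' k, c k * bKer j k) ^ p ≤ C * ∑' k : ℕ, c k ^ p * 2 ^ (-ρ * k) := by
  have hp0 : 0 < p := by linarith
  set s := ρ / p with hs
  have hs0 : 0 < s := by positivity
  have hs1 : s < 1 := (div_lt_one hp0).2 hρp
  have hsp : s * p = ρ := div_mul_cancel₀ _ hp0.ne'
  set ε := min s (1 - s)
  have hε : 0 < ε := lt_min hs0 (by linarith)
  set T : ℤ → ℝ≥0∞ := fun m => 2 ^ (-ε * |(m : ℝ)|) with hT
  set M := ∑' m, T m with hM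
  have hMt : M ≠ ⊤ := aux_T_sum hε
  have row : ∀ j : ℕ, ∑' k : ℕ, T ((j : ℤ) - k) ≤ M := fun j =>
    ENNReal.tsum_comp_le_tsum_of_injective (f := fun k : ℕ => (j : ℤ) - k)
      (fun a b h => by simpa using h) T
  have col : ∀ k : ℕ, ∑' j : ℕ, T ((j : ℤ) - k) ≤ M := fun k =>
    ENNReal.tsum_comp_le_tsum_of_injective (f := fun j : ℕ => (j : ℤ) - k)
      (fun a b h => by simpa using h) T
  refine ⟨M ^ (p - 1) * M, ENNReal.mul_ne_top (ENNReal.rpow_ne_top_of_nonneg (by linarith) hMt) hMt,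
    fun c => ?_⟩
  set b : ℕ → ℝ≥0∞ := fun k => c k * 2 ^ (-s * k) with hb
  have hbp : ∀ k, b k ^ p = c k ^ p * 2 ^ (-ρ * k) := by
    intro k
    rw [hb, ENNReal.mul_rpow_of_nonneg _ _ hp0.le, ← ENNReal.rpow_mul]
    congr 2
    rw [← hsp]; ring
  have hker : ∀ j k : ℕ, 2 ^ (-s * j) * bKer j k ≤ T ((j : ℤ) - k) * 2 ^ (-s * k) := by
    intro j k
    simp only [hT, bKer]
    rw [← aux_two_add]
    push_cast
    rcases le_total (k : ℝ) j with h | h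
    · calc _ ≤ (2 : ℝ≥0∞) ^ (-s * j) * 1 := by gcongr; exact min_le_left _ _
        _ ≤ _ := by
          rw [mul_one]; apply aux_two_mono
          rw [abs_of_nonneg (by linarith)]
          nlinarith [min_le_left s (1 - s)]
    · calc _ ≤ (2 : ℝ≥0∞) ^ (-s * j) * 2 ^ ((j : ℝ) - k) := by gcongr; exact min_le_right _ _
        _ ≤ _ := by
          rw [← aux_two_add]; apply aux_two_mono
          rw [abs_of_nonpos (by linarith)]
          nlinarith [min_le_right s (1 - s)]
  have step : ∀ j : ℕ, 2 ^ (-ρ * j) * (∑' k, c k * bKer j k) ^ p ≤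
      M ^ (p - 1) * ∑' k : ℕ, T ((j : ℤ) - k) * b k ^ p := by
    intro j
    calc 2 ^ (-ρ * j) * (∑' k, c k * bKer j k) ^ p
        = (∑' k, 2 ^ (-s * j) * (c k * bKer j k)) ^ p := by
          rw [ENNReal.tsum_mul_left, ENNReal.mul_rpow_of_nonneg _ _ hp0.le, ← ENNReal.rpow_mul]
          congr 2
          rw [← hsp]; ring
      _ ≤ (∑' k : ℕ, T ((j : ℤ) - k) * b k) ^ p := by
          refine ENNReal.rpow_le_rpow (ENNReal.tsum_le_tsum fun k => ?_) hp0.le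
          rw [mul_left_comm, hb]; simp only []
          rw [mul_left_comm (T _)]
          exact mul_le_mul_right (hker j k) _
      _ ≤ _ := (aux_jensen_tsum hp b _).trans (by gcongr; exact row j)
  calc _ ≤ ∑' j : ℕ, M ^ (p - 1) * ∑' k : ℕ, T ((j : ℤ) - k) * b k ^ p := ENNReal.tsum_le_tsum step
    _ = M ^ (p - 1) * ∑' k : ℕ, (∑' j : ℕ, T ((j : ℤ) - k)) * b k ^ p := by
        rw [ENNReal.tsum_mul_left, ENNReal.tsum_comm]
        simp_rw [ENNReal.tsum_mul_right]
    _ ≤ M ^ (p - 1) * ∑' k : ℕ, M * b k ^ p := by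
        gcongr with k; exact col k
    _ = _ := by
        rw [ENNReal.tsum_mul_left, mul_assoc]; simp_rw [hbp]

/-- Dyadic annuli around `1` in the unit disc. -/
def bAnn (j : ℕ) : Set ℂ := {z | ‖z‖ < 1 ∧ (1 / 2 : ℝ) ^ j < ‖1 - z‖ ∧ ‖1 - z‖ ≤ 2 * (1 / 2 : ℝ) ^ j}

lemma bAnn_meas (j : ℕ) : MeasurableSet (bAnn j) := by
  have h1 : MeasurableSet {z : ℂ | ‖z‖ < 1} := measurableSet_lt measurable_norm measurable_const
  have hm : Measurable (fun z : ℂ => ‖1 - z‖) := by fun_prop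
  have h2 : MeasurableSet {z : ℂ | (1 / 2 : ℝ) ^ j < ‖1 - z‖} := measurableSet_lt measurable_const hm
  have h3 : MeasurableSet {z : ℂ | ‖1 - z‖ ≤ 2 * (1 / 2 : ℝ) ^ j} :=
    measurableSet_le hm measurable_const
  exact h1.inter (h2.inter h3)

lemma bAnn_sub (j : ℕ) : bAnn j ⊆ ball 0 1 := fun z hz => by simpa using hz.1

lemma aux_one_sub {z : ℂ} (hz : z ∈ ball (0 : ℂ) 1) : 0 < ‖1 - z‖ ∧ ‖1 - z‖ < 2 := by
  have hz : ‖z‖ < 1 := by simpa using hz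
  have h1 := norm_sub_norm_le (1 : ℂ) z
  have h2 := norm_sub_le (1 : ℂ) z
  rw [norm_one] at h1 h2
  constructor <;> linarith

lemma bAnn_cover {z : ℂ} (hz : z ∈ ball (0 : ℂ) 1) : ∃ j, z ∈ bAnn j := by
  obtain ⟨h1, h2⟩ := aux_one_sub hz
  obtain ⟨n, hn1, hn2⟩ := exists_nat_pow_near_of_lt_one (x := ‖1 - z‖ / 2) (y := 1 / 2)
    (by linarith) (by linarith) (by norm_num) (by norm_num)
  refine ⟨n, by simpa using hz, ?_, ?_⟩
  · rw [pow_succ] at hn1; linarith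
  · linarith

lemma bAnn_disj : Pairwise (Function.onFun Disjoint bAnn) := by
  have key : ∀ i j, i < j → Disjoint (bAnn i) (bAnn j) := by
    intro i j hij
    rw [Set.disjoint_left]
    intro z h1 h2
    have h3 : (1 / 2 : ℝ) ^ j ≤ (1 / 2) ^ (i + 1) :=
      pow_le_pow_of_le_one (by norm_num) (by norm_num) hij
    rw [pow_succ] at h3
    linarith [h1.2.1, h2.2.2]
  intro i j hij
  rcases lt_or_gt_of_ne hij with h | h
  · exact key i j h
  · exact (key j i h).symm

lemma aux_half (k : ℕ) : ENNReal.ofReal ((1 / 2 : ℝ) ^ k) = 2 ^ (-(k : ℝ)) := by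
  rw [one_div, inv_pow, ENNReal.ofReal_inv_of_pos (by positivity), ENNReal.rpow_neg,
    ENNReal.rpow_natCast, ENNReal.ofReal_pow (by norm_num)]
  norm_num

lemma aux_half_rpow (k : ℕ) (x : ℝ) : ENNReal.ofReal (((1 / 2 : ℝ) ^ k) ^ x) = 2 ^ (-x * k) := by
  rw [← ENNReal.ofReal_rpow_of_pos (by positivity), aux_half, ← ENNReal.rpow_mul]
  congr 1; ring

lemma aux_ann_wt {α : ℝ} (hα : -1 < α) : ∃ C : ℝ≥0∞, C ≠ ⊤ ∧ ∀ j : ℕ,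
    ∫⁻ z in bAnn j, bWt α z ≤ C * 2 ^ (-(α + 2) * j) := by
  refine ⟨ENNReal.ofReal (2 ^ |α| * (2 * Real.pi) / (α + 1) * 4 ^ (α + 2)), ENNReal.ofReal_ne_top,
    fun j => ?_⟩
  have hsub : bAnn j ⊆ ball 0 1 ∩ ball 1 (4 * (1 / 2 : ℝ) ^ j) := by
    intro z hz
    refine ⟨bAnn_sub j hz, ?_⟩
    rw [mem_ball, dist_comm, dist_eq_norm]
    have : (0 : ℝ) < (1 / 2) ^ j := by positivity
    linarith [hz.2.2]
  refine (lintegral_mono_set hsub).trans ((aux_area hα (by positivity)).trans (le_of_eq ?_))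
  have : 0 < α + 1 := by linarith
  rw [Real.mul_rpow (by norm_num) (by positivity), ← mul_assoc, ENNReal.ofReal_mul (by positivity),
    aux_half_rpow]

lemma aux_ann {p α : ℝ} (hp : 1 < p) (hα : -1 < α) (hα2 : α < p - 2) :
    ∃ C : ℝ≥0∞, C ≠ ⊤ ∧ ∀ (c : ℕ → ℝ≥0∞) (g : ℂ → ℝ≥0∞),
      (∀ j, ∀ z ∈ bAnn j, g z ≤ ∑' k, c k * bKer j k) →
      ∫⁻ z in ball 0 1, bWt α z * g z ^ p ≤ C * ∑' k : ℕ, c k ^ p * 2 ^ (-(α + 2) * k) := by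
  obtain ⟨C1, hC1, h1⟩ := aux_ann_wt hα
  obtain ⟨C2, hC2, h2⟩ := aux_schur (ρ := α + 2) hp (by linarith) (by linarith)
  refine ⟨C1 * C2, ENNReal.mul_ne_top hC1 hC2, fun c g hg => ?_⟩
  have hcov : ball (0 : ℂ) 1 ⊆ ⋃ j, bAnn j := fun z hz => mem_iUnion.2 (bAnn_cover hz)
  calc ∫⁻ z in ball 0 1, bWt α z * g z ^ p ≤ ∫⁻ z in ⋃ j, bAnn j, bWt α z * g z ^ p :=
        lintegral_mono_set hcov
    _ ≤ ∑' j, ∫⁻ z in bAnn j, bWt α z * g z ^ p := lintegral_iUnion_le _ _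
    _ ≤ ∑' j : ℕ, C1 * (2 ^ (-(α + 2) * j) * (∑' k, c k * bKer j k) ^ p) := by
        refine ENNReal.tsum_le_tsum fun j => ?_
        calc ∫⁻ z in bAnn j, bWt α z * g z ^ p
            ≤ ∫⁻ z in bAnn j, bWt α z * (∑' k, c k * bKer j k) ^ p := by
              refine setLIntegral_mono' (bAnn_meas j) fun z hz => ?_
              exact mul_le_mul_right (ENNReal.rpow_le_rpow (hg j z hz) (by linarith)) _
          _ = (∫⁻ z in bAnn j, bWt α z) * (∑' k, c k * bKer j k) ^ p :=
              lintegral_mul_const _ (bWt_meas α)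
          _ ≤ C1 * 2 ^ (-(α + 2) * j) * (∑' k, c k * bKer j k) ^ p := by
              gcongr; exact h1 j
          _ = _ := by rw [mul_assoc]
    _ ≤ _ := by
        rw [ENNReal.tsum_mul_left, mul_assoc]
        exact mul_le_mul_right (h2 c) _

lemma aux_rpow_lower {α y : ℝ} (h1 : 1 / 4 ≤ y) (h2 : y ≤ 4) : 1 ≤ 4 ^ |α| * y ^ α := by
  have hy : 0 < y := by linarith
  rcases le_total 0 α with h | h
  · rw [abs_of_nonneg h, ← Real.mul_rpow (by norm_num) hy.le]
    exact Real.one_le_rpow (by linarith) h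
  · rw [abs_of_nonpos h, Real.rpow_neg (by norm_num), ← Real.inv_rpow (by norm_num),
      ← Real.mul_rpow (by norm_num) hy.le]
    exact Real.one_le_rpow_of_pos_of_le_one_of_nonpos (by positivity) (by linarith) h

lemma aux_point {p α : ℝ} (hp : 1 < p) : ∃ C : ℝ≥0∞, C ≠ ⊤ ∧ ∀ (f : ℂ → ℂ),
    DifferentiableOn ℂ f (ball 0 1) → ∀ (k : ℕ) (t : ℝ), (1 / 2 : ℝ) ^ (k + 1) < 1 - t →
    1 - t ≤ (1 / 2) ^ k →
    ‖f t‖ₑ ^ p ≤ C * 2 ^ ((α + 2) * k) * ((∫⁻ z in bAnn k, bWt α z * ‖f z‖ₑ ^ p) +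
      (∫⁻ z in bAnn (k + 1), bWt α z * ‖f z‖ₑ ^ p) +
      (∫⁻ z in bAnn (k + 2), bWt α z * ‖f z‖ₑ ^ p)) := by
  refine ⟨16 * ENNReal.ofReal (4 ^ |α|), ENNReal.mul_ne_top (by norm_num) ENNReal.ofReal_ne_top,
    fun f hf k t ht1 ht2 => ?_⟩
  set d : ℝ := (1 / 2 : ℝ) ^ k with hd
  have hd0 : 0 < d := by positivity
  have hd1 : d ≤ 1 := pow_le_one₀ (by norm_num) (by norm_num)
  have hdk : (1 / 2 : ℝ) ^ (k + 1) = d / 2 := by rw [pow_succ]; ring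
  have hdk2 : (1 / 2 : ℝ) ^ (k + 2) = d / 4 := by rw [pow_add]; ring
  rw [hdk] at ht1
  have ht0 : 0 ≤ t := by linarith
  have hz : ∀ z ∈ ball (t : ℂ) ((1 - t) / 2), ‖z‖ < t + (1 - t) / 2 ∧ (1 - t) / 2 < ‖1 - z‖ ∧
      ‖1 - z‖ < 3 * (1 - t) / 2 ∧ 1 - ‖z‖ ≤ ‖1 - z‖ := by
    intro z hz
    rw [mem_ball, dist_eq_norm] at hz
    have e1 : ‖(t : ℂ)‖ = t := by simp [abs_of_nonneg ht0]
    have e2 : ‖(1 : ℂ) - t‖ = 1 - t := by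
      rw [← Complex.ofReal_one, ← Complex.ofReal_sub, Complex.norm_real, Real.norm_of_nonneg (by linarith)]
    have a1 := norm_sub_norm_le z t
    have a2 := norm_sub_norm_le ((1 : ℂ) - t) (z - t)
    have a3 := norm_sub_le ((1 : ℂ) - t) (z - t)
    have a4 := norm_sub_norm_le (1 : ℂ) z
    rw [show (1 : ℂ) - t - (z - t) = 1 - z by ring] at a2 a3
    rw [norm_one] at a4
    refine ⟨by linarith, by linarith, by linarith, a4⟩
  have hball : ball (t : ℂ) ((1 - t) / 2) ⊆ ball 0 1 := fun z h => by
    have := (hz z h).1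
    simp; linarith
  have hsub : ball (t : ℂ) ((1 - t) / 2) ⊆ (bAnn k ∪ bAnn (k + 1)) ∪ bAnn (k + 2) := by
    intro z h
    obtain ⟨b1, b2, b3, -⟩ := hz z h
    simp only [bAnn, mem_union, mem_ofPred_eq, hdk, hdk2, ← hd]
    have c1 : ‖z‖ < 1 := by linarith
    rcases lt_or_ge d ‖1 - z‖ with h1 | h1
    · exact Or.inl (Or.inl ⟨c1, h1, by linarith⟩)
    · rcases lt_or_ge (d / 2) ‖1 - z‖ with h2 | h2
      · exact Or.inl (Or.inr ⟨c1, h2, by linarith⟩)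
      · exact Or.inr ⟨c1, by linarith, by linarith⟩
  have hw : ∀ z ∈ ball (t : ℂ) ((1 - t) / 2),
      1 ≤ ENNReal.ofReal (4 ^ |α|) * 2 ^ (α * k) * bWt α z := by
    intro z h
    obtain ⟨b1, b2, b3, b4⟩ := hz z h
    have hx1 : d / 4 ≤ 1 - ‖z‖ ^ 2 := by nlinarith [norm_nonneg z]
    have hx2 : 1 - ‖z‖ ^ 2 ≤ 4 * d := by nlinarith [norm_nonneg z]
    have hl := aux_rpow_lower (α := α) (y := (1 - ‖z‖ ^ 2) / d)
      (by rw [le_div_iff₀ hd0]; linarith) (by rw [div_le_iff₀ hd0]; linarith)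
    have e : (2 : ℝ≥0∞) ^ (α * k) = ENNReal.ofReal (d ^ (-α)) := by
      rw [hd, aux_half_rpow]; simp
    rw [e, bWt, ← ENNReal.ofReal_mul (by positivity), ← ENNReal.ofReal_mul (by positivity),
      ENNReal.one_le_ofReal]
    rw [Real.div_rpow (by linarith) hd0.le] at hl
    rw [Real.rpow_neg hd0.le]
    calc _ ≤ _ := hl
      _ = _ := by ring
  have hmv := aux_mvp hp (by linarith) (hf.mono hball)
  have hvol : ENNReal.ofReal (d ^ 2 / 16) ≤ volume (ball (t : ℂ) ((1 - t) / 2)) := by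
    rw [Complex.volume_ball, ← ENNReal.ofReal_pow (by linarith)]
    calc ENNReal.ofReal (d ^ 2 / 16) ≤ ENNReal.ofReal (((1 - t) / 2) ^ 2) * 1 := by
          rw [mul_one]; apply ENNReal.ofReal_le_ofReal; nlinarith
      _ ≤ _ := by
          gcongr
          rw [ENNReal.one_le_coe_iff]
          exact_mod_cast (by linarith [Real.pi_gt_three] : (1 : ℝ) ≤ Real.pi)
  have hone : (1 : ℝ≥0∞) = 16 * 2 ^ (2 * (k : ℝ)) * ENNReal.ofReal (d ^ 2 / 16) := by
    have : (16 : ℝ≥0∞) = ENNReal.ofReal 16 := by norm_num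
    rw [this, show (2 : ℝ≥0∞) ^ (2 * (k : ℝ)) = ENNReal.ofReal (d ^ (-2 : ℝ)) by
      rw [hd, aux_half_rpow]; simp, ← ENNReal.ofReal_mul (by norm_num),
      ← ENNReal.ofReal_mul (by positivity), ← ENNReal.ofReal_one]
    congr 1
    rw [Real.rpow_neg hd0.le, Real.rpow_two]
    field_simp
  calc ‖f t‖ₑ ^ p = 16 * 2 ^ (2 * (k : ℝ)) * (‖f t‖ₑ ^ p * ENNReal.ofReal (d ^ 2 / 16)) := by
        conv_lhs => rw [← one_mul (‖f t‖ₑ ^ p), hone]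
        ring
    _ ≤ 16 * 2 ^ (2 * (k : ℝ)) * ∫⁻ z in ball (t : ℂ) ((1 - t) / 2), ‖f z‖ₑ ^ p := by
        gcongr
        exact (mul_le_mul_right hvol _).trans hmv
    _ ≤ 16 * 2 ^ (2 * (k : ℝ)) * ∫⁻ z in ball (t : ℂ) ((1 - t) / 2),
        (ENNReal.ofReal (4 ^ |α|) * 2 ^ (α * k)) * (bWt α z * ‖f z‖ₑ ^ p) := by
        gcongr 1
        refine setLIntegral_mono' measurableSet_ball fun z h => ?_
        rw [← mul_assoc]
        calc ‖f z‖ₑ ^ p = 1 * ‖f z‖ₑ ^ p := (one_mul _).symm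
          _ ≤ _ := by gcongr; exact hw z h
    _ = 16 * ENNReal.ofReal (4 ^ |α|) * 2 ^ ((α + 2) * k) *
        ∫⁻ z in ball (t : ℂ) ((1 - t) / 2), bWt α z * ‖f z‖ₑ ^ p := by
        rw [lintegral_const_mul' _ _ (ENNReal.mul_ne_top ENNReal.ofReal_ne_top
          (by simp)),
          show (α + 2) * (k : ℝ) = α * k + 2 * k by ring, aux_two_add]
        ring
    _ ≤ _ := by
        gcongr
        refine (lintegral_mono_set hsub).trans ((lintegral_union_le _ _ _).trans ?_)
        gcongr
        exact lintegral_union_le _ _ _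

/-- Unnormalized `p`-th power of the Bergman norm. -/
noncomputable def bL (p α : ℝ) (f : ℂ → ℂ) : ℝ≥0∞ := ∫⁻ z in ball 0 1, bWt α z * ‖f z‖ₑ ^ p

/-- Normalizing constant. -/
noncomputable def bK (α : ℝ) : ℝ≥0∞ := ENNReal.ofReal (α + 1) * (ENNReal.ofReal Real.pi)⁻¹

lemma bK_ne_top (α : ℝ) : bK α ≠ ⊤ := by
  refine ENNReal.mul_ne_top ENNReal.ofReal_ne_top (ENNReal.inv_ne_top.2 ?_)
  simpa using Real.pi_pos

lemma bK_ne_zero {α : ℝ} (hα : -1 < α) : bK α ≠ 0 := by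
  refine mul_ne_zero ?_ (ENNReal.inv_ne_zero.2 ENNReal.ofReal_ne_top)
  have : 0 < α + 1 := by linarith
  simpa using this

lemma bergman_eq {p α : ℝ} (hp : 1 < p) (f : ℂ → ℂ) :
    bergmanNorm p α f = (bK α * bL p α f) ^ (1 / p) := by
  unfold bergmanNorm bK bL dA
  rw [Measure.restrict_smul, lintegral_smul_measure, smul_eq_mul, mul_assoc]
  congr 3
  refine setLIntegral_congr_fun measurableSet_ball fun z hz => ?_
  have hz : ‖z‖ < 1 := by simpa using hz
  have : 0 ≤ 1 - ‖z‖ ^ 2 := by nlinarith [norm_nonneg z]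
  simp only [bWt]
  rw [ENNReal.ofReal_mul (Real.rpow_nonneg this _),
    ← ENNReal.ofReal_rpow_of_nonneg (norm_nonneg _) (by linarith), ofReal_norm]

lemma bL_ne_top {p α : ℝ} (hp : 1 < p) (hα : -1 < α) {f : ℂ → ℂ} (h : bergmanNorm p α f < ⊤) :
    bL p α f ≠ ⊤ := by
  intro ht
  rw [bergman_eq hp, ht, ENNReal.mul_top (bK_ne_zero hα), ENNReal.top_rpow_of_pos (by positivity)] at h
  exact lt_irrefl _ h

lemma bergman_lt_top {p α : ℝ} (hp : 1 < p) {f : ℂ → ℂ} (h : bL p α f ≠ ⊤) :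
    bergmanNorm p α f < ⊤ := by
  rw [bergman_eq hp]
  exact ENNReal.rpow_lt_top_of_nonneg (by positivity) (ENNReal.mul_ne_top (bK_ne_top α) h)

lemma bergman_le {p α : ℝ} (hp : 1 < p) {f g : ℂ → ℂ} {C : ℝ≥0∞} (h : bL p α g ≤ C * bL p α f) :
    bergmanNorm p α g ≤ C ^ (1 / p) * bergmanNorm p α f := by
  rw [bergman_eq hp, bergman_eq hp, ← ENNReal.mul_rpow_of_nonneg _ _ (by positivity)]
  refine ENNReal.rpow_le_rpow ?_ (by positivity)
  rw [mul_left_comm]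
  exact mul_le_mul_right h _

lemma bL_le {p α : ℝ} (hp : 1 < p) (hα : -1 < α) {f g : ℂ → ℂ} {C : ℝ≥0∞}
    (h : bergmanNorm p α g ≤ C * bergmanNorm p α f) : bL p α g ≤ C ^ p * bL p α f := by
  have hp0 : 0 < p := by linarith
  rw [bergman_eq hp, bergman_eq hp] at h
  have := ENNReal.rpow_le_rpow h hp0.le
  rw [ENNReal.mul_rpow_of_nonneg _ _ hp0.le, ← ENNReal.rpow_mul, ← ENNReal.rpow_mul,
    one_div_mul_cancel hp0.ne', ENNReal.rpow_one, ENNReal.rpow_one, mul_left_comm] at this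
  exact (ENNReal.mul_le_mul_iff_right (bK_ne_zero hα) (bK_ne_top α)).1 this

/-- Sum of the masses over three consecutive annuli. -/
noncomputable def bW (p α : ℝ) (f : ℂ → ℂ) (k : ℕ) : ℝ≥0∞ :=
  (∫⁻ z in bAnn k, bWt α z * ‖f z‖ₑ ^ p) + (∫⁻ z in bAnn (k + 1), bWt α z * ‖f z‖ₑ ^ p) +
      (∫⁻ z in bAnn (k + 2), bWt α z * ‖f z‖ₑ ^ p)

lemma bW_sum (p α : ℝ) (f : ℂ → ℂ) : ∑' k, bW p α f k ≤ 3 * bL p α f := by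
  set w : ℕ → ℝ≥0∞ := fun k => ∫⁻ z in bAnn k, bWt α z * ‖f z‖ₑ ^ p
  have h0 : ∑' k, w k ≤ bL p α f := by
    rw [← lintegral_iUnion bAnn_meas bAnn_disj]
    exact lintegral_mono_set (iUnion_subset bAnn_sub)
  have hs : ∀ m : ℕ, ∑' k, w (k + m) ≤ bL p α f := fun m =>
    (ENNReal.tsum_comp_le_tsum_of_injective (add_left_injective m) w).trans h0
  have : ∑' k, bW p α f k = ∑' k, w k + ∑' k, w (k + 1) + ∑' k, w (k + 2) := by
    rw [← ENNReal.tsum_add, ← ENNReal.tsum_add]; rfl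
  rw [this]
  calc _ ≤ bL p α f + bL p α f + bL p α f := add_le_add (add_le_add h0 (hs 1)) (hs 2)
    _ = _ := by ring

lemma aux_ker {j k : ℕ} {z : ℂ} {t : ℝ} (hz : z ∈ bAnn j) (ht1 : (1 / 2 : ℝ) ^ (k + 1) < 1 - t)
    (ht2 : 1 - t ≤ (1 / 2) ^ k) : ‖(1 - (t : ℂ) * z)⁻¹‖ₑ ≤ 2 * 2 ^ (k : ℝ) * bKer j k := by
  have hk1 : (1 / 2 : ℝ) ^ k ≤ 1 := pow_le_one₀ (by norm_num) (by norm_num)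
  have ht0 : 0 ≤ t := by linarith
  have htp : 0 < 1 - t := lt_trans (by positivity) ht1
  have e1 : ‖(t : ℂ)‖ = t := by simp [abs_of_nonneg ht0]
  have h1 : 1 - t ≤ ‖1 - (t : ℂ) * z‖ := by
    have := norm_sub_norm_le (1 : ℂ) (t * z)
    rw [norm_one, norm_mul, e1] at this
    nlinarith [hz.1]
  have h2 : ‖1 - z‖ / 2 ≤ ‖1 - (t : ℂ) * z‖ := by
    have h3 := norm_sub_le (1 - (t : ℂ) * z) ((1 - t : ℝ) * z)
    rw [norm_mul, Complex.norm_real, Real.norm_of_nonneg htp.le] at h3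
    rw [show 1 - (t : ℂ) * z - (1 - t : ℝ) * z = 1 - z by push_cast; ring] at h3
    nlinarith [hz.1]
  have hne : (1 - (t : ℂ) * z) ≠ 0 := norm_pos_iff.1 (by linarith)
  have main : ∀ n : ℕ, (1 / 2 : ℝ) ^ (n + 1) ≤ ‖1 - (t : ℂ) * z‖ →
      ‖(1 - (t : ℂ) * z)⁻¹‖ₑ ≤ 2 ^ ((n : ℝ) + 1) := by
    intro n hn
    have := ENNReal.ofReal_le_ofReal hn
    rw [aux_half, ofReal_norm] at this
    rw [enorm_inv hne, ENNReal.inv_le_iff_inv_le, ← ENNReal.rpow_neg]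
    push_cast at this
    exact this
  have e3 : 2 * 2 ^ (k : ℝ) * bKer j k = min (2 ^ ((k : ℝ) + 1)) (2 ^ ((j : ℝ) + 1)) := by
    have : (2 : ℝ≥0∞) * 2 ^ (k : ℝ) = 2 ^ ((k : ℝ) + 1) := by
      rw [aux_two_add, ENNReal.rpow_one, mul_comm]
    rw [this, bKer, mul_min, mul_one, ← aux_two_add]
    congr 2; ring
  rw [e3]
  refine le_min (main k (by linarith)) (main j ?_)
  have := hz.2.1
  rw [pow_succ]; linarith

lemma aux_Icover {t : ℝ} (ht : t ∈ Ico (0 : ℝ) 1) :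
    ∃ k : ℕ, (1 / 2 : ℝ) ^ (k + 1) < 1 - t ∧ 1 - t ≤ (1 / 2) ^ k :=
  exists_nat_pow_near_of_lt_one (by linarith [ht.2]) (by linarith [ht.1]) (by norm_num) (by norm_num)

lemma aux_pt {p α : ℝ} (hp : 1 < p) : ∃ C : ℝ≥0∞, C ≠ ⊤ ∧ ∀ (f : ℂ → ℂ),
    DifferentiableOn ℂ f (ball 0 1) → ∀ (k : ℕ) (t : ℝ), (1 / 2 : ℝ) ^ (k + 1) < 1 - t →
    1 - t ≤ (1 / 2) ^ k → ‖f t‖ₑ ≤ (C * 2 ^ ((α + 2) * k) * bW p α f k) ^ (1 / p) := by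
  obtain ⟨C, hC, h⟩ := aux_point (α := α) hp
  refine ⟨C, hC, fun f hf k t h1 h2 => ?_⟩
  rw [one_div, ENNReal.le_rpow_inv_iff (by linarith)]
  exact h f hf k t h1 h2

lemma aux_sm {f : ℂ → ℂ} (hf : DifferentiableOn ℂ f (ball 0 1)) {μ : Measure ℝ}
    (hsupp : μ (Ico (0 : ℝ) 1)ᶜ = 0) : AEStronglyMeasurable (fun t : ℝ => f t) μ := by
  have h1 : μ.restrict (Ico 0 1) = μ := Measure.restrict_eq_self_of_ae_mem (by
    rw [ae_iff]; exact hsupp)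
  rw [← h1]
  refine ContinuousOn.aestronglyMeasurable ?_ measurableSet_Ico
  refine hf.continuousOn.comp Complex.continuous_ofReal.continuousOn fun t ht => ?_
  simp [abs_of_nonneg ht.1, ht.2]

lemma aux_forward {p α : ℝ} (hp : 1 < p) (hα : -1 < α) (hα2 : α < p - 2) {μ : Measure ℝ}
    (hsupp : μ (Ico (0 : ℝ) 1)ᶜ = 0) {D : ℝ≥0∞} (hD : D ≠ ⊤)
    (hμ : ∀ k : ℕ, μ (Ico (1 - (1 / 2 : ℝ) ^ k) 1) ≤ D * 2 ^ (-(k : ℝ))) :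
    ∃ C : ℝ≥0∞, C ≠ ⊤ ∧ ∀ f : ℂ → ℂ, DifferentiableOn ℂ f (ball 0 1) → bL p α f ≠ ⊤ →
      (∀ z ∈ ball (0 : ℂ) 1, ∫⁻ t, ‖f t / (1 - (t : ℂ) * z)‖ₑ ∂μ ≠ ⊤) ∧
      bL p α (Imu μ f) ≤ C * bL p α f := by
  have hp0 : 0 < p := by linarith
  obtain ⟨C1, hC1, h1⟩ := aux_schur (ρ := α + 2) hp (by linarith) (by linarith)
  obtain ⟨C2, hC2, h2⟩ := aux_ann hp hα hα2
  obtain ⟨C3, hC3, h3⟩ := aux_pt (α := α) hp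
  refine ⟨C2 * ((2 * D) ^ p * C3 * 3), ?_, fun f hf hL => ?_⟩
  · exact ENNReal.mul_ne_top hC2 (ENNReal.mul_ne_top (ENNReal.mul_ne_top
      (ENNReal.rpow_ne_top_of_nonneg hp0.le (ENNReal.mul_ne_top (by norm_num) hD)) hC3) (by norm_num))
  set a : ℕ → ℝ≥0∞ := fun k => (C3 * 2 ^ ((α + 2) * k) * bW p α f k) ^ (1 / p) with ha
  set c : ℕ → ℝ≥0∞ := fun k => 2 * D * a k with hc
  have hsum : ∑' k : ℕ, c k ^ p * 2 ^ (-(α + 2) * k) ≤ (2 * D) ^ p * C3 * 3 * bL p α f := by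
    have e : ∀ k : ℕ, c k ^ p * 2 ^ (-(α + 2) * k) = (2 * D) ^ p * C3 * bW p α f k := by
      intro k
      simp only [hc, ha]
      rw [ENNReal.mul_rpow_of_nonneg _ _ hp0.le, ← ENNReal.rpow_mul, one_div_mul_cancel hp0.ne',
        ENNReal.rpow_one]
      have : (2 : ℝ≥0∞) ^ ((α + 2) * k) * 2 ^ (-(α + 2) * k) = 1 := by
        rw [← aux_two_add]; ring_nf; simp
      calc _ = (2 * D) ^ p * C3 * bW p α f k *
            ((2 : ℝ≥0∞) ^ ((α + 2) * k) * 2 ^ (-(α + 2) * k)) := by ring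
        _ = _ := by rw [this, mul_one]
    simp_rw [e]
    rw [ENNReal.tsum_mul_left, mul_assoc _ 3]
    exact mul_le_mul_right (bW_sum p α f) _
  have hsum_top : ∑' k : ℕ, c k ^ p * 2 ^ (-(α + 2) * k) ≠ ⊤ := by
    refine ne_top_of_le_ne_top ?_ hsum
    exact ENNReal.mul_ne_top (ENNReal.mul_ne_top (ENNReal.mul_ne_top
      (ENNReal.rpow_ne_top_of_nonneg hp0.le (ENNReal.mul_ne_top (by norm_num) hD)) hC3)
      (by norm_num)) hL
  set I : ℕ → Set ℝ := fun k => {t | (1 / 2 : ℝ) ^ (k + 1) < 1 - t ∧ 1 - t ≤ (1 / 2) ^ k} with hI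
  have hIm : ∀ k, MeasurableSet (I k) := by
    intro k
    have hm : Measurable (fun t : ℝ => 1 - t) := by fun_prop
    have m1 : MeasurableSet {t : ℝ | (1 / 2 : ℝ) ^ (k + 1) < 1 - t} :=
      measurableSet_lt measurable_const hm
    have m2 : MeasurableSet {t : ℝ | 1 - t ≤ (1 / 2 : ℝ) ^ k} :=
      measurableSet_le hm measurable_const
    exact m1.inter m2
  have hIμ : ∀ k, μ (I k) ≤ D * 2 ^ (-(k : ℝ)) := by
    intro k
    refine (measure_mono ?_).trans (hμ k)
    rintro t ⟨t1, t2⟩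
    have : (0 : ℝ) < (1 / 2) ^ (k + 1) := by positivity
    exact ⟨by linarith, by linarith⟩
  have hbound : ∀ j, ∀ z ∈ bAnn j,
      ∫⁻ t, ‖f t / (1 - (t : ℂ) * z)‖ₑ ∂μ ≤ ∑' k, c k * bKer j k := by
    intro j z hz
    have hr : μ.restrict (Ico 0 1) = μ := Measure.restrict_eq_self_of_ae_mem (by
      rw [ae_iff]; exact hsupp)
    have hcov : Ico (0 : ℝ) 1 ⊆ ⋃ k, I k := fun t ht => mem_iUnion.2 (aux_Icover ht)
    calc ∫⁻ t, ‖f t / (1 - (t : ℂ) * z)‖ₑ ∂μ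
        = ∫⁻ t in Ico 0 1, ‖f t / (1 - (t : ℂ) * z)‖ₑ ∂μ := by rw [hr]
      _ ≤ ∫⁻ t in ⋃ k, I k, ‖f t / (1 - (t : ℂ) * z)‖ₑ ∂μ := lintegral_mono_set hcov
      _ ≤ ∑' k, ∫⁻ t in I k, ‖f t / (1 - (t : ℂ) * z)‖ₑ ∂μ := lintegral_iUnion_le _ _
      _ ≤ ∑' k, c k * bKer j k := by
          refine ENNReal.tsum_le_tsum fun k => ?_
          calc ∫⁻ t in I k, ‖f t / (1 - (t : ℂ) * z)‖ₑ ∂μ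
              ≤ ∫⁻ t in I k, a k * (2 * 2 ^ (k : ℝ) * bKer j k) ∂μ := by
                refine setLIntegral_mono' (hIm k) fun t ht => ?_
                rw [div_eq_mul_inv, enorm_mul]
                exact mul_le_mul' (h3 f hf k t ht.1 ht.2) (aux_ker hz ht.1 ht.2)
            _ = a k * (2 * 2 ^ (k : ℝ) * bKer j k) * μ (I k) := setLIntegral_const _ _
            _ ≤ a k * (2 * 2 ^ (k : ℝ) * bKer j k) * (D * 2 ^ (-(k : ℝ))) :=
                mul_le_mul_right (hIμ k) _
            _ = 2 * D * a k * bKer j k * (2 ^ (k : ℝ) * 2 ^ (-(k : ℝ))) := by ring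
            _ = _ := by rw [← aux_two_add]; simp [hc]
  refine ⟨fun z hz => ?_, ?_⟩
  · obtain ⟨j, hj⟩ := bAnn_cover hz
    refine ne_top_of_le_ne_top ?_ (hbound j z hj)
    intro htop
    have := (ENNReal.le_tsum j).trans (h1 c)
    rw [htop, ENNReal.top_rpow_of_pos hp0, ENNReal.mul_top
      (ENNReal.rpow_pos (by norm_num) (by norm_num)).ne'] at this
    exact ENNReal.mul_ne_top hC1 hsum_top (top_le_iff.1 this)
  · calc bL p α (Imu μ f) ≤ ∫⁻ z in ball 0 1, bWt α z * (∫⁻ t, ‖f t / (1 - (t : ℂ) * z)‖ₑ ∂μ) ^ p := by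
          refine lintegral_mono fun z => ?_
          exact mul_le_mul_right (ENNReal.rpow_le_rpow (enorm_integral_le_lintegral_enorm _) hp0.le) _
      _ ≤ _ := h2 c _ hbound
      _ ≤ _ := by rw [mul_assoc]; exact mul_le_mul_right hsum _

lemma aux_diff {f : ℂ → ℂ} (hf : DifferentiableOn ℂ f (ball 0 1)) {μ : Measure ℝ}
    (hsupp : μ (Ico (0 : ℝ) 1)ᶜ = 0)
    (hint : ∀ z ∈ ball (0 : ℂ) 1, Integrable (fun t : ℝ => f (t : ℂ) / (1 - (t : ℂ) * z)) μ) :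
    DifferentiableOn ℂ (Imu μ f) (ball 0 1) := by
  intro z0 hz0
  have hz0' : ‖z0‖ < 1 := by simpa using hz0
  set ε := (1 - ‖z0‖) / 2 with hε
  have hε0 : 0 < ε := by linarith
  have hif : Integrable (fun t : ℝ => f t) μ := by simpa using hint 0 (by simp)
  have hae : ∀ᵐ t ∂μ, t ∈ Ico (0 : ℝ) 1 := by rw [ae_iff]; exact hsupp
  have hlow : ∀ t ∈ Ico (0 : ℝ) 1, ∀ z ∈ ball z0 ε, ε ≤ ‖1 - (t : ℂ) * z‖ := by
    intro t ht z hz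
    rw [mem_ball, dist_eq_norm] at hz
    have h1 := norm_sub_norm_le z z0
    have h2 := norm_sub_norm_le (1 : ℂ) (t * z)
    rw [norm_one, norm_mul, Complex.norm_real, Real.norm_of_nonneg ht.1] at h2
    nlinarith [norm_nonneg z, ht.1, ht.2]
  have hsub : ball z0 ε ⊆ ball 0 1 := by
    intro z hz
    rw [mem_ball, dist_eq_norm] at hz
    have h1 := norm_sub_norm_le z z0
    simp; linarith
  have key := hasDerivAt_integral_of_dominated_loc_of_deriv_le (𝕜 := ℂ) (μ := μ)
    (F := fun z t => f (t : ℂ) / (1 - (t : ℂ) * z))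
    (F' := fun z t => f (t : ℂ) * (t * ((1 - (t : ℂ) * z) ^ 2)⁻¹)) (x₀ := z0) (s := ball z0 ε)
    (bound := fun t => ‖f t‖ * (ε ^ 2)⁻¹)
    (ball_mem_nhds z0 hε0)
    (by filter_upwards [ball_mem_nhds z0 hε0] with z hz using (hint z (hsub hz)).1)
    (hint z0 hz0)
    (by
      refine (aux_sm hf hsupp).mul (Measurable.aestronglyMeasurable ?_)
      fun_prop)
    (by
      filter_upwards [hae] with t ht z hz
      have hl := hlow t ht z hz
      rw [norm_mul, norm_mul, norm_inv, norm_pow, Complex.norm_real, Real.norm_of_nonneg ht.1]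
      have h3 : (‖1 - (t : ℂ) * z‖ ^ 2)⁻¹ ≤ (ε ^ 2)⁻¹ := by gcongr
      have h4 : 0 ≤ (‖1 - (t : ℂ) * z‖ ^ 2)⁻¹ := by positivity
      refine mul_le_mul_of_nonneg_left ?_ (norm_nonneg _)
      nlinarith [ht.2])
    (hif.norm.mul_const _)
    (by
      filter_upwards [hae] with t ht z hz
      have hl := hlow t ht z hz
      have hne : (1 - (t : ℂ) * z) ≠ 0 := norm_pos_iff.1 (by linarith)
      have hd : HasDerivAt (fun z : ℂ => 1 - (t : ℂ) * z) (-t) z := by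
        simpa using ((hasDerivAt_id z).const_mul (t : ℂ)).const_sub 1
      have := (hd.inv hne).const_mul (f t)
      have h5 := this.congr_deriv (show _ = f (t : ℂ) * (t * ((1 - (t : ℂ) * z) ^ 2)⁻¹) by
        rw [neg_neg, div_eq_mul_inv])
      simp only [div_eq_mul_inv]
      exact h5)
  exact key.2.differentiableAt.differentiableWithinAt

lemma aux_back {p α : ℝ} (hp : 1 < p) (hα1 : -1 < α) (hα2 : α < p - 2) {μ : Measure ℝ}
    [IsFiniteMeasure μ] {C : ℝ}
    (h : ∀ f : ℂ → ℂ, DifferentiableOn ℂ f (ball (0 : ℂ) 1) → bergmanNorm p α f < ⊤ →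
      (∀ z ∈ ball (0 : ℂ) 1, Integrable (fun t : ℝ => f (t : ℂ) / (1 - (t : ℂ) * z)) μ) ∧
      DifferentiableOn ℂ (Imu μ f) (ball (0 : ℂ) 1) ∧
      bergmanNorm p α (Imu μ f) ≤ ENNReal.ofReal C * bergmanNorm p α f) :
    ∃ C > 0, ∀ t ∈ Ico (0 : ℝ) 1, (μ (Ico t 1)).toReal ≤ C * (1 - t) := by
  have hp0 : 0 < p := by linarith
  obtain ⟨C1, hC1, h1⟩ := aux_ann hp hα1 hα2
  obtain ⟨C2, hC2, h2⟩ := aux_pt (α := α) hp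
  set M : ℝ≥0∞ := (C2 * (3 * (ENNReal.ofReal C ^ p * C1))) ^ (1 / p) * 2 with hM
  have hMt : M ≠ ⊤ := by
    refine ENNReal.mul_ne_top (ENNReal.rpow_ne_top_of_nonneg (by positivity) ?_) (by norm_num)
    exact ENNReal.mul_ne_top hC2 (ENNReal.mul_ne_top (by norm_num) (ENNReal.mul_ne_top
      (ENNReal.rpow_ne_top_of_nonneg hp0.le ENNReal.ofReal_ne_top) hC1))
  refine ⟨4 * M.toReal + 1, by positivity, fun a ha => ?_⟩
  obtain ⟨k, hk1, hk2⟩ := aux_Icover ha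
  have ha1 : 0 < 1 - a := by linarith [ha.2]
  set f : ℂ → ℂ := fun z => (1 - (a : ℂ) * z)⁻¹ with hf
  have hne : ∀ z ∈ ball (0 : ℂ) 1, (1 - (a : ℂ) * z) ≠ 0 := by
    intro z hz
    have hz : ‖z‖ < 1 := by simpa using hz
    have h2 := norm_sub_norm_le (1 : ℂ) (a * z)
    rw [norm_one, norm_mul, Complex.norm_real, Real.norm_of_nonneg ha.1] at h2
    apply norm_pos_iff.1
    nlinarith [norm_nonneg z, ha.1, ha.2]
  have hfd : DifferentiableOn ℂ f (ball 0 1) := by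
    apply DifferentiableOn.inv (by fun_prop) hne
  have hbf : bL p α f ≤ C1 * ((2 * 2 ^ (k : ℝ)) ^ p * 2 ^ (-(α + 2) * k)) := by
    have := h1 (Pi.single k (2 * 2 ^ (k : ℝ))) (fun z => ‖f z‖ₑ) (by
      intro j z hz
      rw [tsum_eq_single k (by intro i hi; simp [Pi.single_eq_of_ne hi])]
      rw [Pi.single_eq_same]
      exact aux_ker hz hk1 hk2)
    rw [tsum_eq_single k (by intro i hi; simp [Pi.single_eq_of_ne hi, hp0]),
      Pi.single_eq_same] at this
    exact this
  have hbt : bL p α f ≠ ⊤ := by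
    refine ne_top_of_le_ne_top (ENNReal.mul_ne_top hC1 (ENNReal.mul_ne_top
      (ENNReal.rpow_ne_top_of_nonneg hp0.le (ENNReal.mul_ne_top (by norm_num) (by simp)))
      (by simp))) hbf
  obtain ⟨hint, hId, hIn⟩ := h f hfd (bergman_lt_top hp hbt)
  have hIL := bL_le hp hα1 hIn
  have hW : bW p α (Imu μ f) k ≤ 3 * (ENNReal.ofReal C ^ p *
      (C1 * ((2 * 2 ^ (k : ℝ)) ^ p * 2 ^ (-(α + 2) * k)))) := by
    refine (ENNReal.le_tsum k).trans ((bW_sum p α _).trans (mul_le_mul_right ?_ _))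
    exact hIL.trans (mul_le_mul_right hbf _)
  have hup : ‖Imu μ f a‖ₑ ≤ M * 2 ^ (k : ℝ) := by
    refine (h2 _ hId k a hk1 hk2).trans ?_
    calc (C2 * 2 ^ ((α + 2) * k) * bW p α (Imu μ f) k) ^ (1 / p)
        ≤ (C2 * 2 ^ ((α + 2) * k) * (3 * (ENNReal.ofReal C ^ p *
          (C1 * ((2 * 2 ^ (k : ℝ)) ^ p * 2 ^ (-(α + 2) * k)))))) ^ (1 / p) :=
          ENNReal.rpow_le_rpow (mul_le_mul_right hW _) (by positivity)
      _ = (C2 * (3 * (ENNReal.ofReal C ^ p * C1)) * (2 * 2 ^ (k : ℝ)) ^ p) ^ (1 / p) := by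
          have : (2 : ℝ≥0∞) ^ ((α + 2) * k) * 2 ^ (-(α + 2) * k) = 1 := by
            rw [← aux_two_add]; ring_nf; simp
          congr 1
          calc _ = C2 * (3 * (ENNReal.ofReal C ^ p * C1)) * (2 * 2 ^ (k : ℝ)) ^ p *
                ((2 : ℝ≥0∞) ^ ((α + 2) * k) * 2 ^ (-(α + 2) * k)) := by ring
            _ = _ := by rw [this, mul_one]
      _ = _ := by
          rw [ENNReal.mul_rpow_of_nonneg _ _ (by positivity), ← ENNReal.rpow_mul,
            mul_one_div_cancel hp0.ne', ENNReal.rpow_one, hM, mul_assoc]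
  -- the lower bound
  have haball : (a : ℂ) ∈ ball (0 : ℂ) 1 := by simp [abs_of_nonneg ha.1, ha.2]
  have hia := hint a haball
  have hfe : (fun t : ℝ => f (t : ℂ) / (1 - (t : ℂ) * a)) =
      fun t : ℝ => ((((1 - a * t) ^ 2)⁻¹ : ℝ) : ℂ) := by
    funext t
    simp only [hf]
    push_cast
    rw [div_eq_mul_inv, ← mul_inv, mul_comm (t : ℂ), sq]
  rw [hfe] at hia
  have hir : Integrable (fun t : ℝ => ((1 - a * t) ^ 2)⁻¹) μ := by
    have := hia.re
    exact this.congr (ae_of_all _ fun t => Complex.ofReal_re _)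
  have hIa : Imu μ f a = ((∫ t : ℝ, ((1 - a * t) ^ 2)⁻¹ ∂μ : ℝ) : ℂ) := by
    rw [Imu, hfe]; exact integral_ofReal
  have hlow : ENNReal.ofReal ((4 * (1 - a) ^ 2)⁻¹) * μ (Ico a 1) ≤ ‖Imu μ f a‖ₑ := by
    have hnn : 0 ≤ ∫ t : ℝ, ((1 - a * t) ^ 2)⁻¹ ∂μ := integral_nonneg fun t => by positivity
    rw [hIa, ← ofReal_norm, Complex.norm_real, Real.norm_of_nonneg hnn,
      ofReal_integral_eq_lintegral_ofReal hir (ae_of_all _ fun t => by positivity),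
      ← setLIntegral_const]
    refine (setLIntegral_mono' measurableSet_Ico fun t ht => ?_).trans (setLIntegral_le_lintegral (Ico a 1) _)
    apply ENNReal.ofReal_le_ofReal
    have ht' : 0 < 1 - a * t := by nlinarith [ht.1, ht.2, ha.1, ha.2]
    have ht2 : 1 - a * t ≤ 2 * (1 - a) := by nlinarith [ht.1, ht.2, ha.1, ha.2]
    gcongr
    nlinarith
  have h2k : (2 : ℝ≥0∞) ^ (k : ℝ) ≤ ENNReal.ofReal ((1 - a)⁻¹) := by
    have e : (2 : ℝ≥0∞) ^ (k : ℝ) = ENNReal.ofReal (2 ^ k) := by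
      rw [ENNReal.rpow_natCast, ENNReal.ofReal_pow (by norm_num)]; norm_num
    rw [e]
    apply ENNReal.ofReal_le_ofReal
    rw [le_inv_comm₀ (by positivity) ha1]
    simpa using hk2
  have hfin := hlow.trans (hup.trans (mul_le_mul_right h2k _))
  have hreal := ENNReal.toReal_mono (ENNReal.mul_ne_top hMt ENNReal.ofReal_ne_top) hfin
  rw [ENNReal.toReal_mul, ENNReal.toReal_mul, ENNReal.toReal_ofReal (by positivity),
    ENNReal.toReal_ofReal (by positivity), inv_mul_le_iff₀ (by positivity)] at hreal
  calc (μ (Ico a 1)).toReal ≤ 4 * (1 - a) ^ 2 * (M.toReal * (1 - a)⁻¹) := hreal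
    _ = 4 * M.toReal * (1 - a) := by field_simp
    _ ≤ _ := by nlinarith

/-- For `p > 1` and `-1 < α < p-2`, the measure `μ` is a Carleson measure
if and only if `I_μ` is well defined and bounded from `A^p_α` into itself. -/
theorem Hmu_bounded_Apa_iff_Carleson (p α : ℝ) (hp : 1 < p)
    (hα1 : -1 < α) (hα2 : α < p - 2)
    (μ : Measure ℝ) [IsFiniteMeasure μ] (hsupp : μ (Ico (0 : ℝ) 1)ᶜ = 0) :
    (∃ C > 0, ∀ t ∈ Ico (0 : ℝ) 1, (μ (Ico t 1)).toReal ≤ C * (1 - t)) ↔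
    (∃ C > 0, ∀ f : ℂ → ℂ, DifferentiableOn ℂ f (ball (0 : ℂ) 1) → bergmanNorm p α f < ⊤ →
      (∀ z ∈ ball (0 : ℂ) 1, Integrable (fun t : ℝ => f (t : ℂ) / (1 - (t : ℂ) * z)) μ) ∧
      DifferentiableOn ℂ (Imu μ f) (ball (0 : ℂ) 1) ∧
      bergmanNorm p α (Imu μ f) ≤ ENNReal.ofReal C * bergmanNorm p α f) := by
  constructor
  · rintro ⟨C, hC, h⟩
    have hμ : ∀ k : ℕ, μ (Ico (1 - (1 / 2 : ℝ) ^ k) 1) ≤ ENNReal.ofReal C * 2 ^ (-(k : ℝ)) := by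
      intro k
      have h1 : (1 / 2 : ℝ) ^ k ≤ 1 := pow_le_one₀ (by norm_num) (by norm_num)
      have h2 : (0 : ℝ) < (1 / 2) ^ k := by positivity
      have := h (1 - (1 / 2 : ℝ) ^ k) ⟨by linarith, by linarith⟩
      rw [sub_sub_cancel] at this
      rw [← aux_half, ← ENNReal.ofReal_mul hC.le]
      exact (ENNReal.le_ofReal_iff_toReal_le (measure_ne_top _ _) (by positivity)).2 this
    obtain ⟨D, hD, hf⟩ := aux_forward hp hα1 hα2 hsupp ENNReal.ofReal_ne_top hμ
    refine ⟨(D ^ (1 / p)).toReal + 1, by positivity, fun f hfd hfn => ?_⟩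
    obtain ⟨h1, h2⟩ := hf f hfd (bL_ne_top hp hα1 hfn)
    have hint : ∀ z ∈ ball (0 : ℂ) 1,
        Integrable (fun t : ℝ => f (t : ℂ) / (1 - (t : ℂ) * z)) μ := by
      intro z hz
      refine ⟨?_, lt_top_iff_ne_top.2 (h1 z hz)⟩
      simp_rw [div_eq_mul_inv]
      refine (aux_sm hfd hsupp).mul (Measurable.aestronglyMeasurable ?_)
      fun_prop
    refine ⟨hint, aux_diff hfd hsupp hint, ?_⟩
    refine (bergman_le hp h2).trans (mul_le_mul_left ?_ _)
    have : D ^ (1 / p) ≠ ⊤ := ENNReal.rpow_ne_top_of_nonneg (by positivity) hD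
    rw [ENNReal.le_ofReal_iff_toReal_le this (by positivity)]
    linarith
  · rintro ⟨C, hC, h⟩
    exact aux_back hp hα1 hα2 h
end

section
/- Let 1 < p < ∞ and α > −1, and let f(z) = ∑_{n=0}^∞ a_n z^n be analytic in the unit disc 𝔻, where {a_n} is a decreasing sequence of non-negative real numbers. Then f belongs to the weighted Bergman space A^p_α if and only if ∑_{n=1}^∞ n^{p−3−α} a_n^p < ∞. Moreover there exist constants c, C > 0 (depending only on p and α) such that c (a_0^p + ∑_{n=1}^∞ n^{p−3−α} a_n^p) ≤ ‖f‖_{A^p_α}^p ≤ C (a_0^p + ∑_{n=1}^∞ n^{p−3−α} a_n^p). -/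
open MeasureTheory Set Metric Filter Asymptotics
open scoped ENNReal

lemma hasSum_diff {𝕜 : Type*} [NormedField 𝕜] (b : ℕ → 𝕜) (z w T : 𝕜)
    (h : HasSum (fun n : ℕ => b n * z ^ n * w) T) :
    HasSum (fun n : ℕ => (b n - b (n + 1)) * z ^ (n + 1) * w) (b 0 * w - (1 - z) * T) := by
  have h1 := (hasSum_nat_add_iff' 1).2 h
  have h2 := (h.mul_left z).sub h1
  have e : z * T - (T - ∑ i ∈ Finset.range 1, b i * z ^ i * w) = b 0 * w - (1 - z) * T := by
    simp; ring
  rw [e] at h2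
  exact h2.congr_fun fun n => by ring

lemma abel_bound (b : ℕ → ℝ) (hb : ∀ n, 0 ≤ b n) (hd : ∀ n, b (n + 1) ≤ b n) (z w T : ℂ)
    (hz : ‖z‖ ≤ 1) (hw : ‖w‖ ≤ 1)
    (h : HasSum (fun n : ℕ => (b n : ℂ) * z ^ n * w) T) : ‖(1 - z) * T‖ ≤ 2 * b 0 := by
  have h1 := (hasSum_diff (fun n => (b n : ℂ)) z w T h).tendsto_sum_nat
  have h2 : ‖(b 0 : ℂ) * w - (1 - z) * T‖ ≤ b 0 := by
    refine le_of_tendsto h1.norm (Eventually.of_forall fun m => ?_)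
    refine (norm_sum_le _ _).trans ?_
    calc ∑ n ∈ Finset.range m, ‖((b n : ℂ) - (b (n + 1) : ℂ)) * z ^ (n + 1) * w‖
        ≤ ∑ n ∈ Finset.range m, (b n - b (n + 1)) := by
          refine Finset.sum_le_sum fun n _ => ?_
          have h3 : ‖(b n : ℂ) - (b (n + 1) : ℂ)‖ = b n - b (n + 1) := by
            rw [← Complex.ofReal_sub, Complex.norm_real, Real.norm_of_nonneg (by linarith [hd n])]
          rw [norm_mul, norm_mul, h3, norm_pow]
          have h4 : ‖z‖ ^ (n + 1) ≤ 1 := pow_le_one₀ (norm_nonneg _) hz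
          have h5 : 0 ≤ b n - b (n + 1) := by linarith [hd n]
          calc _ ≤ (b n - b (n + 1)) * 1 * 1 := by gcongr
            _ = _ := by ring
      _ = b 0 - b m := Finset.sum_range_sub' b m
      _ ≤ b 0 := by linarith [hb m]
  have h3 : ‖(b 0 : ℂ) * w‖ ≤ b 0 := by
    rw [norm_mul, Complex.norm_real, Real.norm_of_nonneg (hb 0)]
    exact mul_le_of_le_one_right (hb 0) hw
  calc ‖(1 - z) * T‖ = ‖(b 0 : ℂ) * w - ((b 0 : ℂ) * w - (1 - z) * T)‖ := by congr 1; ring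
    _ ≤ _ := (norm_sub_le _ _).trans (by linarith)

lemma anti_real (a : ℕ → ℝ) (hd : ∀ n, a (n + 1) ≤ a n) (x y X Y : ℝ)
    (hx : 0 ≤ x) (hxy : x ≤ y) (hX : HasSum (fun n : ℕ => a n * x ^ n) X)
    (hY : HasSum (fun n : ℕ => a n * y ^ n) Y) : (1 - y) * Y ≤ (1 - x) * X := by
  have h1 := hasSum_diff a x 1 X (by simpa using hX)
  have h2 := hasSum_diff a y 1 Y (by simpa using hY)
  have := hasSum_le (fun n => ?_) h1 h2
  · linarith
  · have h5 : 0 ≤ a n - a (n + 1) := by linarith [hd n]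
    gcongr

lemma pow_diff (z : ℂ) (r h : ℝ) (hr : 0 ≤ r) (hz : ‖z - r‖ ≤ h) (n : ℕ) :
    ‖z ^ n - (r : ℂ) ^ n‖ ≤ (r + h) ^ n - r ^ n := by
  have hh : 0 ≤ h := (norm_nonneg _).trans hz
  have hzn : ‖z‖ ≤ r + h := by
    calc ‖z‖ = ‖(r : ℂ) + (z - r)‖ := by congr 1; ring
      _ ≤ ‖(r : ℂ)‖ + ‖z - r‖ := norm_add_le _ _
      _ ≤ _ := by rw [Complex.norm_real, Real.norm_of_nonneg hr]; linarith
  induction n with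
  | zero => simp
  | succ n ih =>
    calc ‖z ^ (n + 1) - (r : ℂ) ^ (n + 1)‖ = ‖z ^ n * (z - r) + r * (z ^ n - (r : ℂ) ^ n)‖ := by
          congr 1; ring
      _ ≤ ‖z‖ ^ n * ‖z - r‖ + r * ‖z ^ n - (r : ℂ) ^ n‖ := by
          refine (norm_add_le _ _).trans ?_
          rw [norm_mul, norm_mul, norm_pow, Complex.norm_real, Real.norm_of_nonneg hr]
      _ ≤ (r + h) ^ n * h + r * ((r + h) ^ n - r ^ n) := by gcongr
      _ = _ := by ring

/-- pointwise upper bound -/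
lemma upper_pt (f : ℂ → ℂ) (a : ℕ → ℝ) (ha : ∀ n, 0 ≤ a n) (hd : ∀ n, a (n + 1) ≤ a n)
    (hf : ∀ z ∈ ball (0 : ℂ) 1, HasSum (fun n : ℕ => (a n : ℂ) * z ^ n) (f z))
    (z : ℂ) (hz : z ∈ ball (0 : ℂ) 1) (N : ℕ) (hN : 1 < N * ‖1 - z‖) :
    ‖f z‖ ≤ 3 * ∑ n ∈ Finset.range N, a n := by
  have hz1 : ‖z‖ < 1 := by simpa using hz
  have h1 := (hasSum_nat_add_iff' N).2 (hf z hz)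
  have h2 := abel_bound (fun n => a (n + N)) (fun n => ha _) 
    (fun n => by have := hd (n + N); rwa [add_right_comm] at this) z (z ^ N) _ hz1.le
    (by rw [norm_pow]; exact pow_le_one₀ (norm_nonneg _) hz1.le) 
    (h1.congr_fun (fun n => by rw [pow_add]; ring))
  set T := f z - ∑ i ∈ Finset.range N, (a i : ℂ) * z ^ i with hT
  have hanti : Antitone a := antitone_nat_of_succ_le hd
  have h3 : N * a N ≤ ∑ n ∈ Finset.range N, a n := by
    calc N * a N = ∑ n ∈ Finset.range N, a N := by simp
      _ ≤ _ := Finset.sum_le_sum fun n hn => hanti (Finset.mem_range.1 hn).le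
  have h4 : ‖∑ i ∈ Finset.range N, (a i : ℂ) * z ^ i‖ ≤ ∑ n ∈ Finset.range N, a n := by
    refine (norm_sum_le _ _).trans (Finset.sum_le_sum fun n _ => ?_)
    rw [norm_mul, norm_pow, Complex.norm_real, Real.norm_of_nonneg (ha n)]
    exact mul_le_of_le_one_right (ha n) (pow_le_one₀ (norm_nonneg _) hz1.le)
  have h5 : ‖T‖ ≤ 2 * (N * a N) := by
    simp only [zero_add, norm_mul] at h2
    calc ‖T‖ ≤ (N * ‖1 - z‖) * ‖T‖ := by nlinarith [norm_nonneg T]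
      _ = N * (‖1 - z‖ * ‖T‖) := by ring
      _ ≤ N * (2 * a N) := by gcongr
      _ = _ := by ring
  calc ‖f z‖ = ‖T + ∑ i ∈ Finset.range N, (a i : ℂ) * z ^ i‖ := by rw [hT]; congr 1; ring
    _ ≤ _ := (norm_add_le _ _).trans (by linarith)

/-- pointwise lower bound -/
lemma lower_pt (f : ℂ → ℂ) (a : ℕ → ℝ) (ha : ∀ n, 0 ≤ a n) (hd : ∀ n, a (n + 1) ≤ a n)
    (hf : ∀ z ∈ ball (0 : ℂ) 1, HasSum (fun n : ℕ => (a n : ℂ) * z ^ n) (f z))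
    (z : ℂ) (t : ℝ) (ht : 0 < t) (ht1 : t ≤ 1) (hz : ‖z - ((1 - t : ℝ) : ℂ)‖ ≤ t / 4) 
    (N : ℕ) (hN : N * t ≤ 1 / 2) :
    (N + 1) * a N / 3 ≤ ‖f z‖ := by
  have hr : (0:ℝ) ≤ 1 - t := by linarith
  have hreal : ∀ x : ℝ, 0 ≤ x → x < 1 → ∃ X, HasSum (fun n : ℕ => a n * x ^ n) X ∧ f x = X := by
    intro x hx0 hx1
    have h1 := hf x (by simp [abs_of_nonneg hx0, hx1])
    have h2 := Complex.hasSum_re h1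
    have h3 : HasSum (fun n : ℕ => a n * x ^ n) (f x).re := by
      refine h2.congr_fun fun n => ?_
      rw [← Complex.ofReal_pow, ← Complex.ofReal_mul, Complex.ofReal_re]
    refine ⟨_, h3, ?_⟩
    have h4 := Complex.hasSum_ofReal.2 h3
    refine h1.unique (h4.congr_fun fun n => by push_cast; rfl)
  obtain ⟨X, hX, hfX⟩ := hreal (1 - t) hr (by linarith)
  obtain ⟨Y, hY, hfY⟩ := hreal (1 - t + t / 4) (by linarith) (by linarith)
  have h1 := anti_real a hd _ _ X Y hr (by linarith) hX hY
  have hzn : z ∈ ball (0:ℂ) 1 := by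
    have : ‖z‖ ≤ ‖z - ((1 - t : ℝ) : ℂ)‖ + ‖((1 - t : ℝ) : ℂ)‖ := by
      simpa using norm_add_le (z - ((1 - t : ℝ) : ℂ)) ((1 - t : ℝ) : ℂ)
    rw [Complex.norm_real, Real.norm_of_nonneg hr] at this
    simp; linarith
  have h2 : ‖f z - f ((1 - t : ℝ) : ℂ)‖ ≤ Y - X := by
    have h3 := (hf z hzn).sub (hf ((1 - t : ℝ) : ℂ) (by 
      rw [mem_ball_zero_iff, Complex.norm_real, Real.norm_of_nonneg hr]; linarith))
    have h4 := hY.sub hX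
    rw [← h3.tsum_eq]
    refine tsum_of_norm_bounded h4 fun n => ?_
    rw [← mul_sub, ← mul_sub, norm_mul, Complex.norm_real, Real.norm_of_nonneg (ha n)]
    exact mul_le_mul_of_nonneg_left (pow_diff z _ _ hr hz n) (ha n)
  have hanti : Antitone a := antitone_nat_of_succ_le hd
  have h5 : (N + 1) * a N / 2 ≤ X := by
    have h6 : ∀ n ∈ Finset.range (N + 1), a N / 2 ≤ a n * (1 - t) ^ n := by
      intro n hn
      have hn' : n ≤ N := by simpa [Nat.lt_succ_iff] using hn
      have hb := one_add_mul_le_pow (a := -t) (by linarith) n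
      have hnN : (n:ℝ) * t ≤ N * t := by gcongr
      have : (1:ℝ) / 2 ≤ (1 - t) ^ n := by rw [sub_eq_add_neg]; linarith
      have h7 := hanti hn'
      calc a N / 2 = a N * (1 / 2) := by ring
        _ ≤ _ := mul_le_mul h7 this (by norm_num) (ha n)
    calc (N + 1) * a N / 2 = ∑ n ∈ Finset.range (N + 1), a N / 2 := by simp; ring
      _ ≤ _ := Finset.sum_le_sum h6
      _ ≤ X := sum_le_hasSum _ (fun n _ => mul_nonneg (ha n) (pow_nonneg hr n)) hX
  have h8 : ‖f ((1 - t : ℝ) : ℂ)‖ ≤ ‖f z‖ + ‖f z - f ((1 - t : ℝ) : ℂ)‖ := by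
    have := norm_sub_norm_le (f ((1 - t : ℝ) : ℂ)) (f z)
    rw [norm_sub_rev] at this; linarith
  have h9 : X ≤ ‖f ((1 - t : ℝ) : ℂ)‖ := by
    rw [hfX, Complex.norm_real]; exact le_abs_self X
  have h10 : 3 * Y ≤ 4 * X := by
    have : t * (3 * Y) ≤ t * (4 * X) := by nlinarith
    exact le_of_mul_le_mul_left this ht
  linarith

lemma rpow_ratio (s y : ℝ) (h1 : 1 ≤ y) (h2 : y ≤ 2) : 2 ^ (-|s|) ≤ y ^ s ∧ y ^ s ≤ 2 ^ |s| := by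
  have hy : 0 < y := by linarith
  constructor
  · calc (2:ℝ) ^ (-|s|) ≤ y ^ (-|s|) := 
          Real.rpow_le_rpow_of_nonpos hy h2 (by simp)
      _ ≤ y ^ s := Real.rpow_le_rpow_of_exponent_le h1 (neg_abs_le s)
  · calc y ^ s ≤ y ^ |s| := Real.rpow_le_rpow_of_exponent_le h1 (le_abs_self s)
      _ ≤ _ := Real.rpow_le_rpow hy.le h2 (abs_nonneg s)

lemma lint_rpow (α : ℝ) (hα : -1 < α) (ρ : ℝ) (hρ : 0 < ρ) :
    ∫⁻ r in Ico (1 - ρ) 1, ENNReal.ofReal ((1 - r) ^ α) = ENNReal.ofReal (ρ ^ (α + 1) / (α + 1)) := by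
  have h1 : ∫ r in (1 - ρ)..1, (1 - r) ^ α = ρ ^ (α + 1) / (α + 1) := by
    rw [intervalIntegral.integral_comp_sub_left (fun x => x ^ α) 1]
    simp only [sub_self, sub_sub_cancel]
    rw [integral_rpow (Or.inl hα), Real.zero_rpow (by linarith)]; simp
  have h2 : IntervalIntegrable (fun r : ℝ => (1 - r) ^ α) volume (1 - ρ) 1 := by
    have := (intervalIntegral.intervalIntegrable_rpow' (a := ρ) (b := 0) hα).comp_sub_left 1
    simpa using this
  rw [← h1, intervalIntegral.integral_of_le (by linarith), ofReal_integral_eq_lintegral_ofReal]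
  · exact setLIntegral_congr (Ico_ae_eq_Ioc)
  · exact (intervalIntegrable_iff_integrableOn_Ioc_of_le (by linarith)).1 h2
  · filter_upwards [ae_restrict_mem measurableSet_Ioc] with r hr
    exact Real.rpow_nonneg (by linarith [hr.2]) _

lemma polar_region (r θ ρ : ℝ) (hr : 0 < r) (hr1 : r < 1) (hθ : θ ∈ Ioo (-Real.pi) Real.pi)
    (h : ‖1 - (r : ℂ) * (Real.cos θ + Real.sin θ * Complex.I)‖ ≤ ρ) :
    1 - ρ ≤ r ∧ |θ| ≤ Real.pi * ρ := by
  set e : ℂ := Real.cos θ + Real.sin θ * Complex.I with he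
  have hen : ‖e‖ = 1 := by 
    have := Complex.norm_exp_ofReal_mul_I θ
    rwa [Complex.exp_mul_I, ← Complex.ofReal_cos, ← Complex.ofReal_sin] at this
  have h1 : 1 - r ≤ ρ := by
    have := norm_sub_norm_le (1:ℂ) (r * e)
    rw [norm_mul, hen, Complex.norm_real, Real.norm_of_nonneg hr.le] at this
    simp at this; linarith
  refine ⟨by linarith, ?_⟩
  have h2 : ‖1 - e‖ ≤ 2 * ρ := by
    calc ‖1 - e‖ = ‖(1 - r * e) + ((r - 1 : ℝ) : ℂ) * e‖ := by congr 1; push_cast; ring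
      _ ≤ ‖1 - r * e‖ + ‖((r - 1 : ℝ) : ℂ) * e‖ := norm_add_le _ _
      _ ≤ _ := by 
        rw [norm_mul, hen, Complex.norm_real, Real.norm_of_nonpos (by linarith)]; linarith
  have h3 : ‖1 - e‖ ^ 2 = (2 * Real.sin (|θ| / 2)) ^ 2 := by
    rw [← Complex.normSq_eq_norm_sq, he, Complex.normSq_apply]
    simp only [Complex.sub_re, Complex.one_re, Complex.add_re, Complex.ofReal_re, Complex.mul_re,
      Complex.I_re, Complex.ofReal_im, Complex.I_im, Complex.sub_im, Complex.one_im, Complex.add_im,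
      Complex.mul_im]
    have hc : Real.cos θ = 1 - 2 * Real.sin (|θ| / 2) ^ 2 := by
      have h9 := Real.cos_two_mul (|θ| / 2)
      rw [mul_div_cancel₀ _ two_ne_zero, Real.cos_abs] at h9
      linarith [Real.sin_sq_add_cos_sq (|θ| / 2)]
    nlinarith [Real.sin_sq_add_cos_sq θ]
  have hθ' : |θ| < Real.pi := abs_lt.2 hθ
  have h4 := Real.mul_le_sin (x := |θ| / 2) (by positivity) (by linarith)
  have h5 : 2 * Real.sin (|θ| / 2) ≤ 2 * ρ := by
    refine le_trans ?_ h2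
    exact le_of_sq_le_sq h3.ge (norm_nonneg _)
  have h6 : 2 / Real.pi * (|θ| / 2) = |θ| / Real.pi := by ring
  rw [h6] at h4
  have h7 : |θ| / Real.pi ≤ ρ := by linarith
  rw [div_le_iff₀ Real.pi_pos] at h7
  linarith

lemma dA_le (s : Set ℂ) (g : ℂ → ℝ≥0∞) : ∫⁻ z in s, g z ∂dA ≤ ∫⁻ z in s, g z := by
  rw [dA, Measure.restrict_smul, lintegral_smul_measure, smul_eq_mul]
  refine mul_le_of_le_one_left zero_le ?_
  rw [ENNReal.inv_le_one]
  rw [← ENNReal.ofReal_one]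
  exact ENNReal.ofReal_le_ofReal (by linarith [Real.pi_gt_three])

lemma area_bound (α : ℝ) (hα : -1 < α) : ∃ C : ℝ, 0 < C ∧ ∀ ρ : ℝ, 0 < ρ →
    ∫⁻ z in (ball (0:ℂ) 1 ∩ {z | ‖1 - z‖ ≤ ρ}), ENNReal.ofReal ((1 - ‖z‖ ^ 2) ^ α) ∂dA
      ≤ ENNReal.ofReal (C * ρ ^ (α + 2)) := by
  have hα' : 0 < α + 1 := by linarith
  refine ⟨2 ^ |α| * (2 * Real.pi) / (α + 1), by positivity, fun ρ hρ => ?_⟩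
  refine (dA_le _ _).trans ?_
  have hm : MeasurableSet (ball (0:ℂ) 1 ∩ {z | ‖1 - z‖ ≤ ρ}) :=
    measurableSet_ball.inter (measurableSet_le (by fun_prop) (by fun_prop))
  rw [← lintegral_indicator hm, ← Complex.lintegral_comp_polarCoord_symm]
  let G : ℝ → ℝ≥0∞ := (Ico (1 - ρ) 1).indicator (fun r => ENNReal.ofReal (2 ^ |α| * (1 - r) ^ α))
  let H : ℝ → ℝ≥0∞ := (Icc (-(Real.pi * ρ)) (Real.pi * ρ)).indicator (fun _ => 1)
  have hG : Measurable G := by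
    refine Measurable.indicator ?_ measurableSet_Ico
    fun_prop
  have hH : Measurable H := measurable_const.indicator measurableSet_Icc
  calc _ ≤ ∫⁻ p in polarCoord.target, G p.1 * H p.2 := by
        refine setLIntegral_mono' polarCoord.open_target.measurableSet fun q hq => ?_
        obtain ⟨hq1, hq2⟩ := hq
        simp only [mem_Ioi] at hq1
        rw [smul_eq_mul]
        by_cases hmem : Complex.polarCoord.symm q ∈ ball (0:ℂ) 1 ∩ {z | ‖1 - z‖ ≤ ρ}
        · rw [indicator_of_mem hmem, Complex.norm_polarCoord_symm, abs_of_pos hq1]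
          obtain ⟨h1, h2⟩ := hmem
          rw [mem_ball_zero_iff, Complex.norm_polarCoord_symm, abs_of_pos hq1] at h1
          rw [mem_ofPred_eq, Complex.polarCoord_symm_apply] at h2
          obtain ⟨h3, h4⟩ := polar_region _ _ _ hq1 h1 hq2 h2
          have e1 : G q.1 = ENNReal.ofReal (2 ^ |α| * (1 - q.1) ^ α) :=
            indicator_of_mem (s := Ico (1 - ρ) 1) ⟨h3, h1⟩ _
          have e2 : H q.2 = 1 :=
            indicator_of_mem (s := Icc (-(Real.pi * ρ)) (Real.pi * ρ)) (abs_le.1 h4) _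
          rw [e1, e2, mul_one, ← ENNReal.ofReal_mul hq1.le]
          refine ENNReal.ofReal_le_ofReal ?_
          have h5 : (1 - q.1 ^ 2) ^ α = (1 + q.1) ^ α * (1 - q.1) ^ α := by
            rw [← Real.mul_rpow (by linarith) (by linarith)]; congr 1; ring
          have h6 := (rpow_ratio α (1 + q.1) (by linarith) (by linarith)).2
          have h7 : 0 ≤ (1 - q.1) ^ α := Real.rpow_nonneg (by linarith) _
          have h8 : 0 ≤ (1 + q.1) ^ α := Real.rpow_nonneg (by linarith) _
          calc q.1 * (1 - q.1 ^ 2) ^ α ≤ 1 * (1 - q.1 ^ 2) ^ α := by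
                rw [h5]; gcongr
            _ ≤ _ := by rw [h5, one_mul]; gcongr
        · rw [indicator_of_notMem hmem]; simp
    _ ≤ ∫⁻ p : ℝ × ℝ, G p.1 * H p.2 := setLIntegral_le_lintegral _ _
    _ = (∫⁻ r, G r) * ∫⁻ θ, H θ := by
        rw [Measure.volume_eq_prod, lintegral_prod_mul hG.aemeasurable hH.aemeasurable]
    _ = _ := by
        rw [lintegral_indicator measurableSet_Ico, lintegral_indicator measurableSet_Icc]
        simp_rw [ENNReal.ofReal_mul (show (0:ℝ) ≤ 2 ^ |α| by positivity)]
        rw [lintegral_const_mul' _ _ ENNReal.ofReal_ne_top, lint_rpow α hα ρ hρ]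
        simp only [lintegral_const, Measure.restrict_apply MeasurableSet.univ, univ_inter, one_mul,
          Real.volume_Icc]
        rw [← ENNReal.ofReal_mul (by positivity), ← ENNReal.ofReal_mul (by positivity)]
        congr 1
        rw [show α + 2 = (α + 1) + 1 by ring, Real.rpow_add_one hρ.ne' (α + 1)]
        generalize ρ ^ (α + 1) = R
        field_simp
        ring

lemma hardy (p : ℝ) (hp : 0 < p) (v : ℝ≥0∞) (hv0 : v ≠ 0) (hv1 : v < 1) :
    ∃ C : ℝ≥0∞, C ≠ ⊤ ∧ ∀ x : ℕ → ℝ≥0∞,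
      ∑' k, v ^ k * v ^ k * (∑ j ∈ Finset.range (k + 1), x j) ^ p ≤
        C * ∑' k, v ^ k * v ^ k * x k ^ p := by
  have hvt : v ≠ ⊤ := (hv1.trans ENNReal.one_lt_top).ne
  set w : ℝ≥0∞ := v ^ (1 / p) with hw
  have hw1 : w < 1 := ENNReal.rpow_lt_one hv1 (by positivity)
  have hw0 : w ≠ 0 := by simp [hw, ENNReal.rpow_eq_zero_iff, hv0, hvt]
  have hwt : w ≠ ⊤ := (hw1.trans ENNReal.one_lt_top).ne
  have hwp : ∀ k : ℕ, (w ^ k) ^ p = v ^ k := by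
    intro k
    rw [hw, ← ENNReal.rpow_natCast, ← ENNReal.rpow_mul, ← ENNReal.rpow_mul, ← ENNReal.rpow_natCast]
    congr 1; field_simp
  have hcancel : ∀ k : ℕ, w ^ k * (w⁻¹) ^ k = 1 := by
    intro k; rw [← mul_pow, ENNReal.mul_inv_cancel hw0 hwt, one_pow]
  set G : ℝ≥0∞ := (1 - w)⁻¹ with hG
  have hGt : G ≠ ⊤ := by simpa [hG] using (tsub_pos_of_lt hw1).ne'
  set V : ℝ≥0∞ := (1 - v)⁻¹ with hV
  have hVt : V ≠ ⊤ := by simpa [hV] using (tsub_pos_of_lt hv1).ne'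
  refine ⟨G ^ p * V, ENNReal.mul_ne_top (ENNReal.rpow_ne_top_of_nonneg hp.le hGt) hVt, fun x => ?_⟩
  -- partial sums
  have hsum : ∀ k : ℕ, w ^ k * ∑ j ∈ Finset.range (k + 1), (w⁻¹) ^ j ≤ G := by
    intro k
    rw [Finset.mul_sum, ← Finset.sum_range_reflect, hG, ← ENNReal.tsum_geometric]
    refine le_trans (Finset.sum_le_sum fun j hj => ?_) (ENNReal.sum_le_tsum (Finset.range (k + 1)))
    have hj' : j ≤ k := by simpa [Nat.lt_succ_iff] using hj
    have e1 : k + 1 - 1 - j = k - j := by omega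
    rw [e1]
    conv_lhs => rw [show k = j + (k - j) by omega]
    rw [pow_add, mul_assoc, show j + (k - j) - j = k - j by omega, hcancel, mul_one]
  have hterm : ∀ k, v ^ k * v ^ k * (∑ j ∈ Finset.range (k + 1), x j) ^ p ≤
      G ^ p * ∑ i ∈ Finset.range (k + 1), v ^ k * (v ^ i * x i ^ p) := by
    intro k
    set M : ℝ≥0∞ := ∑ i ∈ Finset.range (k + 1), v ^ i * x i ^ p with hM
    have h1 : ∀ j ∈ Finset.range (k + 1), x j ≤ (w⁻¹) ^ j * M ^ (1 / p) := by
      intro j hj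
      have h2 : (w ^ j * x j) ^ p ≤ M := by
        rw [ENNReal.mul_rpow_of_nonneg _ _ hp.le, hwp]
        exact Finset.single_le_sum (f := fun i => v ^ i * x i ^ p) (fun _ _ => zero_le) hj
      have h3 : w ^ j * x j ≤ M ^ (1 / p) := by
        rw [one_div, ENNReal.le_rpow_inv_iff hp]; exact h2
      calc x j = (w⁻¹) ^ j * (w ^ j * x j) := by
            rw [← mul_assoc, mul_comm ((w⁻¹) ^ j), hcancel, one_mul]
        _ ≤ _ := by gcongr
    have h4 : w ^ k * ∑ j ∈ Finset.range (k + 1), x j ≤ G * M ^ (1 / p) := by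
      calc _ ≤ w ^ k * ∑ j ∈ Finset.range (k + 1), (w⁻¹) ^ j * M ^ (1 / p) := by
            gcongr with j hj; exact h1 j hj
        _ = (w ^ k * ∑ j ∈ Finset.range (k + 1), (w⁻¹) ^ j) * M ^ (1 / p) := by
            rw [← Finset.sum_mul, mul_assoc]
        _ ≤ _ := by gcongr; exact hsum k
    have h5 := ENNReal.rpow_le_rpow h4 hp.le
    rw [ENNReal.mul_rpow_of_nonneg _ _ hp.le, ENNReal.mul_rpow_of_nonneg _ _ hp.le, hwp,
      ← ENNReal.rpow_mul, one_div, inv_mul_cancel₀ hp.ne', ENNReal.rpow_one] at h5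
    rw [← Finset.mul_sum, mul_assoc]
    calc _ ≤ v ^ k * (G ^ p * M) := by gcongr
      _ = _ := by ring
  calc _ ≤ ∑' k, G ^ p * ∑ i ∈ Finset.range (k + 1), v ^ k * (v ^ i * x i ^ p) :=
        ENNReal.tsum_le_tsum hterm
    _ = G ^ p * ∑' k, ∑' i, if i ≤ k then v ^ k * (v ^ i * x i ^ p) else 0 := by
        rw [ENNReal.tsum_mul_left]
        congr 2; funext k
        rw [tsum_eq_sum (s := Finset.range (k + 1))]
        · refine Finset.sum_congr rfl fun i hi => ?_
          rw [if_pos (by simpa [Nat.lt_succ_iff] using hi)]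
        · intro i hi
          rw [if_neg (by simpa [Nat.lt_succ_iff] using hi)]
    _ = G ^ p * ∑' i, ∑' k, if i ≤ k then v ^ k * (v ^ i * x i ^ p) else 0 := by
        rw [ENNReal.tsum_comm]
    _ = G ^ p * ∑' i, V * (v ^ i * v ^ i * x i ^ p) := by
        congr 2; funext i
        rw [← Summable.sum_add_tsum_nat_add' (k := i) ENNReal.summable, Finset.sum_eq_zero, zero_add]
        · simp only [le_add_iff_nonneg_left, zero_le, if_true, pow_add]
          simp_rw [mul_assoc]
          rw [ENNReal.tsum_mul_right, ENNReal.tsum_geometric]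
        · intro k hk
          rw [if_neg (by simpa using hk)]
    _ = _ := by rw [ENNReal.tsum_mul_left, mul_assoc]

lemma dyadic_tsum (F : ℕ → ℝ≥0∞) :
    ∑' n, F (n + 1) = ∑' k, ∑ n ∈ Finset.Ico (2 ^ k) (2 ^ (k + 1)), F n := by
  have h1 : ∀ n, F (n + 1) = ∑' k, if k = Nat.log 2 (n + 1) then F (n + 1) else 0 := by
    intro n; rw [tsum_ite_eq]
  calc _ = ∑' n, ∑' k, if k = Nat.log 2 (n + 1) then F (n + 1) else 0 := by
        congr 1; funext n; exact h1 n
    _ = ∑' k, ∑' n, if k = Nat.log 2 (n + 1) then F (n + 1) else 0 := ENNReal.tsum_comm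
    _ = _ := by
        congr 1; funext k
        have h2 : ∀ n, (if k = Nat.log 2 (n + 1) then F (n + 1) else 0) =
            (fun n => if n ∈ Finset.Ico (2 ^ k) (2 ^ (k + 1)) then F n else 0) (n + 1) := by
          intro n
          have := Nat.log_eq_iff (b := 2) (m := k) (n := n + 1) (Or.inr ⟨by norm_num, by omega⟩)
          simp only [Finset.mem_Ico, ← this, eq_comm]
        simp_rw [h2]
        have h3 := Summable.sum_add_tsum_nat_add' (k := 1)
          (f := fun n => if n ∈ Finset.Ico (2 ^ k) (2 ^ (k + 1)) then F n else 0) ENNReal.summable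
        rw [Finset.sum_range_one, if_neg (by simp), zero_add] at h3
        rw [h3, tsum_eq_sum (s := Finset.Ico (2 ^ k) (2 ^ (k + 1)))]
        · exact Finset.sum_congr rfl fun n hn => if_pos hn
        · intro n hn; exact if_neg hn

lemma block_ratio (s : ℝ) (k n : ℕ) (hn : n ∈ Finset.Ico (2 ^ k) (2 ^ (k + 1))) :
    2 ^ (-|s|) * ((2:ℝ) ^ k) ^ s ≤ (n : ℝ) ^ s ∧ (n : ℝ) ^ s ≤ 2 ^ |s| * ((2:ℝ) ^ k) ^ s := by
  obtain ⟨h1, h2⟩ := Finset.mem_Ico.1 hn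
  have h1' : (2:ℝ) ^ k ≤ n := by exact_mod_cast h1
  have h2' : (n:ℝ) ≤ 2 * 2 ^ k := by
    have : (n:ℝ) ≤ 2 ^ (k + 1) := by exact_mod_cast h2.le
    rw [pow_succ] at this; linarith
  have hk : (0:ℝ) < 2 ^ k := by positivity
  have e : (n : ℝ) ^ s = (n / 2 ^ k) ^ s * ((2:ℝ) ^ k) ^ s := by
    rw [← Real.mul_rpow (by positivity) hk.le, div_mul_cancel₀ _ hk.ne']
  obtain ⟨h3, h4⟩ := rpow_ratio s (n / 2 ^ k) (by rwa [le_div_iff₀ hk, one_mul])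
    (by rwa [div_le_iff₀ hk])
  rw [e]
  constructor <;> gcongr

lemma cond_upper (p s : ℝ) (hp : 0 < p) (a : ℕ → ℝ) (ha : ∀ n, 0 ≤ a n) (hanti : Antitone a) :
    ∑' n : ℕ, ENNReal.ofReal (((n + 1 : ℕ) : ℝ) ^ s * a (n + 1) ^ p) ≤
      ENNReal.ofReal (2 ^ |s|) * ∑' k : ℕ, ENNReal.ofReal (((2:ℝ) ^ k) ^ (s + 1) * a (2 ^ k) ^ p) := by
  rw [dyadic_tsum (fun n => ENNReal.ofReal ((n : ℝ) ^ s * a n ^ p)), ← ENNReal.tsum_mul_left]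
  refine ENNReal.tsum_le_tsum fun k => ?_
  have hk : (0:ℝ) < 2 ^ k := by positivity
  have hap : 0 ≤ a (2 ^ k) ^ p := Real.rpow_nonneg (ha _) _
  calc _ ≤ ∑ n ∈ Finset.Ico (2 ^ k) (2 ^ (k + 1)),
        ENNReal.ofReal (2 ^ |s| * ((2:ℝ) ^ k) ^ s * a (2 ^ k) ^ p) := by
        refine Finset.sum_le_sum fun n hn => ENNReal.ofReal_le_ofReal ?_
        have h1 := (block_ratio s k n hn).2
        have h2 : a n ^ p ≤ a (2 ^ k) ^ p :=
          Real.rpow_le_rpow (ha _) (hanti (Finset.mem_Ico.1 hn).1) hp.le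
        have h3 : 0 ≤ a n ^ p := Real.rpow_nonneg (ha _) _
        gcongr
    _ = _ := by
        rw [Finset.sum_const, Nat.card_Ico, nsmul_eq_mul, ← ENNReal.ofReal_natCast,
          ← ENNReal.ofReal_mul (by positivity), ← ENNReal.ofReal_mul (by positivity)]
        congr 1
        have : 2 ^ (k + 1) - 2 ^ k = 2 ^ k := by rw [pow_succ]; omega
        rw [this, Real.rpow_add_one hk.ne']
        push_cast; ring

lemma cond_lower (p s : ℝ) (hp : 0 < p) (a : ℕ → ℝ) (ha : ∀ n, 0 ≤ a n) (hanti : Antitone a) :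
    ∑' k : ℕ, ENNReal.ofReal (((2:ℝ) ^ k) ^ (s + 1) * a (2 ^ k) ^ p) ≤
      ENNReal.ofReal (a 0 ^ p) + ENNReal.ofReal (2 ^ (|s| + (s + 1))) *
        ∑' n : ℕ, ENNReal.ofReal (((n + 1 : ℕ) : ℝ) ^ s * a (n + 1) ^ p) := by
  rw [dyadic_tsum (fun n => ENNReal.ofReal ((n : ℝ) ^ s * a n ^ p)), ← ENNReal.tsum_mul_left,
    tsum_eq_zero_add' ENNReal.summable]
  refine add_le_add ?_ (ENNReal.tsum_le_tsum fun k => ?_)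
  · refine ENNReal.ofReal_le_ofReal ?_
    simp only [pow_zero, Real.one_rpow, one_mul]
    exact Real.rpow_le_rpow (ha _) (hanti (by norm_num)) hp.le
  have hk : (0:ℝ) < 2 ^ k := by positivity
  have hap : 0 ≤ a (2 ^ (k + 1)) ^ p := Real.rpow_nonneg (ha _) _
  calc _ = ENNReal.ofReal (2 ^ (|s| + (s + 1))) * ∑ n ∈ Finset.Ico (2 ^ k) (2 ^ (k + 1)),
        ENNReal.ofReal (2 ^ (-|s|) * ((2:ℝ) ^ k) ^ s * a (2 ^ (k + 1)) ^ p) := by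
        rw [Finset.sum_const, Nat.card_Ico, nsmul_eq_mul, ← ENNReal.ofReal_natCast,
          ← ENNReal.ofReal_mul (by positivity), ← ENNReal.ofReal_mul (by positivity)]
        congr 1
        have : 2 ^ (k + 1) - 2 ^ k = 2 ^ k := by rw [pow_succ]; omega
        rw [this, pow_succ (2:ℝ), Real.mul_rpow hk.le (by norm_num), Real.rpow_add_one hk.ne',
          Real.rpow_add (by norm_num) |s|]
        have h5 : (2:ℝ) ^ |s| * 2 ^ (-|s|) = 1 := by
          rw [← Real.rpow_add (by norm_num)]; simp
        push_cast
        linear_combination (-(((2:ℝ) ^ k) ^ s * 2 ^ k * 2 ^ (s + 1) * a (2 ^ (k + 1)) ^ p)) * h5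
    _ ≤ _ := by
        gcongr with n hn
        · exact (block_ratio s k n hn).1
        · exact ha _
        · exact hanti (Finset.mem_Ico.1 hn).2.le

lemma sum_dyadic (a : ℕ → ℝ) (hanti : Antitone a) (k : ℕ) :
    ∑ n ∈ Finset.range (2 ^ k), a n ≤ a 0 + ∑ j ∈ Finset.range k, (2:ℝ) ^ j * a (2 ^ j) := by
  induction k with
  | zero => simp
  | succ k ih =>
    rw [Finset.sum_range_succ, pow_succ, mul_two, Finset.sum_range_add]
    have : ∑ x ∈ Finset.range (2 ^ k), a (2 ^ k + x) ≤ (2:ℝ) ^ k * a (2 ^ k) := by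
      calc _ ≤ ∑ x ∈ Finset.range (2 ^ k), a (2 ^ k) :=
            Finset.sum_le_sum fun n _ => hanti (by omega)
        _ = _ := by simp
    linarith

lemma ball_lower (p α : ℝ) (hp : 0 < p) : ∃ c : ℝ, 0 < c ∧ ∀ (f : ℂ → ℂ) (t m : ℝ),
    0 < t → t ≤ 1 / 2 → 0 ≤ m →
    (∀ z, ‖z - ((1 - t : ℝ) : ℂ)‖ ≤ t / 4 → m ≤ ‖f z‖) →
    ENNReal.ofReal (c * t ^ (α + 2) * m ^ p) ≤
      ∫⁻ z in ball ((1 - t : ℝ) : ℂ) (t / 4),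
        ENNReal.ofReal ((1 - ‖z‖ ^ 2) ^ α * ‖f z‖ ^ p) ∂dA := by
  refine ⟨4 ^ (-|α|) / 16, by positivity, fun f t m ht ht1 hm hf => ?_⟩
  have hmp : 0 ≤ m ^ p := Real.rpow_nonneg hm _
  have hvol : dA (ball ((1 - t : ℝ) : ℂ) (t / 4)) = ENNReal.ofReal (t ^ 2 / 16) := by
    rw [dA, Measure.smul_apply, Complex.volume_ball, smul_eq_mul, mul_comm, mul_assoc]
    have : (NNReal.pi : ℝ≥0∞) = ENNReal.ofReal Real.pi := by
      rw [← NNReal.coe_real_pi, ENNReal.ofReal_coe_nnreal]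
    rw [this, ENNReal.mul_inv_cancel (by simp [Real.pi_pos]) ENNReal.ofReal_ne_top, mul_one,
      ← ENNReal.ofReal_pow (by positivity)]
    congr 1; ring
  calc _ = ∫⁻ z in ball ((1 - t : ℝ) : ℂ) (t / 4), ENNReal.ofReal (4 ^ (-|α|) * t ^ α * m ^ p) ∂dA := by
        rw [setLIntegral_const, hvol, ← ENNReal.ofReal_mul (by positivity)]
        congr 1
        rw [show α + 2 = α + (2:ℕ) by norm_num, Real.rpow_add_natCast ht.ne']; ring
    _ ≤ _ := by
        refine setLIntegral_mono' measurableSet_ball fun z hz => ENNReal.ofReal_le_ofReal ?_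
        rw [mem_ball_iff_norm] at hz
        have h1 := hf z hz.le
        have hr : ‖((1 - t : ℝ) : ℂ)‖ = 1 - t := by
          rw [Complex.norm_real, Real.norm_of_nonneg (by linarith)]
        have h2 := abs_le.1 (abs_norm_sub_norm_le z ((1 - t : ℝ) : ℂ))
        rw [hr] at h2
        have h3 : t / 2 ≤ 1 - ‖z‖ ^ 2 := by nlinarith [norm_nonneg z]
        have h4 : 1 - ‖z‖ ^ 2 ≤ 4 * t := by nlinarith [norm_nonneg z]
        have h5 : 4 ^ (-|α|) * t ^ α ≤ (1 - ‖z‖ ^ 2) ^ α := by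
          set y := 1 - ‖z‖ ^ 2 with hy
          have hyp : 0 < y := by linarith
          rcases le_total 0 α with h | h
          · rw [abs_of_nonneg h, Real.rpow_neg (by norm_num), ← Real.inv_rpow (by norm_num),
              ← Real.mul_rpow (by norm_num) ht.le]
            exact Real.rpow_le_rpow (by positivity) (by linarith) h
          · rw [abs_of_nonpos h, neg_neg, ← Real.mul_rpow (by norm_num) ht.le]
            exact Real.rpow_le_rpow_of_nonpos hyp h4 h
        have h6 : 0 ≤ (1 - ‖z‖ ^ 2) ^ α := Real.rpow_nonneg (by linarith) _
        gcongr

lemma lower_main (p α : ℝ) (hp : 0 < p) : ∃ c : ℝ, 0 < c ∧ ∀ (f : ℂ → ℂ) (a : ℕ → ℝ),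
      (∀ n, 0 ≤ a n) → (∀ n, a (n + 1) ≤ a n) →
      (∀ z ∈ ball (0 : ℂ) 1, HasSum (fun n : ℕ => (a n : ℂ) * z ^ n) (f z)) →
      ENNReal.ofReal c * (ENNReal.ofReal (a 0 ^ p) + 
        ∑' k : ℕ, ENNReal.ofReal (((2:ℝ) ^ k) ^ (p - 3 - α + 1) * a (2 ^ k) ^ p)) ≤
      ∫⁻ z in ball (0 : ℂ) 1, ENNReal.ofReal ((1 - ‖z‖ ^ 2) ^ α * ‖f z‖ ^ p) ∂dA := by
  obtain ⟨c, hc, hball⟩ := ball_lower p α hp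
  set c' := c * (1 / 2) ^ (α + 2) * (1 / 3) ^ p with hc'
  have hc'0 : 0 < c' := by positivity
  refine ⟨c' / 2, by positivity, fun f a ha hd hf => ?_⟩
  set I := ∫⁻ z in ball (0 : ℂ) 1, ENNReal.ofReal ((1 - ‖z‖ ^ 2) ^ α * ‖f z‖ ^ p) ∂dA with hI
  have hsub : ∀ t : ℝ, 0 < t → t ≤ 1 / 2 → ball ((1 - t : ℝ) : ℂ) (t / 4) ⊆ ball 0 1 := by
    intro t ht ht1
    refine ball_subset_ball' ?_
    rw [dist_zero_right, Complex.norm_real, Real.norm_of_nonneg (by linarith)]; linarith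
  have h0 : ENNReal.ofReal c' * ENNReal.ofReal (a 0 ^ p) ≤ I := by
    have := hball f (1 / 2) (a 0 / 3) (by norm_num) le_rfl (by linarith [ha 0]) (fun z hz => by
      have := lower_pt f a ha hd hf z (1 / 2) (by norm_num) (by norm_num) hz 0 (by norm_num)
      simpa using this)
    refine le_trans (le_of_eq ?_) (this.trans (lintegral_mono_set (hsub _ (by norm_num) le_rfl)))
    rw [← ENNReal.ofReal_mul hc'0.le, hc', div_eq_mul_one_div (a 0),
      Real.mul_rpow (ha 0) (by norm_num)]
    congr 1; ring
  have h1 : ENNReal.ofReal c' * 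
      ∑' k : ℕ, ENNReal.ofReal (((2:ℝ) ^ k) ^ (p - 3 - α + 1) * a (2 ^ k) ^ p) ≤ I := by
    let t : ℕ → ℝ := fun k => (1 / 2) ^ (k + 1)
    have ht : ∀ k, 0 < t k := fun k => by positivity
    have ht1 : ∀ k, t k ≤ 1 / 2 := fun k => by
      have : (1 / 2 : ℝ) ^ k ≤ 1 := pow_le_one₀ (by norm_num) (by norm_num)
      simp only [t]; rw [pow_succ]; linarith
    let B : ℕ → Set ℂ := fun k => ball ((1 - t k : ℝ) : ℂ) (t k / 4)
    have hdisj' : ∀ i j, i < j → Disjoint (B i) (B j) := by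
      intro i j hij
      refine ball_disjoint_ball ?_
      have h3 : t j ≤ t i / 2 := by
        have : t j ≤ t (i + 1) := pow_le_pow_of_le_one (by norm_num) (by norm_num) (by omega)
        refine this.trans (le_of_eq ?_)
        simp only [t]; rw [pow_succ _ (i + 1)]; ring
      rw [Complex.dist_eq, ← Complex.ofReal_sub, Complex.norm_real, Real.norm_eq_abs]
      refine le_trans ?_ (neg_le_abs _)
      linarith [ht i, ht j]
    have hdisj : Pairwise (Function.onFun Disjoint B) := by
      intro i j hij
      rcases lt_or_gt_of_ne hij with h | h
      · exact hdisj' i j h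
      · exact (hdisj' j i h).symm
    calc _ ≤ ∑' k, ∫⁻ z in B k, ENNReal.ofReal ((1 - ‖z‖ ^ 2) ^ α * ‖f z‖ ^ p) ∂dA := by
          rw [← ENNReal.tsum_mul_left]
          refine ENNReal.tsum_le_tsum fun k => ?_
          have hk : (0:ℝ) < 2 ^ k := by positivity
          have hNt : (2:ℝ) ^ k * t k = 1 / 2 := by
            simp only [t]; rw [pow_succ, ← mul_assoc, ← mul_pow]; norm_num
          have hak := ha (2 ^ k)
          have := hball f (t k) (2 ^ k * a (2 ^ k) * (1 / 3)) (ht k) (ht1 k) (by positivity)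
            (fun z hz => by
              have := lower_pt f a ha hd hf z (t k) (ht k) (by linarith [ht1 k]) hz (2 ^ k)
                (by push_cast; exact hNt.le)
              refine le_trans ?_ this
              push_cast
              linarith)
          refine le_trans (le_of_eq ?_) this
          rw [← ENNReal.ofReal_mul hc'0.le]
          congr 1
          have e1 : t k = (1 / 2) * ((2:ℝ) ^ k)⁻¹ := by field_simp; linarith
          rw [Real.mul_rpow (by positivity) (by norm_num), Real.mul_rpow hk.le hak, e1,
            Real.mul_rpow (by norm_num) (by positivity), Real.inv_rpow hk.le, ← Real.rpow_neg hk.le,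
            hc', show p - 3 - α + 1 = -(α + 2) + p by ring, Real.rpow_add hk]
          ring
      _ = ∫⁻ z in ⋃ k, B k, ENNReal.ofReal ((1 - ‖z‖ ^ 2) ^ α * ‖f z‖ ^ p) ∂dA :=
          (lintegral_iUnion (fun k => measurableSet_ball) hdisj _).symm
      _ ≤ I := lintegral_mono_set (iUnion_subset fun k => hsub _ (ht k) (ht1 k))
  have h2 : ENNReal.ofReal (c' / 2) = ENNReal.ofReal c' / 2 := by
    rw [ENNReal.ofReal_div_of_pos (by norm_num)]; simp
  rw [h2, ENNReal.div_eq_inv_mul, mul_assoc, mul_add]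
  calc _ ≤ 2⁻¹ * (I + I) := by gcongr
    _ = I := by rw [← two_mul, ← mul_assoc, ENNReal.inv_mul_cancel (by simp) (by simp), one_mul]

lemma upper_main (p α : ℝ) (hp : 0 < p) (hα : -1 < α) : ∃ C : ℝ≥0∞, C ≠ ⊤ ∧ 
    ∀ (f : ℂ → ℂ) (a : ℕ → ℝ),
      (∀ n, 0 ≤ a n) → (∀ n, a (n + 1) ≤ a n) →
      (∀ z ∈ ball (0 : ℂ) 1, HasSum (fun n : ℕ => (a n : ℂ) * z ^ n) (f z)) →
      ∫⁻ z in ball (0 : ℂ) 1, ENNReal.ofReal ((1 - ‖z‖ ^ 2) ^ α * ‖f z‖ ^ p) ∂dA ≤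
      C * (ENNReal.ofReal (a 0 ^ p) + 
        ∑' k : ℕ, ENNReal.ofReal (((2:ℝ) ^ k) ^ (p - 3 - α + 1) * a (2 ^ k) ^ p)) := by
  obtain ⟨K, hK, harea⟩ := area_bound α hα
  set v : ℝ := 2 ^ (-(α + 2) / 2) with hv
  have hv0 : 0 < v := by positivity
  have hv1 : v < 1 := Real.rpow_lt_one_of_one_lt_of_neg (by norm_num) (by linarith)
  have hvv : ∀ k : ℕ, v ^ k * v ^ k = ((2:ℝ) ^ k) ^ (-(α + 2)) := by
    intro k
    rw [← mul_pow, hv, ← Real.rpow_add (by norm_num), ← Real.rpow_natCast, ← Real.rpow_natCast,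
      ← Real.rpow_mul (by norm_num), ← Real.rpow_mul (by norm_num)]
    congr 1; ring
  obtain ⟨H, hH, hardy⟩ := hardy p hp (ENNReal.ofReal v) (by simpa using hv0) 
    (by rw [← ENNReal.ofReal_one]; exact (ENNReal.ofReal_lt_ofReal_iff one_pos).2 hv1)
  refine ⟨ENNReal.ofReal (3 ^ p * K * 2 ^ (α + 2)) * H, ENNReal.mul_ne_top ENNReal.ofReal_ne_top hH,
    fun f a ha hd hf => ?_⟩
  have hanti : Antitone a := antitone_nat_of_succ_le hd
  let x : ℕ → ℝ := fun j => if j = 0 then a 0 else 2 ^ (j - 1) * a (2 ^ (j - 1))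
  have hx0 : ∀ j, 0 ≤ x j := by
    intro j; simp only [x]; split_ifs
    · exact ha 0
    · exact mul_nonneg (by positivity) (ha _)
  let S : ℕ → ℝ := fun k => ∑ j ∈ Finset.range (k + 1), x j
  have hS0 : ∀ k, 0 ≤ S k := fun k => Finset.sum_nonneg fun j _ => hx0 j
  have hS : ∀ k, ∑ n ∈ Finset.range (2 ^ k), a n ≤ S k := by
    intro k
    refine (sum_dyadic a hanti k).trans (le_of_eq ?_)
    simp only [S]
    rw [Finset.sum_range_succ']
    simp [x, add_comm]
  let E : ℕ → Set ℂ := fun k => 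
    ball (0:ℂ) 1 ∩ {z | ‖1 - z‖ ≤ 2 * (1 / 2) ^ k} ∩ {z | (1 / 2) ^ k < ‖1 - z‖}
  have hE : ∀ k, MeasurableSet (E k) := fun k => 
    (measurableSet_ball.inter (measurableSet_le (by fun_prop) (by fun_prop))).inter 
      (measurableSet_lt (by fun_prop) (by fun_prop))
  have hcover : ball (0:ℂ) 1 ⊆ ⋃ k, E k := by
    intro z hz
    have hz1 : ‖z‖ < 1 := by simpa using hz
    have h1 := norm_sub_norm_le (1:ℂ) z
    have h2 := norm_sub_le (1:ℂ) z
    rw [norm_one] at h1 h2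
    obtain ⟨k, hk1, hk2⟩ := exists_nat_pow_near_of_lt_one (x := ‖1 - z‖ / 2) (y := (1 / 2 : ℝ))
      (by linarith) (by linarith) (by norm_num) (by norm_num)
    rw [pow_succ] at hk1
    exact mem_iUnion.2 ⟨k, ⟨hz, (by linarith : ‖1 - z‖ ≤ 2 * (1 / 2) ^ k)⟩, 
      (by linarith : (1 / 2) ^ k < ‖1 - z‖)⟩
  have hterm : ∀ k, ∫⁻ z in E k, ENNReal.ofReal ((1 - ‖z‖ ^ 2) ^ α * ‖f z‖ ^ p) ∂dA ≤
      ENNReal.ofReal (3 ^ p * K * 2 ^ (α + 2)) * 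
        (ENNReal.ofReal v ^ k * ENNReal.ofReal v ^ k * 
          (∑ j ∈ Finset.range (k + 1), ENNReal.ofReal (x j)) ^ p) := by
    intro k
    calc _ ≤ ∫⁻ z in E k, ENNReal.ofReal ((3 * S k) ^ p) * ENNReal.ofReal ((1 - ‖z‖ ^ 2) ^ α) ∂dA := by
          refine setLIntegral_mono' (hE k) fun z hz => ?_
          obtain ⟨⟨hz1, hz2⟩, hz3⟩ := hz
          have hz3' : (1 / 2) ^ k < ‖1 - z‖ := hz3
          have hpt := upper_pt f a ha hd hf z hz1 (2 ^ k) (by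
            push_cast
            have : (2:ℝ) ^ k * (1 / 2) ^ k = 1 := by rw [← mul_pow]; norm_num
            rw [← this]
            gcongr)
          rw [← ENNReal.ofReal_mul (Real.rpow_nonneg (by linarith [hS0 k]) _)]
          refine ENNReal.ofReal_le_ofReal ?_
          rw [mul_comm]
          have hzn : ‖z‖ < 1 := by simpa using hz1
          have h7 : 0 ≤ (1 - ‖z‖ ^ 2) ^ α := Real.rpow_nonneg (by nlinarith [norm_nonneg z]) _
          gcongr
          linarith [hS k]
      _ = ENNReal.ofReal ((3 * S k) ^ p) * ∫⁻ z in E k, ENNReal.ofReal ((1 - ‖z‖ ^ 2) ^ α) ∂dA := 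
          lintegral_const_mul' _ _ ENNReal.ofReal_ne_top
      _ ≤ ENNReal.ofReal ((3 * S k) ^ p) * ENNReal.ofReal (K * (2 * (1 / 2) ^ k) ^ (α + 2)) := by
          gcongr
          exact (lintegral_mono_set inter_subset_left).trans (harea _ (by positivity))
      _ = _ := by
          rw [← ENNReal.ofReal_sum_of_nonneg (fun j _ => hx0 j), 
            ENNReal.ofReal_rpow_of_nonneg (hS0 k) hp.le, ← ENNReal.ofReal_pow hv0.le,
            ← ENNReal.ofReal_mul (Real.rpow_nonneg (by linarith [hS0 k]) _),
            ← ENNReal.ofReal_mul (by positivity), ← ENNReal.ofReal_mul (by positivity),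
            ← ENNReal.ofReal_mul (by positivity)]
          congr 1
          rw [hvv, Real.mul_rpow (by norm_num) (hS0 k), Real.mul_rpow (by norm_num) (by positivity),
            one_div, inv_pow, Real.inv_rpow (by positivity), ← Real.rpow_neg (by positivity)]
          ring
  have hfin : ∑' k, ENNReal.ofReal v ^ k * ENNReal.ofReal v ^ k * ENNReal.ofReal (x k) ^ p ≤
      ENNReal.ofReal (a 0 ^ p) + 
        ∑' k : ℕ, ENNReal.ofReal (((2:ℝ) ^ k) ^ (p - 3 - α + 1) * a (2 ^ k) ^ p) := by
    rw [tsum_eq_zero_add' ENNReal.summable]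
    refine add_le_add (le_of_eq ?_) (ENNReal.tsum_le_tsum fun k => ?_)
    · simp [x, ENNReal.ofReal_rpow_of_nonneg (ha 0) hp.le]
    · have hk : (0:ℝ) < 2 ^ k := by positivity
      have hak := ha (2 ^ k)
      rw [ENNReal.ofReal_rpow_of_nonneg (hx0 _) hp.le, ← ENNReal.ofReal_pow hv0.le,
        ← ENNReal.ofReal_mul (by positivity), ← ENNReal.ofReal_mul (by positivity)]
      refine ENNReal.ofReal_le_ofReal ?_
      have e : x (k + 1) = 2 ^ k * a (2 ^ k) := by simp [x]
      rw [e, Real.mul_rpow hk.le hak, show p - 3 - α + 1 = -(α + 2) + p by ring, Real.rpow_add hk,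
        ← hvv k]
      have h8 : v ^ (k + 1) ≤ v ^ k := pow_le_pow_of_le_one hv0.le hv1.le (by omega)
      calc _ ≤ v ^ k * v ^ k * (((2:ℝ) ^ k) ^ p * a (2 ^ k) ^ p) := by gcongr
        _ = _ := by ring
  calc _ ≤ ∫⁻ z in ⋃ k, E k, ENNReal.ofReal ((1 - ‖z‖ ^ 2) ^ α * ‖f z‖ ^ p) ∂dA := 
        lintegral_mono_set hcover
    _ ≤ ∑' k, ∫⁻ z in E k, ENNReal.ofReal ((1 - ‖z‖ ^ 2) ^ α * ‖f z‖ ^ p) ∂dA := 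
        lintegral_iUnion_le _ _
    _ ≤ _ := ENNReal.tsum_le_tsum hterm
    _ ≤ _ := by
        rw [ENNReal.tsum_mul_left, mul_assoc _ H]
        exact mul_le_mul_right ((hardy _).trans (mul_le_mul_right hfin _)) _


/-- For `1 < p < ∞`, `α > -1` and `f(z) = ∑ a_n z^n` with `{a_n}` a
decreasing sequence of non-negative reals: `f ∈ A^p_α` iff `∑_{n≥1} n^{p-3-α} a_n^p < ∞`,
and `‖f‖_{A^p_α}^p ≍ a_0^p + ∑_{n≥1} n^{p-3-α} a_n^p` with constants depending only on
`p` and `α`. -/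
theorem Apa_decreasing_coefficients (p α : ℝ) (hp : 1 < p) (hα : -1 < α) :
    ∃ c > 0, ∃ C > 0, ∀ (f : ℂ → ℂ) (a : ℕ → ℝ),
      (∀ n, 0 ≤ a n) → (∀ n, a (n + 1) ≤ a n) →
      (∀ z ∈ ball (0 : ℂ) 1, HasSum (fun n : ℕ => (a n : ℂ) * z ^ n) (f z)) →
      ((bergmanNorm p α f < ⊤ ↔
          Summable (fun n : ℕ => ((n + 1 : ℕ) : ℝ) ^ (p - 3 - α) * a (n + 1) ^ p)) ∧
        ENNReal.ofReal c *
            (ENNReal.ofReal (a 0 ^ p) +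
              ∑' n : ℕ, ENNReal.ofReal (((n + 1 : ℕ) : ℝ) ^ (p - 3 - α) * a (n + 1) ^ p))
          ≤ bergmanNorm p α f ^ p ∧
        bergmanNorm p α f ^ p ≤
          ENNReal.ofReal C *
            (ENNReal.ofReal (a 0 ^ p) +
              ∑' n : ℕ, ENNReal.ofReal (((n + 1 : ℕ) : ℝ) ^ (p - 3 - α) * a (n + 1) ^ p))) := by
  have hp0 : 0 < p := by linarith
  have hα1 : 0 < α + 1 := by linarith
  obtain ⟨c₁, hc₁, hlow⟩ := lower_main p α hp0
  obtain ⟨C₁, hC₁, hup⟩ := upper_main p α hp0 hα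
  set s := p - 3 - α with hs
  set k₁ : ℝ := 2 ^ |s| with hk₁
  have hk₁1 : 1 ≤ k₁ := Real.one_le_rpow (by norm_num) (abs_nonneg s)
  set k₂ : ℝ := 2 ^ (|s| + (s + 1)) with hk₂
  have hk₂0 : 0 < k₂ := by positivity
  set C₂ : ℝ≥0∞ := ENNReal.ofReal (α + 1) * (C₁ * ENNReal.ofReal (2 + k₂)) with hC₂
  have hC₂t : C₂ ≠ ⊤ := ENNReal.mul_ne_top ENNReal.ofReal_ne_top
    (ENNReal.mul_ne_top hC₁ ENNReal.ofReal_ne_top)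
  refine ⟨(α + 1) * (c₁ * k₁⁻¹), by positivity, C₂.toReal + 1, by positivity,
    fun f a ha hd hf => ?_⟩
  have hanti : Antitone a := antitone_nat_of_succ_le hd
  have hL := hlow f a ha hd hf
  have hU := hup f a ha hd hf
  have hcu := cond_upper p s hp0 a ha hanti
  have hcl := cond_lower p s hp0 a ha hanti
  set I := ∫⁻ z in ball (0 : ℂ) 1, ENNReal.ofReal ((1 - ‖z‖ ^ 2) ^ α * ‖f z‖ ^ p) ∂dA with hI
  set D := ∑' k : ℕ, ENNReal.ofReal (((2:ℝ) ^ k) ^ (s + 1) * a (2 ^ k) ^ p) with hD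
  set Z := ∑' n : ℕ, ENNReal.ofReal (((n + 1 : ℕ) : ℝ) ^ s * a (n + 1) ^ p) with hZ
  set A := ENNReal.ofReal (a 0 ^ p) with hA
  have hAt : A ≠ ⊤ := ENNReal.ofReal_ne_top
  have hb : bergmanNorm p α f ^ p = ENNReal.ofReal (α + 1) * I := by
    rw [bergmanNorm, ← ENNReal.rpow_mul, one_div, inv_mul_cancel₀ hp0.ne', ENNReal.rpow_one]
  have hlower : ENNReal.ofReal ((α + 1) * (c₁ * k₁⁻¹)) * (A + Z) ≤ bergmanNorm p α f ^ p := by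
    rw [hb, ENNReal.ofReal_mul hα1.le, mul_assoc]
    gcongr
    refine le_trans ?_ hL
    rw [ENNReal.ofReal_mul hc₁.le, mul_assoc]
    gcongr
    calc ENNReal.ofReal k₁⁻¹ * (A + Z) 
        ≤ ENNReal.ofReal k₁⁻¹ * (ENNReal.ofReal k₁ * A + ENNReal.ofReal k₁ * D) := by
          gcongr
          exact le_mul_of_one_le_left zero_le (by simpa using hk₁1)
      _ = A + D := by
          rw [← mul_add, ← mul_assoc, ← ENNReal.ofReal_mul (by positivity), 
            inv_mul_cancel₀ (by positivity), ENNReal.ofReal_one, one_mul]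
  have hupper : bergmanNorm p α f ^ p ≤ ENNReal.ofReal (C₂.toReal + 1) * (A + Z) := by
    have h1 : C₂ ≤ ENNReal.ofReal (C₂.toReal + 1) := by
      rw [ENNReal.le_ofReal_iff_toReal_le hC₂t (by positivity)]; linarith
    refine le_trans ?_ (mul_le_mul_left h1 _)
    rw [hb, hC₂, mul_assoc, mul_assoc]
    gcongr
    refine hU.trans ?_
    gcongr
    calc A + D ≤ A + (A + ENNReal.ofReal k₂ * Z) := by gcongr
      _ = 2 * A + ENNReal.ofReal k₂ * Z := by ring
      _ ≤ ENNReal.ofReal (2 + k₂) * A + ENNReal.ofReal (2 + k₂) * Z := by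
          gcongr
          · rw [ENNReal.ofReal_add (by norm_num) hk₂0.le]; simp
          · linarith
      _ = _ := by rw [mul_add]
  refine ⟨?_, hlower, hupper⟩
  have hnn : ∀ n : ℕ, 0 ≤ ((n + 1 : ℕ) : ℝ) ^ s * a (n + 1) ^ p := fun n => 
    mul_nonneg (by positivity) (Real.rpow_nonneg (ha _) _)
  have hbt : bergmanNorm p α f < ⊤ ↔ bergmanNorm p α f ^ p < ⊤ := by
    rw [ENNReal.rpow_lt_top_iff_of_pos hp0]
  rw [hbt]
  constructor
  · intro h
    have h1 := hlower.trans_lt h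
    have h2 : Z ≠ ⊤ := by
      intro h3
      rw [h3, add_top, ENNReal.mul_top (by simp; positivity)] at h1
      exact lt_irrefl _ h1
    have h4 := ENNReal.summable_toReal h2
    refine h4.congr fun n => ?_
    rw [ENNReal.toReal_ofReal (hnn n)]
  · intro h
    have h1 : Z ≠ ⊤ := h.tsum_ofReal_ne_top
    refine hupper.trans_lt (ENNReal.mul_lt_top ENNReal.ofReal_lt_top ?_)
    exact ENNReal.add_lt_top.2 ⟨hAt.lt_top, h1.lt_top⟩
end

section
/- Let μ be a finite positive Borel measure on [0,1) which is a Carleson measure, and let 0 < p < ∞ and α > −1. Then there exists a constant C = C(p, α, μ) > 0 such that for every f in the weighted Bergman space A^p_α, ∫_{[0,1)} M_∞(r, f)^p (1−r)^{α+1} dμ(r) ≤ C ‖f‖_{A^p_α}^p, where M_∞(r, f) = sup_{|z| = r} |f(z)|. -/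
open MeasureTheory Set Metric Filter Asymptotics
open scoped ENNReal

/-- Sub-mean-value type estimate for `|f|^p`. -/
lemma submean (p : ℝ) (hp : 0 < p) : ∃ C > 0, ∀ (f : ℂ → ℂ) (w : ℂ) (ρ : ℝ), 0 < ρ →
    DifferentiableOn ℂ f (closedBall w ρ) →
    ENNReal.ofReal (‖f w‖ ^ p * ρ ^ 2) ≤
      ENNReal.ofReal C * ∫⁻ z in ball w ρ, ENNReal.ofReal (‖f z‖ ^ p) := by
  set K : ℝ := 4 ^ (1 / p) with hK
  have hK0 : 0 < K := by positivity
  have hKp : K ^ p = 4 := by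
    rw [hK, ← Real.rpow_mul (by norm_num)]; field_simp; norm_num
  refine ⟨2 ^ p * (16 * (K + 1) ^ 2) / Real.pi, by positivity, ?_⟩
  intro f w ρ hρ hf
  have hcont : ContinuousOn (fun z => ‖f z‖ ^ p * (ρ - ‖z - w‖) ^ 2) (closedBall w ρ) := by
    apply ContinuousOn.mul
    · exact hf.continuousOn.norm.rpow_const (fun _ _ => Or.inr hp.le)
    · fun_prop
  obtain ⟨z0, hz0, hmax⟩ := (isCompact_closedBall w ρ).exists_isMaxOn
    ⟨w, mem_closedBall_self hρ.le⟩ hcont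
  have hw := hmax (mem_closedBall_self hρ.le)
  simp only [sub_self, norm_zero, sub_zero, mem_setOf_eq] at hw
  set d := ρ - ‖z0 - w‖ with hd
  have hd0 : 0 ≤ d := by
    rw [mem_closedBall, dist_eq_norm] at hz0; linarith
  rcases hd0.eq_or_lt with h0 | hdpos
  · rw [← h0] at hw
    rw [ENNReal.ofReal_of_nonpos (by simpa using hw)]; exact zero_le
  by_cases hfz : f z0 = 0
  · rw [hfz] at hw
    rw [ENNReal.ofReal_of_nonpos (by simpa [Real.zero_rpow hp.ne'] using hw)]; exact zero_le
  have hA : 0 < ‖f z0‖ := norm_pos_iff.mpr hfz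
  have hsub : ball z0 (d / 2) ⊆ closedBall w ρ := by
    intro z hz
    rw [mem_ball, dist_eq_norm] at hz
    rw [mem_closedBall, dist_eq_norm]
    have := norm_sub_le_norm_sub_add_norm_sub z z0 w
    linarith
  have hbd : ∀ z ∈ ball z0 (d / 2), ‖f z‖ ≤ K * ‖f z0‖ := by
    intro z hz
    have h1 := hmax (hsub hz)
    simp only [mem_setOf_eq] at h1
    rw [mem_ball, dist_eq_norm] at hz
    have h2 : d / 2 ≤ ρ - ‖z - w‖ := by
      have := norm_sub_le_norm_sub_add_norm_sub z z0 w
      linarith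
    have h3 : ‖f z‖ ^ p * (d / 2) ^ 2 ≤ ‖f z0‖ ^ p * d ^ 2 :=
      le_trans (by gcongr) h1
    have h4 : ‖f z‖ ^ p ≤ 4 * ‖f z0‖ ^ p := by
      have : 0 < d ^ 2 := by positivity
      nlinarith
    rw [← hKp, ← Real.mul_rpow hK0.le hA.le] at h4
    exact (Real.rpow_le_rpow_iff (norm_nonneg _) (by positivity) hp).1 h4
  set δ := d / (4 * (K + 1)) with hδ
  have hδ0 : 0 < δ := by positivity
  have hδd : δ ≤ d / 2 := by
    rw [hδ]; gcongr; linarith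
  have hlow : ∀ z ∈ ball z0 δ, ‖f z0‖ / 2 ≤ ‖f z‖ := by
    intro z hz
    have hmaps : MapsTo f (ball z0 (d / 2)) (closedBall (f z0) ((K + 1) * ‖f z0‖)) := by
      intro y hy
      rw [mem_closedBall, dist_eq_norm]
      have := norm_sub_le (f y) (f z0)
      have := hbd y hy
      linarith
    have h1 := Complex.dist_le_div_mul_dist_of_mapsTo_ball (hf.mono hsub) hmaps
      (ball_subset_ball hδd hz)
    have h2 : (K + 1) * ‖f z0‖ / (d / 2) * dist z z0 ≤ (K + 1) * ‖f z0‖ / (d / 2) * δ := by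
      gcongr
      exact (mem_ball.1 hz).le
    have h3 : (K + 1) * ‖f z0‖ / (d / 2) * δ = ‖f z0‖ / 2 := by
      rw [hδ]; field_simp; norm_num
    rw [dist_comm, dist_eq_norm] at h1
    have := norm_sub_norm_le (f z0) (f z)
    linarith
  have hint : ENNReal.ofReal ((‖f z0‖ / 2) ^ p * (δ ^ 2 * Real.pi)) ≤
      ∫⁻ z in ball w ρ, ENNReal.ofReal (‖f z‖ ^ p) := by
    have hsb : ball z0 δ ⊆ ball w ρ := by
      intro z hz
      rw [mem_ball, dist_eq_norm] at *
      have := norm_sub_le_norm_sub_add_norm_sub z z0 w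
      linarith
    calc ENNReal.ofReal ((‖f z0‖ / 2) ^ p * (δ ^ 2 * Real.pi))
        = ∫⁻ z in ball z0 δ, ENNReal.ofReal ((‖f z0‖ / 2) ^ p) := by
          rw [setLIntegral_const, Complex.volume_ball, ENNReal.ofReal_mul (by positivity),
            ENNReal.ofReal_mul (by positivity), ENNReal.ofReal_pow hδ0.le]
          congr 2
          rw [← NNReal.coe_real_pi, ENNReal.ofReal_coe_nnreal]
      _ ≤ ∫⁻ z in ball z0 δ, ENNReal.ofReal (‖f z‖ ^ p) := by
          apply setLIntegral_mono' measurableSet_ball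
          intro z hz
          apply ENNReal.ofReal_le_ofReal
          have := hlow z hz
          gcongr
      _ ≤ _ := lintegral_mono_set hsb
  calc ENNReal.ofReal (‖f w‖ ^ p * ρ ^ 2) ≤ ENNReal.ofReal (‖f z0‖ ^ p * d ^ 2) :=
        ENNReal.ofReal_le_ofReal hw
    _ = ENNReal.ofReal (2 ^ p * (16 * (K + 1) ^ 2) / Real.pi) *
        ENNReal.ofReal ((‖f z0‖ / 2) ^ p * (δ ^ 2 * Real.pi)) := by
        rw [← ENNReal.ofReal_mul (by positivity)]
        congr 1
        rw [Real.div_rpow hA.le (by norm_num), hδ]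
        field_simp
        norm_num
    _ ≤ _ := by gcongr

/-- Weighted version of `submean`. -/
lemma submean_weighted (p α : ℝ) (hp : 0 < p) : ∃ C > 0, ∀ (f : ℂ → ℂ) (w : ℂ) (s : ℝ),
    0 < s → ‖w‖ = 1 - s → DifferentiableOn ℂ f (ball (0 : ℂ) 1) →
    ENNReal.ofReal (‖f w‖ ^ p * s ^ (α + 2)) ≤
      ENNReal.ofReal C *
        ∫⁻ z in ball w (s / 4), ENNReal.ofReal ((1 - ‖z‖ ^ 2) ^ α * ‖f z‖ ^ p) := by
  obtain ⟨C, hC, H⟩ := submean p hp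
  set c : ℝ := min ((3 / 4) ^ α) ((5 / 2) ^ α) with hc
  have hc0 : 0 < c := by
    rw [hc]; apply lt_min <;> positivity
  refine ⟨16 * C / c, by positivity, ?_⟩
  intro f w s hs hw hf
  have hnear : ∀ z, ‖z - w‖ ≤ s / 4 → 1 - ‖z‖ ≥ 3 / 4 * s ∧ 1 - ‖z‖ ≤ 5 / 4 * s := by
    intro z hz
    have h1 := norm_sub_norm_le z w
    have h2 := norm_sub_norm_le w z
    rw [norm_sub_rev] at h2
    constructor <;> linarith
  have hsub : closedBall w (s / 4) ⊆ ball (0 : ℂ) 1 := by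
    intro z hz
    rw [mem_closedBall, dist_eq_norm] at hz
    rw [mem_ball_zero_iff]
    have := (hnear z hz).1
    linarith
  have h := H f w (s / 4) (by positivity) (hf.mono hsub)
  have hwt : ∀ z ∈ ball w (s / 4), c * s ^ α ≤ (1 - ‖z‖ ^ 2) ^ α := by
    intro z hz
    rw [mem_ball, dist_eq_norm] at hz
    obtain ⟨h1, h2⟩ := hnear z hz.le
    have h0 := norm_nonneg z
    have h3 : 3 / 4 * s ≤ 1 - ‖z‖ ^ 2 := by nlinarith
    have h4 : 1 - ‖z‖ ^ 2 ≤ 5 / 2 * s := by nlinarith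
    rcases le_total 0 α with ha | ha
    · calc c * s ^ α ≤ (3 / 4) ^ α * s ^ α := by gcongr; exact min_le_left _ _
        _ = (3 / 4 * s) ^ α := by rw [Real.mul_rpow (by norm_num) hs.le]
        _ ≤ _ := by gcongr
    · calc c * s ^ α ≤ (5 / 2) ^ α * s ^ α := by gcongr; exact min_le_right _ _
        _ = (5 / 2 * s) ^ α := by rw [Real.mul_rpow (by norm_num) hs.le]
        _ ≤ _ := Real.rpow_le_rpow_of_nonpos (by nlinarith) h4 ha
  calc ENNReal.ofReal (‖f w‖ ^ p * s ^ (α + 2))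
      = ENNReal.ofReal (16 * s ^ α) * ENNReal.ofReal (‖f w‖ ^ p * (s / 4) ^ 2) := by
        rw [← ENNReal.ofReal_mul (by positivity)]
        congr 1
        rw [Real.rpow_add hs, Real.rpow_two]; ring
    _ ≤ ENNReal.ofReal (16 * s ^ α) * (ENNReal.ofReal C *
          ∫⁻ z in ball w (s / 4), ENNReal.ofReal (‖f z‖ ^ p)) := by gcongr
    _ = ENNReal.ofReal (16 * C / c) *
          (ENNReal.ofReal (c * s ^ α) * ∫⁻ z in ball w (s / 4), ENNReal.ofReal (‖f z‖ ^ p)) := by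
        rw [← mul_assoc, ← mul_assoc, ← ENNReal.ofReal_mul (by positivity),
          ← ENNReal.ofReal_mul (by positivity)]
        congr 2
        field_simp
    _ ≤ _ := by
        gcongr
        rw [← lintegral_const_mul' _ _ ENNReal.ofReal_ne_top]
        apply setLIntegral_mono' measurableSet_ball
        intro z hz
        rw [← ENNReal.ofReal_mul (by positivity)]
        apply ENNReal.ofReal_le_ofReal
        have := hwt z hz
        gcongr

/-- If `μ` is a Carleson measure on `[0,1)`, `0 < p < ∞` and `α > -1`,
then there is `C = C(p, α, μ) > 0` such that for every `f ∈ A^p_α`,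
`∫_{[0,1)} M_∞(r,f)^p (1-r)^{α+1} dμ(r) ≤ C ‖f‖_{A^p_α}^p`. -/
theorem Minfty_integral_Apa (μ : Measure ℝ) [IsFiniteMeasure μ]
    (hsupp : μ (Ico (0 : ℝ) 1)ᶜ = 0)
    (hμ : ∃ C > 0, ∀ t ∈ Ico (0 : ℝ) 1, (μ (Ico t 1)).toReal ≤ C * (1 - t))
    (p α : ℝ) (hp : 0 < p) (hα : -1 < α) :
    ∃ C > 0, ∀ f : ℂ → ℂ, DifferentiableOn ℂ f (ball (0 : ℂ) 1) → bergmanNorm p α f < ⊤ →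
      (∫⁻ r in Ico (0 : ℝ) 1, ENNReal.ofReal (Minf f r ^ p * (1 - r) ^ (α + 1)) ∂μ)
        ≤ ENNReal.ofReal C * bergmanNorm p α f ^ p := by
  
  obtain ⟨C₀, hC₀, hcar⟩ := hμ
  obtain ⟨C, hC, H⟩ := submean_weighted p α hp
  refine ⟨C₀ * 2 ^ (α + 2) * C * Real.pi / (α + 1), ?_, ?_⟩
  · have : 0 < α + 1 := by linarith
    positivity
  intro f hf _
  have ha1 : 0 < α + 1 := by linarith
  set W : ℂ → ℝ≥0∞ := fun z => ENNReal.ofReal ((1 - ‖z‖ ^ 2) ^ α * ‖f z‖ ^ p) with hW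
  set s : ℕ → ℝ := fun k => (1 / 2) ^ (k + 1) with hs
  have hs0 : ∀ k, 0 < s k := fun k => by simp only [hs]; positivity
  have hs1 : ∀ k, s k ≤ 1 / 2 := fun k => by
    simp only [hs, pow_succ]
    have : (1 / 2 : ℝ) ^ k ≤ 1 := pow_le_one₀ (by norm_num) (by norm_num)
    linarith
  have hsub : ∀ k, closedBall (0 : ℂ) (1 - s k) ⊆ ball 0 1 := fun k =>
    closedBall_subset_ball (by linarith [hs0 k])
  -- the maximum points
  have hmax : ∀ k, ∃ w : ℂ, ‖w‖ = 1 - s k ∧ ∀ z, ‖z‖ ≤ 1 - s k → ‖f z‖ ≤ ‖f w‖ := by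
    intro k
    have hr : 0 < 1 - s k := by linarith [hs1 k]
    have hcl := closure_ball (0 : ℂ) hr.ne'
    obtain ⟨w, hw, hm⟩ := Complex.exists_mem_frontier_isMaxOn_norm (f := f)
      (U := ball (0 : ℂ) (1 - s k)) isBounded_ball ⟨0, mem_ball_self hr⟩
      (DifferentiableOn.diffContOnCl (by rw [hcl]; exact hf.mono (hsub k)))
    rw [frontier_ball _ hr.ne', mem_sphere_zero_iff_norm] at hw
    refine ⟨w, hw, fun z hz => ?_⟩
    rw [hcl] at hm
    exact hm (mem_closedBall_zero_iff.2 hz)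
  choose w hw hwmax using hmax
  have hcover : Ico (0 : ℝ) 1 ⊆ ⋃ k, Ico (1 - 2 * s k) (1 - s k) := by
    intro r hr
    obtain ⟨n, h1, h2⟩ := exists_nat_pow_near_of_lt_one (x := 1 - r) (y := 1 / 2)
      (by linarith [hr.2]) (by linarith [hr.1]) (by norm_num) (by norm_num)
    refine mem_iUnion.2 ⟨n, ?_, ?_⟩
    · simp only [hs, pow_succ]; linarith
    · simp only [hs]; linarith
  have hpiece : ∀ k, (∫⁻ r in Ico (1 - 2 * s k) (1 - s k),
      ENNReal.ofReal (Minf f r ^ p * (1 - r) ^ (α + 1)) ∂μ) ≤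
      ENNReal.ofReal (C₀ * 2 ^ (α + 2) * C) * ∫⁻ z in ball (w k) (s k / 4), W z := by
    intro k
    have hsk := hs0 k
    have hμk : μ (Ico (1 - 2 * s k) 1) ≤ ENNReal.ofReal (C₀ * (2 * s k)) := by
      have := hcar (1 - 2 * s k) ⟨by linarith [hs1 k], by linarith⟩
      rw [← ENNReal.ofReal_toReal (measure_ne_top μ (Ico (1 - 2 * s k) 1))]
      apply ENNReal.ofReal_le_ofReal
      linarith
    calc _ ≤ ∫⁻ r in Ico (1 - 2 * s k) (1 - s k),
          ENNReal.ofReal (‖f (w k)‖ ^ p * (2 * s k) ^ (α + 1)) ∂μ := by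
          apply setLIntegral_mono' measurableSet_Ico
          intro r hr
          apply ENNReal.ofReal_le_ofReal
          have hM : Minf f r ≤ ‖f (w k)‖ := by
            refine Real.iSup_le (fun z => Real.iSup_le (fun hz => ?_) (norm_nonneg _))
              (norm_nonneg _)
            rw [mem_sphere_zero_iff_norm] at hz
            exact hwmax k z (by rw [hz]; exact hr.2.le)
          have hM0 : 0 ≤ Minf f r :=
            Real.iSup_nonneg fun z => Real.iSup_nonneg fun _ => norm_nonneg _
          have h1 : 0 ≤ 1 - r := by linarith [hr.2]
          have h2 : 1 - r ≤ 2 * s k := by linarith [hr.1]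
          gcongr
      _ = ENNReal.ofReal (‖f (w k)‖ ^ p * (2 * s k) ^ (α + 1)) *
          μ (Ico (1 - 2 * s k) (1 - s k)) := by rw [setLIntegral_const]
      _ ≤ ENNReal.ofReal (‖f (w k)‖ ^ p * (2 * s k) ^ (α + 1)) *
          ENNReal.ofReal (C₀ * (2 * s k)) := by
          gcongr
          refine le_trans (measure_mono ?_) hμk
          exact Ico_subset_Ico_right (by linarith)
      _ = ENNReal.ofReal (C₀ * 2 ^ (α + 2)) *
          ENNReal.ofReal (‖f (w k)‖ ^ p * (s k) ^ (α + 2)) := by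
          rw [← ENNReal.ofReal_mul (by positivity), ← ENNReal.ofReal_mul (by positivity)]
          congr 1
          have e1 : (2 * s k) ^ (α + 2) = (2 * s k) ^ (α + 1) * (2 * s k) := by
            rw [← Real.rpow_add_one (by positivity)]; congr 1; ring
          rw [Real.mul_rpow (by norm_num) hsk.le] at e1
          linear_combination (-(C₀ * ‖f (w k)‖ ^ p)) * e1
      _ ≤ ENNReal.ofReal (C₀ * 2 ^ (α + 2)) *
          (ENNReal.ofReal C * ∫⁻ z in ball (w k) (s k / 4), W z) := by
          gcongr
          exact H f (w k) (s k) hsk (hw k) hf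
      _ = _ := by
          rw [← mul_assoc, ← ENNReal.ofReal_mul (by positivity)]
  have hnear : ∀ k, ∀ z ∈ ball (w k) (s k / 4),
      3 / 4 * s k < 1 - ‖z‖ ∧ 1 - ‖z‖ < 5 / 4 * s k := by
    intro k z hz
    rw [mem_ball, dist_eq_norm] at hz
    have h1 := norm_sub_norm_le z (w k)
    have h2 := norm_sub_norm_le (w k) z
    rw [norm_sub_rev] at h2
    have := hw k
    constructor <;> linarith
  have hlt : ∀ j k, j < k → Disjoint (ball (w j) (s j / 4)) (ball (w k) (s k / 4)) := by
    intro j k hjk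
    rw [Set.disjoint_left]
    intro z hz1 hz2
    have h1 := (hnear j z hz1).1
    have h2 := (hnear k z hz2).2
    have h3 : s k ≤ s j / 2 := by
      have : s k ≤ s (j + 1) :=
        pow_le_pow_of_le_one (by norm_num) (by norm_num) (by omega)
      have e : s (j + 1) = s j / 2 := by simp only [hs, pow_succ]; ring
      linarith
    linarith [hs0 j]
  have hdisj : Pairwise (Function.onFun Disjoint fun k => ball (w k) (s k / 4)) := by
    intro j k hjk
    rcases lt_or_gt_of_ne hjk with h | h
    · exact hlt j k h
    · exact (hlt k j h).symm
  have hnorm : bergmanNorm p α f ^ p =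
      ENNReal.ofReal ((α + 1) / Real.pi) * ∫⁻ z in ball (0 : ℂ) 1, W z := by
    rw [bergmanNorm, ← ENNReal.rpow_mul, one_div_mul_cancel hp.ne', ENNReal.rpow_one, dA,
      Measure.restrict_smul, lintegral_smul_measure, smul_eq_mul, ← mul_assoc,
      ENNReal.ofReal_div_of_pos Real.pi_pos, div_eq_mul_inv]
  calc _ ≤ ∫⁻ r in ⋃ k, Ico (1 - 2 * s k) (1 - s k),
          ENNReal.ofReal (Minf f r ^ p * (1 - r) ^ (α + 1)) ∂μ := lintegral_mono_set hcover
    _ ≤ ∑' k, ∫⁻ r in Ico (1 - 2 * s k) (1 - s k),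
          ENNReal.ofReal (Minf f r ^ p * (1 - r) ^ (α + 1)) ∂μ := lintegral_iUnion_le _ _
    _ ≤ ∑' k, ENNReal.ofReal (C₀ * 2 ^ (α + 2) * C) * ∫⁻ z in ball (w k) (s k / 4), W z :=
        ENNReal.tsum_le_tsum hpiece
    _ = ENNReal.ofReal (C₀ * 2 ^ (α + 2) * C) *
          ∫⁻ z in ⋃ k, ball (w k) (s k / 4), W z := by
        rw [ENNReal.tsum_mul_left, lintegral_iUnion (fun _ => measurableSet_ball) hdisj]
    _ ≤ ENNReal.ofReal (C₀ * 2 ^ (α + 2) * C) * ∫⁻ z in ball (0 : ℂ) 1, W z := by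
        gcongr
        refine iUnion_subset fun k z hz => ?_
        rw [mem_ball_zero_iff]
        linarith [(hnear k z hz).1, hs0 k]
    _ = _ := by
        rw [hnorm, ← mul_assoc, ← ENNReal.ofReal_mul (by positivity)]
        congr 2
        field_simp
end

section
/- Suppose k > 0, q > 1, and h is a non-negative measurable function on (0,1). Then ∫_0^1 ( ∫_{1−r}^1 h(t) dt )^q (1−r)^{k−1} dr ≤ (q/k)^q ∫_0^1 h(1−r)^q (1−r)^{q+k−1} dr. -/
open MeasureTheory Set Metric Filter Asymptotics
open scoped ENNReal

open MeasureTheory Set in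
lemma hti_reflect (G : ℝ → ENNReal) :
    ∫⁻ r in Ioo (0 : ℝ) 1, G (1 - r) = ∫⁻ s in Ioo (0 : ℝ) 1, G s := by
  rw [← lintegral_indicator measurableSet_Ioo, ← lintegral_indicator measurableSet_Ioo,
    ← lintegral_sub_left_eq_self _ (1 : ℝ)]
  congr 1
  ext r
  by_cases hr : r ∈ Ioo (0 : ℝ) 1
  · have : 1 - r ∈ Ioo (0 : ℝ) 1 := ⟨by linarith [hr.2], by linarith [hr.1]⟩
    simp [indicator_of_mem, hr, this]
  · have : 1 - r ∉ Ioo (0 : ℝ) 1 := fun h => hr ⟨by linarith [h.2], by linarith [h.1]⟩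
    simp only [indicator_of_notMem hr, indicator_of_notMem this]

open MeasureTheory Set in
lemma hti_swap (F W : ℝ → ENNReal) (hF : Measurable F) (hW : Measurable W) :
    ∫⁻ s in Ioo (0 : ℝ) 1, (∫⁻ t in Ioo s 1, F t) * W s
      = ∫⁻ t in Ioo (0 : ℝ) 1, F t * ∫⁻ s in Ioo 0 t, W s := by
  let S : Set (ℝ × ℝ) := {p | 0 < p.1 ∧ p.1 < p.2 ∧ p.2 < 1}
  have hS : MeasurableSet S := by
    refine (measurableSet_lt measurable_const measurable_fst).inter
      ((measurableSet_lt measurable_fst measurable_snd).inter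
        (measurableSet_lt measurable_snd measurable_const))
  let K : ℝ → ℝ → ENNReal := fun s t => S.indicator (fun p => F p.2 * W p.1) (s, t)
  have hK : Measurable (Function.uncurry K) := by
    have : Measurable (S.indicator (fun p : ℝ × ℝ => F p.2 * W p.1)) :=
      ((hF.comp measurable_snd).mul (hW.comp measurable_fst)).indicator hS
    exact this
  have h1 : ∫⁻ s in Ioo (0 : ℝ) 1, (∫⁻ t in Ioo s 1, F t) * W s = ∫⁻ s, ∫⁻ t, K s t := by
    rw [← lintegral_indicator measurableSet_Ioo]
    congr 1
    ext s
    by_cases hs : s ∈ Ioo (0 : ℝ) 1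
    · rw [indicator_of_mem hs, ← lintegral_mul_const _ hF,
        ← lintegral_indicator measurableSet_Ioo]
      congr 1
      ext t
      by_cases ht : t ∈ Ioo s 1
      · have : (s, t) ∈ S := ⟨hs.1, ht.1, ht.2⟩
        simp only [K, indicator_of_mem ht, indicator_of_mem this]
      · have : (s, t) ∉ S := fun h => ht ⟨h.2.1, h.2.2⟩
        simp only [K, indicator_of_notMem ht, indicator_of_notMem this]
    · rw [indicator_of_notMem hs]
      have : ∀ t, K s t = 0 := fun t => by
        have : (s, t) ∉ S := fun h => hs ⟨h.1, h.2.1.trans h.2.2⟩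
        simp only [K, indicator_of_notMem this]
      simp [this]
  have h2 : ∫⁻ t in Ioo (0 : ℝ) 1, F t * ∫⁻ s in Ioo 0 t, W s = ∫⁻ t, ∫⁻ s, K s t := by
    rw [← lintegral_indicator measurableSet_Ioo]
    congr 1
    ext t
    by_cases ht : t ∈ Ioo (0 : ℝ) 1
    · rw [indicator_of_mem ht, ← lintegral_const_mul _ hW,
        ← lintegral_indicator measurableSet_Ioo]
      congr 1
      ext s
      by_cases hs : s ∈ Ioo 0 t
      · have : (s, t) ∈ S := ⟨hs.1, hs.2, ht.2⟩
        simp only [K, indicator_of_mem hs, indicator_of_mem this]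
      · have : (s, t) ∉ S := fun h => hs ⟨h.1, h.2.1⟩
        simp only [K, indicator_of_notMem hs, indicator_of_notMem this]
    · rw [indicator_of_notMem ht]
      have : ∀ s, K s t = 0 := fun s => by
        have : (s, t) ∉ S := fun h => ht ⟨h.1.trans h.2.1, h.2.2⟩
        simp only [K, indicator_of_notMem this]
      simp [this]
  rw [h1, h2]
  exact lintegral_lintegral_swap hK.aemeasurable

open MeasureTheory Set in
lemma hti_tail (c s : ℝ) (hc : 0 < c) (hs : 0 < s) :
    ∫⁻ t in Ioo s 1, ENNReal.ofReal (t ^ (-(1 + c))) ≤ ENNReal.ofReal (s ^ (-c) / c) := by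
  have hlt : -(1 + c) < -1 := by linarith
  calc _ ≤ ∫⁻ t in Ioi s, ENNReal.ofReal (t ^ (-(1 + c))) :=
        lintegral_mono_set Ioo_subset_Ioi_self
    _ = ENNReal.ofReal (∫ t in Ioi s, t ^ (-(1 + c))) := by
        rw [ofReal_integral_eq_lintegral_ofReal (integrableOn_Ioi_rpow_of_lt hlt hs)]
        filter_upwards [ae_restrict_mem measurableSet_Ioi] with t ht
        exact Real.rpow_nonneg (hs.trans ht).le _
    _ = _ := by
        rw [integral_Ioi_rpow_of_lt hlt hs]
        congr 1
        rw [show -(1 + c) + 1 = -c by ring, neg_div_neg_eq]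

open MeasureTheory Set in
lemma hti_head (c t : ℝ) (hc : 0 < c) (ht : 0 < t) :
    ∫⁻ s in Ioo 0 t, ENNReal.ofReal (s ^ (c - 1)) = ENNReal.ofReal (t ^ c / c) := by
  have hi : IntervalIntegrable (fun s : ℝ => s ^ (c - 1)) volume 0 t :=
    intervalIntegral.intervalIntegrable_rpow' (by linarith)
  rw [intervalIntegrable_iff_integrableOn_Ioc_of_le ht.le] at hi
  rw [restrict_Ioo_eq_restrict_Ioc, ← ofReal_integral_eq_lintegral_ofReal hi,
    ← intervalIntegral.integral_of_le ht.le, integral_rpow (Or.inl (by linarith))]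
  · simp [Real.zero_rpow hc.ne']
  · filter_upwards [ae_restrict_mem measurableSet_Ioc] with s hs
    exact Real.rpow_nonneg hs.1.le _

open MeasureTheory Set in
lemma hti_holder (c q s : ℝ) (hc : 0 < c) (hq : 1 < q) (hs : 0 < s)
    (H : ℝ → ENNReal) (hH : Measurable H) :
    (∫⁻ t in Ioo s 1, H t) ^ q ≤
      (∫⁻ t in Ioo s 1, H t ^ q * ENNReal.ofReal (t ^ ((q - 1) * (1 + c)))) *
        ENNReal.ofReal ((s ^ (-c) / c) ^ (q - 1)) := by
  have hq0 : 0 < q := by linarith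
  have hq1 : 0 < q - 1 := by linarith
  have hpq : q.HolderConjugate (q / (q - 1)) := Real.HolderConjugate.conjExponent hq
  set a := (q - 1) * (1 + c) / q with ha
  have e1 : ∫⁻ t in Ioo s 1, H t =
      ∫⁻ t in Ioo s 1, ((fun t => H t * ENNReal.ofReal (t ^ a)) *
        (fun t => ENNReal.ofReal (t ^ (-a)))) t := by
    refine setLIntegral_congr_fun measurableSet_Ioo fun t ht => ?_
    have ht0 : 0 < t := hs.trans ht.1
    simp only [Pi.mul_apply]
    rw [mul_assoc, ← ENNReal.ofReal_mul (Real.rpow_nonneg ht0.le _), ← Real.rpow_add ht0]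
    simp
  have hA := ENNReal.lintegral_mul_le_Lp_mul_Lq (volume.restrict (Ioo s 1)) hpq
    (f := fun t => H t * ENNReal.ofReal (t ^ a)) (g := fun t => ENNReal.ofReal (t ^ (-a)))
    (by fun_prop) (by fun_prop)
  rw [← e1] at hA
  refine (ENNReal.rpow_le_rpow hA hq0.le).trans ?_
  rw [ENNReal.mul_rpow_of_nonneg _ _ hq0.le, ← ENNReal.rpow_mul, ← ENNReal.rpow_mul,
    one_div_mul_cancel hq0.ne', ENNReal.rpow_one,
    show 1 / (q / (q - 1)) * q = q - 1 by field_simp]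
  refine mul_le_mul' (le_of_eq ?_) ?_
  · refine setLIntegral_congr_fun measurableSet_Ioo fun t ht => ?_
    have ht0 : 0 < t := hs.trans ht.1
    rw [ENNReal.mul_rpow_of_nonneg _ _ hq0.le,
      ENNReal.ofReal_rpow_of_nonneg (Real.rpow_nonneg ht0.le _) hq0.le, ← Real.rpow_mul ht0.le,
      show a * q = (q - 1) * (1 + c) by rw [ha]; field_simp]
  · have hsc : 0 ≤ s ^ (-c) / c := by positivity
    rw [← ENNReal.ofReal_rpow_of_nonneg hsc hq1.le]
    refine ENNReal.rpow_le_rpow (le_trans (le_of_eq ?_) (hti_tail c s hc hs)) hq1.le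
    refine setLIntegral_congr_fun measurableSet_Ioo fun t ht => ?_
    have ht0 : 0 < t := hs.trans ht.1
    rw [ENNReal.ofReal_rpow_of_nonneg (Real.rpow_nonneg ht0.le _) (by positivity),
      ← Real.rpow_mul ht0.le,
      show -a * (q / (q - 1)) = -(1 + c) by rw [ha]; field_simp]

open MeasureTheory Set in
lemma hti_main (k q : ℝ) (hk : 0 < k) (hq : 1 < q)
    (H : ℝ → ENNReal) (hH : Measurable H) :
    ∫⁻ s in Ioo (0 : ℝ) 1, (∫⁻ t in Ioo s 1, H t) ^ q * ENNReal.ofReal (s ^ (k - 1))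
      ≤ ENNReal.ofReal ((q / k) ^ q) *
        ∫⁻ s in Ioo (0 : ℝ) 1, H s ^ q * ENNReal.ofReal (s ^ (q + k - 1)) := by
  have hq0 : 0 < q := by linarith
  obtain ⟨c, hc⟩ : ∃ c, c = k / q := ⟨_, rfl⟩
  have hc0 : 0 < c := by rw [hc]; positivity
  have hkc : k = c * q := by rw [hc]; field_simp
  have hinv : q / k = c⁻¹ := by rw [hc, inv_div]
  set F : ℝ → ENNReal := fun t => H t ^ q * ENNReal.ofReal (t ^ ((q - 1) * (1 + c)))
  have hF : Measurable F := by fun_prop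
  set C := ENNReal.ofReal ((c⁻¹) ^ (q - 1))
  calc _ ≤ ∫⁻ s in Ioo (0 : ℝ) 1, (∫⁻ t in Ioo s 1, F t) *
          (C * ENNReal.ofReal (s ^ (c - 1))) := by
        refine setLIntegral_mono' measurableSet_Ioo fun s hs => ?_
        refine (mul_le_mul_left (hti_holder c q s hc0 hq hs.1 H hH) _).trans (le_of_eq ?_)
        have hs0 := hs.1
        rw [mul_assoc, ← ENNReal.ofReal_mul (by positivity), ← ENNReal.ofReal_mul (by positivity)]
        congr 2
        rw [div_eq_mul_inv, Real.mul_rpow (by positivity) (by positivity), ← Real.rpow_mul hs0.le,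
          mul_comm (s ^ _), mul_assoc, ← Real.rpow_add hs0]
        congr 2
        rw [hkc]; ring
    _ = ∫⁻ t in Ioo (0 : ℝ) 1, F t * ∫⁻ s in Ioo 0 t, C * ENNReal.ofReal (s ^ (c - 1)) :=
        hti_swap _ _ hF (by fun_prop)
    _ = ∫⁻ t in Ioo (0 : ℝ) 1, ENNReal.ofReal ((q / k) ^ q) *
          (H t ^ q * ENNReal.ofReal (t ^ (q + k - 1))) := by
        refine setLIntegral_congr_fun measurableSet_Ioo fun t ht => ?_
        have ht0 := ht.1
        simp only [F, C]
        rw [lintegral_const_mul _ (by fun_prop), hti_head c t hc0 ht.1, mul_assoc,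
          mul_left_comm (ENNReal.ofReal ((q / k) ^ q)), ← ENNReal.ofReal_mul (by positivity),
          ← ENNReal.ofReal_mul (by positivity), ← ENNReal.ofReal_mul (by positivity)]
        congr 2
        rw [hinv, show q + k - 1 = (q - 1) * (1 + c) + c by rw [hkc]; ring, Real.rpow_add ht0,
          show (c⁻¹) ^ q = (c⁻¹) ^ (q - 1) * c⁻¹ by
            rw [← Real.rpow_add_one (by positivity)]; congr 1; ring]
        ring
    _ = _ := lintegral_const_mul _ (by fun_prop)

/-- (Hardy-type inequality.) If `k > 0`, `q > 1` and `h ≥ 0` is measurable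
on `(0,1)`, then
`∫_0^1 (∫_{1-r}^1 h(t) dt)^q (1-r)^{k-1} dr ≤ (q/k)^q ∫_0^1 h(1-r)^q (1-r)^{q+k-1} dr`. -/
theorem hardy_type_inequality (k q : ℝ) (hk : 0 < k) (hq : 1 < q)
    (h : ℝ → ℝ) (hmeas : Measurable h) (hnonneg : ∀ t ∈ Ioo (0 : ℝ) 1, 0 ≤ h t) :
    (∫⁻ r in Ioo (0 : ℝ) 1,
        (∫⁻ t in Ioo (1 - r) 1, ENNReal.ofReal (h t)) ^ q * ENNReal.ofReal ((1 - r) ^ (k - 1)))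
      ≤ ENNReal.ofReal ((q / k) ^ q) *
        ∫⁻ r in Ioo (0 : ℝ) 1,
          ENNReal.ofReal (h (1 - r)) ^ q * ENNReal.ofReal ((1 - r) ^ (q + k - 1)) := by
  have h1 := hti_reflect (fun s => (∫⁻ t in Ioo s 1, ENNReal.ofReal (h t)) ^ q *
    ENNReal.ofReal (s ^ (k - 1)))
  have h2 := hti_reflect (fun s => ENNReal.ofReal (h s) ^ q * ENNReal.ofReal (s ^ (q + k - 1)))
  rw [h1, h2]
  exact hti_main k q hk hq _ hmeas.ennreal_ofReal
end
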